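/- Let Γ' be a finitely generated group admitting an injective group homomorphism into PSL₂(ℝ) with discrete image (i.e., Γ' is isomorphic to a finitely generated discrete subgroup of PSL₂(ℝ)). Suppose there is a short exact sequence 1 → F → Γ → Γ' → 1 of groups with F finite, i.e., a surjective homomorphism Γ → Γ' whose kernel is finite. Then Γ contains a finite-index subgroup isomorphic to a free group or to a surface group. -/

import Mathlib

open scoped MatrixGroups

noncomputable instance : TopologicalSpace (Matrix.SpecialLinearGroup (Fin 2) ℝ) :=
  inferInstanceAs (TopologicalSpace {A : Matrix (Fin 2) (Fin 2) ℝ // A.det = 1})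

noncomputable instance : TopologicalSpace PSL(2, ℝ) :=
  inferInstanceAs (TopologicalSpace (Quotient _))

/-- The surface group relator `[a₁,b₁]⋯[a_g,b_g]`. -/
def surfaceRelator (g : ℕ) : FreeGroup (Fin g × Fin 2) :=
  (List.ofFn fun i : Fin g =>
    FreeGroup.of (i, 0) * FreeGroup.of (i, 1) *
      (FreeGroup.of (i, 0))⁻¹ * (FreeGroup.of (i, 1))⁻¹).prod

/-- The fundamental group of the closed orientable surface of genus `g`. -/
abbrev SurfaceGroup (g : ℕ) : Type :=
  PresentedGroup ({surfaceRelator g} : Set (FreeGroup (Fin g × Fin 2)))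

def IsSurfaceGroup (G : Type*) [Group G] : Prop :=
  ∃ g : ℕ, 2 ≤ g ∧ Nonempty (G ≃* SurfaceGroup g)

def IsFreeGroupOn (G : Type*) [Group G] : Prop :=
  ∃ S : Type, Nonempty (G ≃* FreeGroup S)

/-!
By Selberg's lemma some finite-index subgroup of `Γ'` is torsion-free, hence acts freely and
properly discontinuously on the hyperbolic plane, here the hyperboloid in the Minkowski space of
symmetric `2 × 2` matrices. The elements carrying the Voronoi cell of an orbit point to an adjacent
cell generate the group, with one relator for each orbit of vertices: since the plane is simply
connected, a labelling of these side pairings whose product around every vertex is trivial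
integrates to a homomorphism.

If the sides and vertices do not close up to the compact boundary of a single cell, the relators
can be eliminated one at a time against a generator, and the group is free. Otherwise the relators
are the faces of a one-vertex cell structure on a closed surface, and cutting and pasting
brings them to the form `∏ [aᵢ, bᵢ]`. The group is then cocompact, which excludes genus one: an
element commuting with a cocompact group moves all points by a bounded amount and so is trivial.

For a finite extension, pass to a finite-index subgroup in which the kernel is central. Over a free
group the extension splits. Over a surface group the relator lifts to a central element of finite
order `n`, and a Heisenberg group modulo `n` provides a finite quotient of the free group in which
the relator also has order `n`, so the two obstructions cancel on a subgroup of finite index.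
-/

/-! ### Minkowski space -/

namespace Minkowski

/-- Minkowski space `ℝ^{2,1}`, realised as the space of symmetric real matrices
`[[X 0, X 1], [X 1, X 2]]`, on which `SL(2, ℝ)` acts by `X ↦ A X Aᵀ`. -/
abbrev Space := Fin 3 → ℝ

/-- The Lorentzian form on `Space`, normalised so that `form X X` is the determinant of the
symmetric matrix `X`. -/
noncomputable def form : LinearMap.BilinForm ℝ Space :=
  LinearMap.mk₂ ℝ (fun X Y => (X 0 * Y 2 + X 2 * Y 0) / 2 - X 1 * Y 1)
    (fun X X' Y => by simp only [Pi.add_apply]; ring)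
    (fun c X Y => by simp only [Pi.smul_apply, smul_eq_mul]; ring)
    (fun X Y Y' => by simp only [Pi.add_apply]; ring)
    (fun c X Y => by simp only [Pi.smul_apply, smul_eq_mul]; ring)

/-- The open future cone, consisting of the positive definite symmetric matrices. Its rays are the
points of the hyperbolic plane. -/
def cone : Set Space := {X | 0 < X 0 ∧ 0 < form X X}

/-- The base point of the hyperbolic plane, namely the identity matrix. -/
def origin : Space := ![1, 0, 1]

/-- The volume form of `Space`; its sign orients triples of vectors. -/
def vol (a b c : Space) : ℝ := a ⬝ᵥ crossProduct b c

/-- The Lorentzian cross product, which represents the linear form `vol a b` through `form`. -/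
def cross (a b : Space) : Space :=
  ![2 * (a 0 * b 1 - a 1 * b 0), a 0 * b 2 - a 2 * b 0, 2 * (a 1 * b 2 - a 2 * b 1)]

lemma form_apply (X Y : Space) : form X Y = (X 0 * Y 2 + X 2 * Y 0) / 2 - X 1 * Y 1 := rfl

lemma form_comm (X Y : Space) : form X Y = form Y X := by simp only [form_apply]; ring

lemma form_sub_self (X Y : Space) :
    form (X - Y) (X - Y) = form X X + form Y Y - 2 * form X Y := by
  simp only [map_sub, LinearMap.sub_apply, form_comm Y X]; ring

lemma form_origin (X : Space) : form origin X = (X 0 + X 2) / 2 := by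
  simp [form_apply, origin, add_comm]

lemma vol_apply (a b c : Space) :
    vol a b c = a 0 * (b 1 * c 2 - b 2 * c 1) - a 1 * (b 0 * c 2 - b 2 * c 0)
      + a 2 * (b 0 * c 1 - b 1 * c 0) := by
  simp [vol, cross_apply, dotProduct, Fin.sum_univ_three]; ring

lemma vol_swap_right (a b c : Space) : vol a c b = -vol a b c := by simp only [vol_apply]; ring

lemma vol_swap_left (a b c : Space) : vol b a c = -vol a b c := by simp only [vol_apply]; ring

lemma vol_swap_outer (a b c : Space) : vol c b a = -vol a b c := by simp only [vol_apply]; ring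

lemma vol_rotate (a b c : Space) : vol c a b = vol a b c := by simp only [vol_apply]; ring

lemma vol_self_right (a b : Space) : vol a b b = 0 := by simp only [vol_apply]; ring

lemma vol_sub_sub (a b c : Space) : vol c (a - c) (b - c) = vol c a b := by
  simp only [vol_apply, Pi.sub_apply]; ring

lemma form_cross (a b c : Space) : form (cross a b) c = vol a b c := by
  simp [form_apply, cross, vol_apply]; ring

lemma form_cross_left (a b : Space) : form (cross a b) a = 0 := by
  simp only [form_cross, vol_apply]; ring

lemma form_cross_right (a b : Space) : form (cross a b) b = 0 := by
  rw [form_cross, vol_self_right]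

lemma cross_swap (a b : Space) : cross b a = -cross a b := by
  ext i; fin_cases i <;> simp [cross] <;> ring

lemma cross_cross (a b y : Space) :
    cross (cross a b) y = (4 * form a y) • b - (4 * form b y) • a := by
  ext i; fin_cases i <;> simp [cross, form_apply] <;> ring

lemma cross_eq_zero_iff {a b : Space} (ha : a ≠ 0) : cross a b = 0 ↔ ∃ t : ℝ, t • a = b := by
  have hcross : cross a b = 0 ↔ crossProduct a b = 0 := by
    simp [cross, cross_apply, sub_eq_zero]
    grind
  rw [hcross, ← not_iff_not, ← ne_eq, crossProduct_ne_zero_iff_linearIndependent,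
    LinearIndependent.pair_iff' ha, not_exists]

lemma form_smul_cross_of_orthogonal {x a b : Space} (ha : form x a = 0) (hb : form x b = 0)
    (w : Space) : form x w • cross a b = vol w a b • x := by
  simp only [form_apply] at ha hb
  ext i
  fin_cases i <;> simp [cross, form_apply, vol_apply]
  · linear_combination (2 * w 0 * b 1 - 2 * w 1 * b 0) * ha - (2 * w 0 * a 1 - 2 * w 1 * a 0) * hb
  · linear_combination (w 0 * b 2 - w 2 * b 0) * ha - (w 0 * a 2 - w 2 * a 0) * hb
  · linear_combination (2 * w 1 * b 2 - 2 * w 2 * b 1) * ha - (2 * w 1 * a 2 - 2 * w 2 * a 1) * hb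

lemma continuous_form_left (Y : Space) : Continuous fun X => form X Y := by
  simp only [form_apply]; fun_prop

lemma isOpen_cone : IsOpen cone := by
  have hform : Continuous fun X : Space => form X X := by simp only [form_apply]; fun_prop
  exact (isOpen_lt continuous_const (continuous_apply 0)).inter (isOpen_lt continuous_const hform)

lemma origin_mem_cone : origin ∈ cone := by simp [cone, origin, form_apply]

lemma form_origin_self : form origin origin = 1 := by rw [form_origin]; simp [origin]

lemma ne_zero_of_mem_cone {X : Space} (hX : X ∈ cone) : X ≠ 0 := by
  rintro rfl
  exact lt_irrefl _ hX.1

lemma last_pos_of_mem_cone {X : Space} (hX : X ∈ cone) : 0 < X 2 := by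
  obtain ⟨h0, hform⟩ := hX
  rw [form_apply] at hform
  by_contra! h2
  nlinarith [sq_nonneg (X 1)]

lemma form_pos {X Y : Space} (hX : X ∈ cone) (hY : Y ∈ cone) : 0 < form X Y := by
  have hX2 := last_pos_of_mem_cone hX
  have hY2 := last_pos_of_mem_cone hY
  obtain ⟨hX0, hXX⟩ := hX
  obtain ⟨hY0, hYY⟩ := hY
  rw [form_apply] at *
  have hmul : X 1 ^ 2 * Y 1 ^ 2 < X 0 * X 2 * (Y 0 * Y 2) :=
    mul_lt_mul'' (by linarith) (by linarith) (sq_nonneg _) (sq_nonneg _)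
  have hsq : (2 * X 1 * Y 1) ^ 2 < (X 0 * Y 2 + X 2 * Y 0) ^ 2 := by
    nlinarith [sq_nonneg (X 0 * Y 2 - X 2 * Y 0)]
  have := (abs_lt.mp (abs_lt_of_sq_lt_sq hsq (by positivity))).2
  linarith

lemma smul_mem_cone {X : Space} (hX : X ∈ cone) {c : ℝ} (hc : 0 < c) : c • X ∈ cone := by
  refine ⟨mul_pos hc hX.1, ?_⟩
  simp only [map_smul, LinearMap.smul_apply, smul_eq_mul]
  exact mul_pos hc (mul_pos hc hX.2)

lemma add_mem_cone {X Y : Space} (hX : X ∈ cone) (hY : Y ∈ cone) : X + Y ∈ cone := by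
  refine ⟨add_pos hX.1 hY.1, ?_⟩
  simp only [map_add, LinearMap.add_apply, form_comm Y X]
  linarith [form_pos hX hY, hX.2, hY.2]

lemma form_self_neg_of_orthogonal {x a : Space} (hx : x ∈ cone) (h : form x a = 0) (ha : a ≠ 0) :
    form a a < 0 := by
  obtain ⟨hx0, hxx⟩ := hx
  have key : x 0 ^ 2 * form a a = -((x 0 * a 1 - x 1 * a 0) ^ 2 + form x x * a 0 ^ 2) := by
    rw [form_apply] at h ⊢
    rw [form_apply]
    linear_combination 2 * x 0 * a 0 * h
  by_contra! hq
  have hsum : (x 0 * a 1 - x 1 * a 0) ^ 2 + form x x * a 0 ^ 2 ≤ 0 := by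
    nlinarith [mul_nonneg (sq_nonneg (x 0)) hq]
  have hnonneg : 0 ≤ form x x * a 0 ^ 2 := by positivity
  have ha0 : a 0 = 0 := by
    have : form x x * a 0 ^ 2 = 0 := by linarith [sq_nonneg (x 0 * a 1 - x 1 * a 0)]
    simpa [hxx.ne'] using this
  have ha1 : a 1 = 0 := by
    have : (x 0 * a 1 - x 1 * a 0) ^ 2 = 0 := by linarith [sq_nonneg (x 0 * a 1 - x 1 * a 0)]
    simpa [ha0, hx0.ne'] using this
  have ha2 : a 2 = 0 := by simpa [form_apply, ha0, ha1, hx0.ne'] using h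
  exact ha (by ext i; fin_cases i <;> assumption)

/-- Reversed Cauchy–Schwarz inequality on the hyperboloid. -/
lemma one_lt_form {X Y : Space} (hX : X ∈ cone) (hY : Y ∈ cone) (hXX : form X X = 1)
    (hYY : form Y Y = 1) (hne : X ≠ Y) : 1 < form X Y := by
  have hpos := form_pos hX hY
  have horth : form X (Y - form X Y • X) = 0 := by
    simp only [map_sub, map_smul, hXX, smul_eq_mul]; ring
  have hself : form (Y - form X Y • X) (Y - form X Y • X) = 1 - form X Y ^ 2 := by
    simp only [form_sub_self, map_smul, LinearMap.smul_apply, hXX, hYY, form_comm Y X, smul_eq_mul]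
    ring
  by_cases hzero : Y - form X Y • X = 0
  · rw [hzero, map_zero] at hself
    have hone : form X Y = 1 := by nlinarith
    rw [hone, one_smul, sub_eq_zero] at hzero
    exact absurd hzero.symm hne
  · nlinarith [form_self_neg_of_orthogonal hX horth hzero]

lemma eq_of_parallel {X Y : Space} (hX : X ∈ cone) (hY : Y ∈ cone) (hXX : form X X = 1)
    (hYY : form Y Y = 1) {t : ℝ} (h : t • X = Y) : X = Y := by
  subst h
  have ht : 0 < t := pos_of_mul_pos_left hY.1 hX.1.le
  simp only [map_smul, LinearMap.smul_apply, hXX, smul_eq_mul, mul_one] at hYY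
  rw [show t = 1 by nlinarith, one_smul]

lemma cross_ne_zero {X Y : Space} (hX : X ∈ cone) (hY : Y ∈ cone) (hXX : form X X = 1)
    (hYY : form Y Y = 1) (hne : X ≠ Y) : cross X Y ≠ 0 := fun h =>
  let ⟨_, ht⟩ := (cross_eq_zero_iff (ne_zero_of_mem_cone hX)).mp h
  hne (eq_of_parallel hX hY hXX hYY ht)

/-- A line meets the hyperboloid in at most two points. -/
lemma vol_ne_zero {x a b c : Space} (hx : x ∈ cone) (hc : c ∈ cone) (haa : form a a = 1)
    (hbb : form b b = 1) (hcc : form c c = 1) (hab : a ≠ b) (hac : a ≠ c) (hbc : b ≠ c)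
    (hxa : form x a = form x c) (hxb : form x b = form x c) : vol c a b ≠ 0 := by
  intro hvol
  have hac0 : a - c ≠ 0 := sub_ne_zero.mpr hac
  have orth_a : form x (a - c) = 0 := by rw [map_sub, hxa, sub_self]
  have orth_b : form x (b - c) = 0 := by rw [map_sub, hxb, sub_self]
  have hcross : cross (a - c) (b - c) = 0 := by
    have h := form_smul_cross_of_orthogonal orth_a orth_b c
    rw [vol_sub_sub, hvol, zero_smul] at h
    exact (smul_eq_zero.mp h).resolve_left (form_pos hx hc).ne'
  obtain ⟨t, ht⟩ := (cross_eq_zero_iff hac0).mp hcross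
  have on_hyperboloid {d : Space} (hdd : form d d = 1) :
      form (d - c) (d - c) + 2 * form c (d - c) = 0 := by
    rw [form_sub_self, map_sub, hdd, hcc, form_comm d c]; ring
  have ha := on_hyperboloid haa
  have hb := on_hyperboloid hbb
  rw [← ht] at hb
  simp only [map_smul, LinearMap.smul_apply, smul_eq_mul] at hb
  have hprod : t * (t - 1) * form (a - c) (a - c) = 0 := by linear_combination hb - t * ha
  rcases mul_eq_zero.mp ((mul_eq_zero.mp hprod).resolve_right
    (form_self_neg_of_orthogonal hx orth_a hac0).ne) with h0 | h1
  · rw [h0, zero_smul] at ht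
    exact hbc (sub_eq_zero.mp ht.symm)
  · rw [sub_eq_zero.mp h1, one_smul] at ht
    exact hab (sub_left_injective ht)

lemma vol_eq_zero_of_orthogonal {x a b c : Space} (hx : x ∈ cone) (ha : form x a = 0)
    (hb : form x b = 0) (hc : form x c = 0) : vol a b c = 0 := by
  have h := congrArg (form · c) (form_smul_cross_of_orthogonal ha hb x)
  simp only [map_smul, LinearMap.smul_apply, form_cross, hc, smul_eq_mul, mul_zero] at h
  exact (mul_eq_zero.mp h).resolve_left hx.2.ne'

/-- The points of the hyperboloid on a circle centred at `x` are cyclically ordered by the sign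
of `vol`; transitivity is a Plücker relation. -/
lemma vol_pos_trans {x g a b c : Space} (hx : x ∈ cone) (hg : g ∈ cone) (ha : a ∈ cone)
    (hb : b ∈ cone) (hc : c ∈ cone) (hgg : form g g = 1) (haa : form a a = 1) (hbb : form b b = 1)
    (hcc : form c c = 1) (hag : a ≠ g) (hbg : b ≠ g) (hcg : c ≠ g) (hxa : form x a = form x g)
    (hxb : form x b = form x g) (hxc : form x c = form x g) (hab : 0 < vol g a b)
    (hbc : 0 < vol g b c) : 0 < vol g a c := by
  have hga := sub_pos.mpr (one_lt_form hg ha hgg haa hag.symm)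
  have hgb := sub_pos.mpr (one_lt_form hg hb hgg hbb hbg.symm)
  have hgc := sub_pos.mpr (one_lt_form hg hc hgg hcc hcg.symm)
  have hcoplanar : vol (a - g) (b - g) (c - g) = 0 :=
    vol_eq_zero_of_orthogonal hx (by rw [map_sub, hxa, sub_self]) (by rw [map_sub, hxb, sub_self])
      (by rw [map_sub, hxc, sub_self])
  have plucker : vol g a c * (form g b - form g g) =
      vol g a b * (form g c - form g g) + vol g b c * (form g a - form g g)
        - form g g * vol (a - g) (b - g) (c - g) := by
    simp only [vol_apply, form_apply, Pi.sub_apply]; ring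
  rw [hgg, hcoplanar, mul_zero, sub_zero] at plucker
  exact pos_of_mul_pos_left (plucker ▸ by positivity) hgb.le

lemma exists_eq_smul_add_cross {x x' a b : Space} (hx : x ∈ cone) (hx' : x' ∈ cone) (ha : a ∈ cone)
    (hb : b ∈ cone) (haa : form a a = 1) (hbb : form b b = 1) (hne : a ≠ b)
    (h : form x a = form x b) (h' : form x' a = form x' b) :
    ∃ c t : ℝ, 0 < c ∧ x' = c • (x + t • cross a b) := by
  have hxa := form_pos hx ha
  have hx'a := form_pos hx' ha
  set c := form x' a / form x a with hc
  have hc0 : 0 < c := div_pos hx'a hxa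
  have orth_a : form a (c⁻¹ • x' - x) = 0 := by
    rw [form_comm, map_sub, map_smul, LinearMap.sub_apply, LinearMap.smul_apply, hc, smul_eq_mul]
    field_simp; ring
  have orth_b : form b (c⁻¹ • x' - x) = 0 := by
    rw [form_comm] at orth_a ⊢
    rw [map_sub, map_smul, LinearMap.sub_apply, LinearMap.smul_apply] at orth_a ⊢
    rw [← h, ← h', orth_a]
  obtain ⟨t, ht⟩ := (cross_eq_zero_iff (cross_ne_zero ha hb haa hbb hne)).mp
    (show cross (cross a b) (c⁻¹ • x' - x) = 0 by simp [cross_cross, orth_a, orth_b])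
  exact ⟨c, t, hc0, by rw [ht]; simp [smul_smul, hc0.ne']⟩

end Minkowski

/-! ### Fuchsian representations and Voronoi cells -/

namespace Voronoi

open Minkowski Filter
open scoped Topology

variable {G : Type*} [Group G]

/-- `ρ` realises `G` as a torsion-free discrete group of orientation-preserving isometries of the
hyperbolic plane. Discreteness is expressed by the finiteness of the number of orbit points of
`origin` in every ball. -/
structure IsFuchsian (ρ : Representation ℝ G Space) : Prop where
  form_map : ∀ g X Y, form (ρ g X) (ρ g Y) = form X Y
  map_mem_cone : ∀ g, ∀ X ∈ cone, ρ g X ∈ cone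
  vol_map : ∀ g a b c, vol (ρ g a) (ρ g b) (ρ g c) = vol a b c
  finite_form_origin_le : ∀ R, {g | form origin (ρ g origin) ≤ R}.Finite
  torsionFree : ∀ g : G, IsOfFinOrder g → g = 1

/-- The elements `g` of the group whose orbit point `ρ g origin` is closest to the ray of `X`;
equivalently, whose Voronoi cell contains `X`. On points of norm one, `form` is the hyperbolic
cosine of the distance. -/
def nearest (ρ : Representation ℝ G Space) (X : Space) : Set G :=
  {g | ∀ h, form X (ρ g origin) ≤ form X (ρ h origin)}

/-- Among the cells containing `x`, the cell of `h` immediately follows the cell of `g` in the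
cyclic order around `x`. -/
def CyclicSucc (ρ : Representation ℝ G Space) (x : Space) (g h : G) : Prop :=
  g ∈ nearest ρ x ∧ h ∈ nearest ρ x ∧ g ≠ h ∧
    ∀ k ∈ nearest ρ x, k ≠ g → k ≠ h → 0 < vol (ρ g origin) (ρ h origin) (ρ k origin)

/-- The Voronoi cells of `g` and `h` share an edge. -/
def Adj (ρ : Representation ℝ G Space) (g h : G) : Prop :=
  ∃ x ∈ cone, nearest ρ x = {g, h} ∧ g ≠ h

/-- `x` is a vertex of the Voronoi tessellation, and the edge between the cells of `g` and `h`
starts at `x` when oriented so that it leaves the cell of `g` on a fixed side. -/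
def IsCorner (ρ : Representation ℝ G Space) (x : Space) (g h : G) : Prop :=
  x ∈ cone ∧ CyclicSucc ρ x g h ∧ ∃ k ∈ nearest ρ x, k ≠ g ∧ k ≠ h

variable {ρ : Representation ℝ G Space}

lemma form_eq_of_mem_nearest {X : Space} {g h : G} (hg : g ∈ nearest ρ X) (hh : h ∈ nearest ρ X) :
    form X (ρ g origin) = form X (ρ h origin) := le_antisymm (hg h) (hh g)

lemma mem_nearest_of_form_eq {X : Space} {g h : G} (hg : g ∈ nearest ρ X)
    (e : form X (ρ h origin) = form X (ρ g origin)) : h ∈ nearest ρ X := fun k => e ▸ hg k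

lemma nearest_smul {c : ℝ} (hc : 0 < c) (X : Space) : nearest ρ (c • X) = nearest ρ X := by
  ext g
  simp only [nearest, Set.mem_ofPred_eq, map_smul, LinearMap.smul_apply, smul_eq_mul,
    mul_le_mul_iff_right₀ hc]

lemma mem_nearest_add {X Y : Space} {g : G} (hX : g ∈ nearest ρ X) (hY : g ∈ nearest ρ Y) :
    g ∈ nearest ρ (X + Y) := fun h => by
  simpa only [map_add, LinearMap.add_apply] using add_le_add (hX h) (hY h)

lemma cyclicSucc_smul {c : ℝ} (hc : 0 < c) {x : Space} {g h : G} :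
    CyclicSucc ρ (c • x) g h ↔ CyclicSucc ρ x g h := by
  rw [CyclicSucc, CyclicSucc, nearest_smul hc]

lemma CyclicSucc.right_unique {x : Space} {g h h' : G} (hs : CyclicSucc ρ x g h)
    (hs' : CyclicSucc ρ x g h') : h = h' := by
  by_contra hne
  have hpos := hs.2.2.2 h' hs'.2.1 hs'.2.2.1.symm (Ne.symm hne)
  have hpos' := hs'.2.2.2 h hs.2.1 hs.2.2.1.symm hne
  rw [vol_swap_right] at hpos'
  linarith

lemma CyclicSucc.left_unique {x : Space} {g g' h : G} (hs : CyclicSucc ρ x g h)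
    (hs' : CyclicSucc ρ x g' h) : g = g' := by
  by_contra hne
  have hpos := hs.2.2.2 g' hs'.1 (Ne.symm hne) hs'.2.2.1
  have hpos' := hs'.2.2.2 g hs.1 hne hs.2.2.1
  rw [vol_swap_outer] at hpos'
  linarith

lemma CyclicSucc.asymm_of_third {x : Space} {g h k : G} (hs : CyclicSucc ρ x g h)
    (hk : k ∈ nearest ρ x) (hkg : k ≠ g) (hkh : k ≠ h) : ¬ CyclicSucc ρ x h g := fun hs' => by
  have hpos := hs.2.2.2 k hk hkg hkh
  have hpos' := hs'.2.2.2 k hk hkh hkg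
  rw [vol_swap_left] at hpos'
  linarith

lemma Adj.symm {g h : G} (had : Adj ρ g h) : Adj ρ h g := by
  obtain ⟨x, hx, hpair, hne⟩ := had
  exact ⟨x, hx, by rw [hpair, Set.pair_comm], hne.symm⟩

namespace IsFuchsian

variable (hρ : IsFuchsian ρ)
include hρ

lemma map_origin_mem_cone (g : G) : ρ g origin ∈ cone := hρ.map_mem_cone g _ origin_mem_cone

lemma form_map_origin_self (g : G) : form (ρ g origin) (ρ g origin) = 1 := by
  rw [hρ.form_map, form_origin_self]

lemma map_origin_injective : Function.Injective fun g => ρ g origin := by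
  intro g h (hgh : ρ g origin = ρ h origin)
  have hfix : ρ (g⁻¹ * h) origin = origin := by
    rw [map_mul, Module.End.mul_apply, ← hgh, ← Module.End.mul_apply, ← map_mul, inv_mul_cancel,
      map_one, Module.End.one_apply]
  have hpow (n : ℕ) : ρ ((g⁻¹ * h) ^ n) origin = origin := by
    rw [map_pow, Module.End.pow_apply]
    exact Function.iterate_fixed hfix n
  have hfin : IsOfFinOrder (g⁻¹ * h) := by
    rw [← finite_powers]
    refine (hρ.finite_form_origin_le 1).subset ?_
    rintro _ ⟨n, rfl⟩
    simp only [Set.mem_ofPred_eq, hpow, form_origin_self, le_refl]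
  exact inv_mul_eq_one.mp (hρ.torsionFree _ hfin)

lemma form_map_mul (k : G) (X : Space) (g : G) :
    form (ρ k X) (ρ (k * g) origin) = form X (ρ g origin) := by
  rw [map_mul, Module.End.mul_apply, hρ.form_map]

lemma vol_map_mul (k a b c : G) :
    vol (ρ (k * a) origin) (ρ (k * b) origin) (ρ (k * c) origin) =
      vol (ρ a origin) (ρ b origin) (ρ c origin) := by
  simp only [map_mul, Module.End.mul_apply, hρ.vol_map]

lemma mul_mem_nearest_map (k g : G) (X : Space) : k * g ∈ nearest ρ (ρ k X) ↔ g ∈ nearest ρ X := by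
  refine ⟨fun h j => ?_, fun h j => ?_⟩
  · have := h (k * j)
    rwa [hρ.form_map_mul, hρ.form_map_mul] at this
  · rw [hρ.form_map_mul, ← mul_inv_cancel_left k j, hρ.form_map_mul]
    exact h (k⁻¹ * j)

lemma mem_nearest_map_origin (g : G) : g ∈ nearest ρ (ρ g origin) := by
  intro h
  obtain rfl | hne := eq_or_ne g h
  · rfl
  · rw [hρ.form_map_origin_self]
    exact (one_lt_form (hρ.map_origin_mem_cone g) (hρ.map_origin_mem_cone h)
      (hρ.form_map_origin_self g) (hρ.form_map_origin_self h) (hρ.map_origin_injective.ne hne)).le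

lemma eventually_mul_form_origin_le {X : Space} (hX : X ∈ cone) : ∃ c : ℝ, 0 < c ∧
    ∀ᶠ X' in 𝓝 X, ∀ g, c * form origin (ρ g origin) ≤ form X' (ρ g origin) := by
  have hcone : ∀ᶠ c in 𝓝[>] (0 : ℝ), X - c • origin ∈ cone := by
    have hcont : Continuous fun c : ℝ => X - c • origin := by fun_prop
    exact nhdsWithin_le_nhds ((isOpen_cone.preimage hcont).mem_nhds (by simpa using hX))
  obtain ⟨c, hXc, hc⟩ := (hcone.and self_mem_nhdsWithin).exists
  refine ⟨c, hc, ?_⟩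
  have hcont : Continuous fun X' : Space => X' - c • origin := by fun_prop
  filter_upwards [(isOpen_cone.preimage hcont).mem_nhds hXc] with X' hX' g
  have := form_pos hX' (hρ.map_origin_mem_cone g)
  simp only [map_sub, map_smul, LinearMap.sub_apply, LinearMap.smul_apply, smul_eq_mul] at this
  linarith

lemma finite_form_le {X : Space} (hX : X ∈ cone) (R : ℝ) :
    {g | form X (ρ g origin) ≤ R}.Finite := by
  obtain ⟨c, hc, hle⟩ := hρ.eventually_mul_form_origin_le hX
  refine (hρ.finite_form_origin_le (R / c)).subset fun g (hg : form X (ρ g origin) ≤ R) => ?_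
  rw [Set.mem_ofPred_eq, le_div_iff₀' hc]
  exact (hle.self_of_nhds g).trans hg

lemma exists_isMinOn {X : Space} (hX : X ∈ cone) {s : Set G} (hs : s.Nonempty) :
    ∃ g ∈ s, ∀ h ∈ s, form X (ρ g origin) ≤ form X (ρ h origin) := by
  obtain ⟨k, hk⟩ := hs
  obtain ⟨g, hg, hmin⟩ := Set.exists_min_image (s ∩ {g | form X (ρ g origin) ≤ form X (ρ k origin)})
    (fun g => form X (ρ g origin)) ((hρ.finite_form_le hX _).inter_of_right s)
    ⟨k, hk, le_refl (form X (ρ k origin))⟩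
  refine ⟨g, hg.1, fun h hh => ?_⟩
  by_cases hhk : form X (ρ h origin) ≤ form X (ρ k origin)
  · exact hmin h ⟨hh, hhk⟩
  · exact hg.2.trans (not_le.mp hhk).le

lemma nearest_nonempty {X : Space} (hX : X ∈ cone) : (nearest ρ X).Nonempty := by
  obtain ⟨g, -, hg⟩ := hρ.exists_isMinOn hX (Set.univ_nonempty (α := G))
  exact ⟨g, fun h => hg h trivial⟩

lemma finite_nearest {X : Space} (hX : X ∈ cone) : (nearest ρ X).Finite := by
  obtain ⟨g, -⟩ := hρ.nearest_nonempty hX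
  exact (hρ.finite_form_le hX (form X (ρ g origin))).subset fun h hh => hh g

lemma eventually_nearest_subset {X : Space} (hX : X ∈ cone) :
    ∀ᶠ X' in 𝓝 X, X' ∈ cone ∧ nearest ρ X' ⊆ nearest ρ X := by
  obtain ⟨c, hc, hle⟩ := hρ.eventually_mul_form_origin_le hX
  obtain ⟨g, hg⟩ := hρ.nearest_nonempty hX
  set R := (form X (ρ g origin) + 1) / c with hR
  have hbound : ∀ᶠ X' in 𝓝 X, form X' (ρ g origin) < form X (ρ g origin) + 1 :=
    ((continuous_form_left _).tendsto X).eventually (gt_mem_nhds (lt_add_one _))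
  have hfar : ∀ᶠ X' in 𝓝 X, ∀ k ∈ {k | form origin (ρ k origin) ≤ R},
      k ∉ nearest ρ X → form X' (ρ g origin) < form X' (ρ k origin) := by
    rw [eventually_all_finite (hρ.finite_form_origin_le R)]
    intro k _
    by_cases hk : k ∈ nearest ρ X
    · exact .of_forall fun X' h => absurd hk h
    · have hlt : form X (ρ g origin) < form X (ρ k origin) :=
        (hg k).lt_of_ne fun e => hk (mem_nearest_of_form_eq hg e.symm)
      filter_upwards [(isOpen_lt (continuous_form_left _) (continuous_form_left _)).mem_nhds hlt]
        with X' hX' _ using hX'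
  filter_upwards [isOpen_cone.mem_nhds hX, hle, hbound, hfar] with X' hX' hle' hbound' hfar'
  refine ⟨hX', fun k hk => ?_⟩
  by_contra hkX
  refine (hk g).not_gt (hfar' k ?_ hkX)
  rw [hR, le_div_iff₀' hc]
  linarith [hle' k, hk g]

lemma vol_ne_zero {x : Space} (hx : x ∈ cone) {a b c : G} (ha : a ∈ nearest ρ x)
    (hb : b ∈ nearest ρ x) (hc : c ∈ nearest ρ x) (hab : a ≠ b) (hac : a ≠ c) (hbc : b ≠ c) :
    vol (ρ a origin) (ρ b origin) (ρ c origin) ≠ 0 :=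
  Minkowski.vol_ne_zero hx (hρ.map_origin_mem_cone a) (hρ.form_map_origin_self b)
    (hρ.form_map_origin_self c) (hρ.form_map_origin_self a) (hρ.map_origin_injective.ne hbc)
    (hρ.map_origin_injective.ne hab.symm) (hρ.map_origin_injective.ne hac.symm)
    (form_eq_of_mem_nearest hb ha) (form_eq_of_mem_nearest hc ha)

lemma isStrictOrder_vol {x : Space} (hx : x ∈ cone) {k : G} (hk : k ∈ nearest ρ x) :
    IsStrictOrder {g // g ∈ nearest ρ x ∧ g ≠ k}
      fun a b => 0 < vol (ρ k origin) (ρ a origin) (ρ b origin) where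
  irrefl a h := by simp only [vol_self_right, lt_irrefl] at h
  trans a b c hab hbc := vol_pos_trans hx (hρ.map_origin_mem_cone k) (hρ.map_origin_mem_cone a)
    (hρ.map_origin_mem_cone b) (hρ.map_origin_mem_cone c) (hρ.form_map_origin_self k)
    (hρ.form_map_origin_self a) (hρ.form_map_origin_self b) (hρ.form_map_origin_self c)
    (hρ.map_origin_injective.ne a.2.2) (hρ.map_origin_injective.ne b.2.2)
    (hρ.map_origin_injective.ne c.2.2) (form_eq_of_mem_nearest a.2.1 hk)
    (form_eq_of_mem_nearest b.2.1 hk) (form_eq_of_mem_nearest c.2.1 hk) hab hbc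

lemma exists_cyclicSucc {x : Space} (hx : x ∈ cone) {g k : G} (hg : g ∈ nearest ρ x)
    (hk : k ∈ nearest ρ x) (hne : k ≠ g) : ∃ h, CyclicSucc ρ x g h := by
  have := hρ.isStrictOrder_vol hx hg
  have : Finite {h // h ∈ nearest ρ x ∧ h ≠ g} :=
    ((hρ.finite_nearest hx).subset fun h hh => hh.1).to_subtype
  obtain ⟨⟨h, hh, hhg⟩, -, hmin⟩ := (Finite.wellFounded_of_trans_of_irrefl
    fun a b : {h // h ∈ nearest ρ x ∧ h ≠ g} =>
      0 < vol (ρ g origin) (ρ a origin) (ρ b origin)).has_min Set.univ ⟨⟨k, hk, hne⟩, trivial⟩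
  refine ⟨h, hg, hh, hhg.symm, fun j hj hjg hjh => ?_⟩
  have hle := hmin ⟨j, hj, hjg⟩ trivial
  rw [vol_swap_right, neg_pos, not_lt] at hle
  exact hle.lt_of_ne (hρ.vol_ne_zero hx hg hh hj hhg.symm hjg.symm hjh.symm).symm

lemma eq_nearest_of_cyclicSucc_mem {x : Space} (hx : x ∈ cone) {C : Set G} (hC : C ⊆ nearest ρ x)
    (hne : C.Nonempty) (hclosed : ∀ g ∈ C, ∀ h, CyclicSucc ρ x g h → h ∈ C) :
    C = nearest ρ x := by
  refine hC.antisymm fun k hk => ?_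
  by_contra hkC
  have ne_k {g : G} (hg : g ∈ C) : g ≠ k := fun e => hkC (e ▸ hg)
  have := hρ.isStrictOrder_vol hx hk
  have : Finite {g // g ∈ nearest ρ x ∧ g ≠ k} :=
    ((hρ.finite_nearest hx).subset fun g hg => hg.1).to_subtype
  obtain ⟨g₀, hg₀⟩ := hne
  obtain ⟨⟨g, hg, hgk⟩, hgC, hmax⟩ := (Finite.wellFounded_of_trans_of_irrefl
    (Function.swap fun a b : {g // g ∈ nearest ρ x ∧ g ≠ k} =>
      0 < vol (ρ k origin) (ρ a origin) (ρ b origin))).has_min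
      {a | a.1 ∈ C} ⟨⟨g₀, hC hg₀, ne_k hg₀⟩, hg₀⟩
  obtain ⟨h, hs⟩ := hρ.exists_cyclicSucc hx hg hk hgk.symm
  have hh := hclosed g hgC h hs
  refine hmax ⟨h, hC hh, ne_k hh⟩ hh ?_
  rw [Function.swap, vol_rotate]
  exact hs.2.2.2 k hk hgk.symm (ne_k hh).symm

lemma cyclicSucc_map (k : G) {x : Space} {g h : G} :
    CyclicSucc ρ (ρ k x) (k * g) (k * h) ↔ CyclicSucc ρ x g h := by
  rw [CyclicSucc, ← (Equiv.mulLeft k).forall_congr_right]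
  simp only [CyclicSucc, Equiv.coe_mulLeft, hρ.mul_mem_nearest_map, ne_eq, mul_right_inj,
    hρ.vol_map_mul]

lemma nearest_map (k : G) (x : Space) : nearest ρ (ρ k x) = (k * ·) '' nearest ρ x := by
  ext j
  rw [← mul_inv_cancel_left k j, hρ.mul_mem_nearest_map, (mul_right_injective k).mem_set_image]

lemma adj_mul_left (k : G) {g h : G} (had : Adj ρ g h) : Adj ρ (k * g) (k * h) := by
  obtain ⟨x, hx, hpair, hne⟩ := had
  exact ⟨ρ k x, hρ.map_mem_cone k x hx, by rw [hρ.nearest_map, hpair, Set.image_pair],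
    (mul_right_injective k).ne hne⟩

end IsFuchsian

lemma form_add_smul_cross_left (x : Space) (t : ℝ) (a b : Space) :
    form (x + t • cross a b) a = form x a := by
  simp [form_cross_left]

lemma form_add_smul_cross_right (x : Space) (t : ℝ) (a b : Space) :
    form (x + t • cross a b) b = form x b := by
  simp [form_cross_right]

lemma form_add_smul_cross (x : Space) (t : ℝ) (a b c : Space) :
    form (x + t • cross a b) c = form x c + t * vol a b c := by
  simp [form_cross]

namespace IsFuchsian

variable (hρ : IsFuchsian ρ)
include hρ

lemma eventually_nearest_add_cross {x : Space} (hx : x ∈ cone) {g h : G}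
    (hs : CyclicSucc ρ x g h) : ∀ᶠ t in 𝓝[>] (0 : ℝ),
      x + t • cross (ρ g origin) (ρ h origin) ∈ cone ∧
        nearest ρ (x + t • cross (ρ g origin) (ρ h origin)) = {g, h} := by
  have htendsto : Tendsto (fun t : ℝ => x + t • cross (ρ g origin) (ρ h origin)) (𝓝[>] 0)
      (𝓝 x) := by
    refine tendsto_nhdsWithin_of_tendsto_nhds (Continuous.tendsto' (by fun_prop) _ _ (by simp))
  filter_upwards [htendsto.eventually (hρ.eventually_nearest_subset hx), self_mem_nhdsWithin]
    with t ⟨hcone, hsub⟩ (ht : 0 < t)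
  refine ⟨hcone, ?_⟩
  set y := x + t • cross (ρ g origin) (ρ h origin)
  have hgh : form y (ρ g origin) = form y (ρ h origin) := by
    rw [form_add_smul_cross_left, form_add_smul_cross_right, form_eq_of_mem_nearest hs.1 hs.2.1]
  have hpair : nearest ρ y ⊆ {g, h} := by
    intro k hk
    by_contra! hkgh
    simp only [Set.mem_insert_iff, Set.mem_singleton_iff, not_or] at hkgh
    have hle := hk g
    rw [form_add_smul_cross_left, form_add_smul_cross, form_eq_of_mem_nearest (hsub hk) hs.1] at hle
    linarith [mul_pos ht (hs.2.2.2 k (hsub hk) hkgh.1 hkgh.2)]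
  have hmem : g ∈ nearest ρ y ∧ h ∈ nearest ρ y := by
    obtain ⟨k, hk⟩ := hρ.nearest_nonempty hcone
    rcases hpair hk with rfl | rfl
    · exact ⟨hk, mem_nearest_of_form_eq hk hgh.symm⟩
    · exact ⟨mem_nearest_of_form_eq hk hgh, hk⟩
  exact hpair.antisymm (Set.pair_subset hmem.1 hmem.2)

lemma adj_of_cyclicSucc {x : Space} (hx : x ∈ cone) {g h : G} (hs : CyclicSucc ρ x g h) :
    Adj ρ g h := by
  obtain ⟨t, hcone, hpair⟩ := (hρ.eventually_nearest_add_cross hx hs).exists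
  exact ⟨_, hcone, hpair, hs.2.2.1⟩

lemma cyclicSucc_of_add_cross {x : Space} (hx : x ∈ cone) {g h : G} (hgh : g ≠ h) {t : ℝ}
    (ht : 0 < t) (hy : x + t • cross (ρ g origin) (ρ h origin) ∈ cone) (hg : g ∈ nearest ρ x)
    (hh : h ∈ nearest ρ x) (hg' : g ∈ nearest ρ (x + t • cross (ρ g origin) (ρ h origin)))
    (hh' : h ∈ nearest ρ (x + t • cross (ρ g origin) (ρ h origin))) :
    CyclicSucc ρ x g h ∧ CyclicSucc ρ (x + t • cross (ρ g origin) (ρ h origin)) h g := by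
  refine ⟨⟨hg, hh, hgh, fun k hk hkg hkh => ?_⟩, hh', hg', hgh.symm, fun k hk hkh hkg => ?_⟩
  · have hle := hg' k
    rw [form_add_smul_cross_left, form_add_smul_cross, form_eq_of_mem_nearest hk hg,
      le_add_iff_nonneg_right, mul_nonneg_iff_of_pos_left ht] at hle
    exact hle.lt_of_ne (hρ.vol_ne_zero hx hg hh hk hgh hkg.symm hkh.symm).symm
  · have heq := form_eq_of_mem_nearest hk hg'
    rw [form_add_smul_cross_left, form_add_smul_cross] at heq
    have hle : t * vol (ρ g origin) (ρ h origin) (ρ k origin) ≤ 0 := by linarith [hg k]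
    rw [vol_swap_left, neg_pos]
    exact (nonpos_of_mul_nonpos_right hle ht).lt_of_ne
      (hρ.vol_ne_zero hy hg' hh' hk hgh hkg.symm hkh.symm)

/-- The two points are the end points of an edge unless they lie on the same ray. -/
lemma parallel_or_cyclicSucc {x x' : Space} (hx : x ∈ cone) (hx' : x' ∈ cone) {g h : G}
    (hgh : g ≠ h) (hg : g ∈ nearest ρ x) (hh : h ∈ nearest ρ x) (hg' : g ∈ nearest ρ x')
    (hh' : h ∈ nearest ρ x') :
    (∃ c : ℝ, 0 < c ∧ x' = c • x) ∨ (CyclicSucc ρ x g h ∧ CyclicSucc ρ x' h g) ∨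
      (CyclicSucc ρ x h g ∧ CyclicSucc ρ x' g h) := by
  obtain ⟨c, t, hc, rfl⟩ := exists_eq_smul_add_cross hx hx' (hρ.map_origin_mem_cone g)
    (hρ.map_origin_mem_cone h) (hρ.form_map_origin_self g) (hρ.form_map_origin_self h)
    (hρ.map_origin_injective.ne hgh) (form_eq_of_mem_nearest hg hh) (form_eq_of_mem_nearest hg' hh')
  have hy : x + t • cross (ρ g origin) (ρ h origin) ∈ cone := by
    simpa [smul_smul, hc.ne'] using smul_mem_cone hx' (inv_pos.mpr hc)
  rw [nearest_smul hc] at hg' hh'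
  rw [cyclicSucc_smul hc, cyclicSucc_smul hc]
  rcases lt_trichotomy t 0 with ht | rfl | ht
  · have hflip : t • cross (ρ g origin) (ρ h origin) = (-t) • cross (ρ h origin) (ρ g origin) := by
      rw [cross_swap, smul_neg, neg_smul]
    rw [hflip] at hy hg' hh' ⊢
    exact .inr (.inr (hρ.cyclicSucc_of_add_cross hx hgh.symm (neg_pos.mpr ht) hy hh hg hh' hg'))
  · exact .inl ⟨c, hc, by rw [zero_smul, add_zero]⟩
  · exact .inr (.inl (hρ.cyclicSucc_of_add_cross hx hgh ht hy hg hh hg' hh'))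

lemma parallel_of_isCorner {x x' : Space} {g h : G} (hc : IsCorner ρ x g h)
    (hc' : IsCorner ρ x' g h) : ∃ c : ℝ, 0 < c ∧ x' = c • x := by
  obtain ⟨hx, hs, k, hk, hkg, hkh⟩ := hc
  obtain ⟨hx', hs', k', hk', hkg', hkh'⟩ := hc'
  rcases hρ.parallel_or_cyclicSucc hx hx' hs.2.2.1 hs.1 hs.2.1 hs'.1 hs'.2.1 with h | h | h
  · exact h
  · exact absurd h.2 (hs'.asymm_of_third hk' hkg' hkh')
  · exact absurd h.1 (hs.asymm_of_third hk hkg hkh)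

end IsFuchsian

end Voronoi

namespace Voronoi

open Minkowski Filter
open scoped Topology

variable {G : Type*} [Group G]

/-- Seen from `p`, the orbit point of `k` is closer than that of `g`. For generic `p` this is the
well-founded order along which the cells are added one at a time, as in discrete Morse theory. -/
def Closer (ρ : Representation ℝ G Space) (p : Space) (k g : G) : Prop :=
  form p (ρ k origin) < form p (ρ g origin)

/-- The time at which `X + u • p`, as `u` grows, becomes as close to the orbit point of `k` as to
that of `g`. It is meant for `Closer ρ p k g`; otherwise the denominator may vanish. -/
noncomputable def exitTime (ρ : Representation ℝ G Space) (p X : Space) (g k : G) : ℝ :=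
  (form X (ρ k origin) - form X (ρ g origin)) / (form p (ρ g origin) - form p (ρ k origin))

/-- The ray from `X` in direction `p` leaves the cell of `g` through the cell of `k`. -/
def IsExit (ρ : Representation ℝ G Space) (p X : Space) (g k : G) : Prop :=
  Closer ρ p k g ∧ ∀ j, Closer ρ p j g → exitTime ρ p X g k ≤ exitTime ρ p X g j

variable {ρ : Representation ℝ G Space} {p X : Space} {g k : G}

lemma exitTime_nonneg (hg : g ∈ nearest ρ X) (hk : Closer ρ p k g) : 0 ≤ exitTime ρ p X g k :=
  div_nonneg (sub_nonneg.mpr (hg k)) (sub_nonneg.mpr hk.le)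

lemma exitTime_eq_zero (hg : g ∈ nearest ρ X) (hk : k ∈ nearest ρ X) :
    exitTime ρ p X g k = 0 := by
  rw [exitTime, form_eq_of_mem_nearest hk hg, sub_self, zero_div]

lemma isExit_of_mem_nearest (hg : g ∈ nearest ρ X) (hk : k ∈ nearest ρ X)
    (hkg : Closer ρ p k g) : IsExit ρ p X g k :=
  ⟨hkg, fun _ hj => (exitTime_eq_zero hg hk).trans_le (exitTime_nonneg hg hj)⟩

lemma IsExit.mem_nearest (hk : IsExit ρ p X g k) (hg : g ∈ nearest ρ X) :
    g ∈ nearest ρ (X + exitTime ρ p X g k • p) ∧ k ∈ nearest ρ (X + exitTime ρ p X g k • p) := by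
  obtain ⟨hkg, hmin⟩ := hk
  set u := exitTime ρ p X g k
  have hu0 : 0 ≤ u := exitTime_nonneg hg hkg
  have hgu : g ∈ nearest ρ (X + u • p) := by
    intro j
    simp only [map_add, map_smul, LinearMap.add_apply, LinearMap.smul_apply, smul_eq_mul]
    by_cases hj : Closer ρ p j g
    · have := hmin j hj
      rw [exitTime, le_div_iff₀ (sub_pos.mpr hj)] at this
      linarith
    · exact add_le_add (hg j) (mul_le_mul_of_nonneg_left (not_lt.mp hj) hu0)
  refine ⟨hgu, mem_nearest_of_form_eq hgu ?_⟩
  have : u * (form p (ρ g origin) - form p (ρ k origin)) =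
      form X (ρ k origin) - form X (ρ g origin) := div_mul_cancel₀ _ (sub_pos.mpr hkg).ne'
  simp only [map_add, map_smul, LinearMap.add_apply, LinearMap.smul_apply, smul_eq_mul]
  linarith

lemma add_exitTime_mem_cone (hp : p ∈ cone) (hX : X ∈ cone) (hg : g ∈ nearest ρ X)
    (hk : Closer ρ p k g) : X + exitTime ρ p X g k • p ∈ cone := by
  rcases (exitTime_nonneg hg hk).eq_or_lt with h | h
  · rwa [← h, zero_smul, add_zero]
  · exact add_mem_cone hX (smul_mem_cone hp h)

lemma convex_cell (g : G) : Convex ℝ {X | X ∈ cone ∧ g ∈ nearest ρ X} := by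
  refine convex_iff_forall_pos.mpr fun X hX Y hY a b ha hb _ => ⟨?_, mem_nearest_add ?_ ?_⟩
  · exact add_mem_cone (smul_mem_cone hX.1 ha) (smul_mem_cone hY.1 hb)
  · rw [nearest_smul ha]; exact hX.2
  · rw [nearest_smul hb]; exact hY.2

lemma isClosed_setOf_isExit (g k : G) : IsClosed {X | IsExit ρ p X g k} := by
  have hcont (j : G) : Continuous fun X => exitTime ρ p X g j :=
    ((continuous_form_left _).sub (continuous_form_left _)).div_const _
  simp only [IsExit, Set.ofPred_and, Set.ofPred_forall]
  exact isClosed_const.inter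
    (isClosed_iInter fun j => isClosed_iInter fun _ => isClosed_le (hcont k) (hcont j))

lemma finite_setOf_quadratic_eq_zero {a b c : ℝ} (h : a ≠ 0 ∨ b ≠ 0 ∨ c ≠ 0) :
    {e : ℝ | a * e ^ 2 + b * e + c = 0}.Finite := by
  have hne : (⟨0, a, b, c⟩ : Cubic ℝ).toPoly ≠ 0 := by
    rcases h with h | h | h
    exacts [Cubic.ne_zero_of_b_ne_zero h, Cubic.ne_zero_of_c_ne_zero h,
      Cubic.ne_zero_of_d_ne_zero h]
  refine (Polynomial.finite_setOfPred_isRoot hne).subset fun e he => ?_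
  simpa [Cubic.toPoly] using he

namespace IsFuchsian

variable (hρ : IsFuchsian ρ)
include hρ

lemma countable : Countable G := by
  have hcover : (Set.univ : Set G) = ⋃ n : ℕ, {g | form origin (ρ g origin) ≤ n} := by
    ext g
    simpa using exists_nat_ge (form origin (ρ g origin))
  rw [← Set.countable_univ_iff, hcover]
  exact Set.countable_iUnion fun n => (hρ.finite_form_origin_le n).countable

lemma exists_injective_form : ∃ p ∈ cone, Function.Injective fun g => form p (ρ g origin) := by
  have := hρ.countable
  -- A curve in the cone which is contained in no plane.
  let curve (e : ℝ) : Space := ![1, e, 1 + e ^ 2]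
  have hcount : (⋃ gh : {gh : G × G // gh.1 ≠ gh.2},
      {e | form (curve e) (ρ gh.1.1 origin) = form (curve e) (ρ gh.1.2 origin)}).Countable := by
    refine Set.countable_iUnion fun ⟨⟨g, h⟩, hgh⟩ => Set.Finite.countable ?_
    set d := ρ g origin - ρ h origin with hd
    have hd0 : d ≠ 0 := sub_ne_zero.mpr (hρ.map_origin_injective.ne hgh)
    have hcoeff : d 0 / 2 ≠ 0 ∨ -d 1 ≠ 0 ∨ (d 0 + d 2) / 2 ≠ 0 := by
      by_contra! hzero
      refine hd0 (funext fun i => ?_)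
      fin_cases i <;> simp <;> linarith
    refine (finite_setOf_quadratic_eq_zero hcoeff).subset fun e he => ?_
    rw [Set.mem_ofPred_eq, ← sub_eq_zero, ← map_sub, ← hd, form_apply] at he
    simp only [curve, Matrix.cons_val_zero, Matrix.cons_val_one, Matrix.cons_val] at he
    rw [Set.mem_ofPred_eq]
    linarith
  obtain ⟨e, he⟩ := (Set.ne_univ_iff_exists_notMem _).mp
    fun h => Cardinal.not_countable_real (h ▸ hcount)
  refine ⟨curve e, ⟨by simp [curve], by simp [curve, form_apply]; ring_nf; norm_num⟩,
    fun g h hgh => ?_⟩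
  by_contra hne
  exact he (Set.mem_iUnion.mpr ⟨⟨(g, h), hne⟩, hgh⟩)

lemma wellFounded_closer (hp : p ∈ cone) : WellFounded (Closer ρ p) := by
  refine WellFounded.wellFounded_iff_has_min.mpr fun s hs => ?_
  obtain ⟨g, hg, hmin⟩ := hρ.exists_isMinOn hp hs
  exact ⟨g, hg, fun h hh => (hmin h hh).not_gt⟩

lemma finite_setOf_closer (hp : p ∈ cone) (g : G) : {k | Closer ρ p k g}.Finite :=
  (hρ.finite_form_le hp _).subset fun k (hk : Closer ρ p k g) =>
    show form p (ρ k origin) ≤ form p (ρ g origin) from le_of_lt hk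

lemma exists_isExit (hp : p ∈ cone) (X : Space) (hk : Closer ρ p k g) : ∃ j, IsExit ρ p X g j :=
  Set.exists_min_image _ (exitTime ρ p X g) (hρ.finite_setOf_closer hp g) ⟨k, hk⟩

lemma eq_of_eq_on_nearest {α : Type*} (f : G → α)
    (hf : ∀ x ∈ cone, ∀ g ∈ nearest ρ x, ∀ h ∈ nearest ρ x, f g = f h) (g h : G) : f g = f h := by
  obtain ⟨p, hp, hinj⟩ := hρ.exists_injective_form
  obtain ⟨m, -, hm⟩ := (hρ.wellFounded_closer hp).has_min Set.univ ⟨1, trivial⟩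
  have eq_m (g : G) : f g = f m := by
    induction g using (hρ.wellFounded_closer hp).induction with
    | _ g ih =>
      obtain rfl | hgm := eq_or_ne g m
      · rfl
      have hlt : Closer ρ p m g := (not_lt.mp (hm g trivial)).lt_of_ne (hinj.ne hgm.symm)
      obtain ⟨k, hk⟩ := hρ.exists_isExit hp (ρ g origin) hlt
      have hself := hρ.mem_nearest_map_origin g
      have hmem := hk.mem_nearest hself
      rw [hf _ (add_exitTime_mem_cone hp (hρ.map_origin_mem_cone g) hself hk.1) g hmem.1 k hmem.2,
        ih k hk.1]
  rw [eq_m g, eq_m h]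

/-- The lower link of a cell is connected: the neighbours of `g` that are closer to `p` than `g`
cannot be split into two classes without having representatives of both classes meet `g` in a
common point. Indeed the exit cells along a segment inside the cell of `g` cover the segment by
closed sets. -/
lemma closer_neighbours_connected (hp : p ∈ cone) {P : G → Prop}
    (hP : ∀ X ∈ cone, g ∈ nearest ρ X → ∀ k ∈ nearest ρ X, ∀ k' ∈ nearest ρ X,
      Closer ρ p k g → Closer ρ p k' g → P k → P k')
    {x x' : Space} {h h' : G} (hx : x ∈ cone) (hgx : g ∈ nearest ρ x) (hhx : h ∈ nearest ρ x)
    (hx' : x' ∈ cone) (hgx' : g ∈ nearest ρ x') (hhx' : h' ∈ nearest ρ x')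
    (hh : Closer ρ p h g) (hh' : Closer ρ p h' g) (hPh : P h) : P h' := by
  by_contra hPh'
  let exits (Q : G → Prop) : Set Space := ⋃ k ∈ {k | Closer ρ p k g ∧ Q k}, {X | IsExit ρ p X g k}
  have hclosed (Q : G → Prop) : IsClosed (exits Q) :=
    ((hρ.finite_setOf_closer hp g).subset fun k hk => hk.1).isClosed_biUnion
      fun k _ => isClosed_setOf_isExit g k
  have mem_exits {X : Space} {Q : G → Prop} {k : G} (hk : IsExit ρ p X g k) (hQ : Q k) :
      X ∈ exits Q := Set.mem_biUnion (show k ∈ {k | Closer ρ p k g ∧ Q k} from ⟨hk.1, hQ⟩) hk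
  have hcover : segment ℝ x x' ⊆ exits P ∪ exits (¬ P ·) := by
    intro X _
    obtain ⟨k, hk⟩ := hρ.exists_isExit hp X hh
    by_cases hPk : P k
    · exact .inl (mem_exits hk hPk)
    · exact .inr (mem_exits hk hPk)
  obtain ⟨X, hX, hXP, hXnP⟩ := isPreconnected_closed_iff.mp (convex_segment x x').isPreconnected
    _ _ (hclosed P) (hclosed (¬ P ·)) hcover
    ⟨x, left_mem_segment ℝ x x', mem_exits (isExit_of_mem_nearest hgx hhx hh) hPh⟩
    ⟨x', right_mem_segment ℝ x x', mem_exits (isExit_of_mem_nearest hgx' hhx' hh') hPh'⟩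
  obtain ⟨hXc, hgX⟩ := (convex_cell g).segment_subset ⟨hx, hgx⟩ ⟨hx', hgx'⟩ hX
  simp only [exits, Set.mem_iUnion] at hXP hXnP
  obtain ⟨k, ⟨-, hPk⟩, hk⟩ := hXP
  obtain ⟨k', ⟨-, hPk'⟩, hk'⟩ := hXnP
  have htime : exitTime ρ p X g k = exitTime ρ p X g k' :=
    le_antisymm (hk.2 k' hk'.1) (hk'.2 k hk.1)
  refine hPk' (hP _ (add_exitTime_mem_cone hp hXc hgX hk.1) (hk.mem_nearest hgX).1 k
    (hk.mem_nearest hgX).2 k' ?_ hk.1 hk'.1 hPk)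
  rw [htime]
  exact (hk'.mem_nearest hgX).2

end IsFuchsian

section Potential

variable {K : Type*} [Group K] {c : G → G → K}

/-- `c` behaves like a coboundary on every set of cells with a common point. -/
def IsCocycle (ρ : Representation ℝ G Space) (c : G → G → K) : Prop :=
  ∀ x ∈ cone, ∀ g ∈ nearest ρ x, ∀ h ∈ nearest ρ x, ∀ k ∈ nearest ρ x, c g h * c h k = c g k

lemma IsCocycle.self_eq_one (hc : IsCocycle ρ c) {x : Space} (hx : x ∈ cone)
    (hg : g ∈ nearest ρ x) : c g g = 1 := by
  simpa using hc x hx g hg g hg g hg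

lemma IsFuchsian.exists_forall_closer_eq_mul (hρ : IsFuchsian ρ) (hc : IsCocycle ρ c)
    (hp : p ∈ cone) (hinj : Function.Injective fun g => form p (ρ g origin)) :
    ∃ b : G → K, ∀ g h, Closer ρ p h g → ∀ x ∈ cone, g ∈ nearest ρ x → h ∈ nearest ρ x →
      b g = b h * c h g := by
  classical
  let Below (h g : G) : Prop := Closer ρ p h g ∧ ∃ x ∈ cone, g ∈ nearest ρ x ∧ h ∈ nearest ρ x
  let b : G → K := (hρ.wellFounded_closer hp).fix fun g rec =>
    if h : ∃ h, Below h g then rec h.choose h.choose_spec.1 * c h.choose g else 1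
  have b_eq (g : G) (h : ∃ h, Below h g) : b g = b h.choose * c h.choose g := by
    rw [show b g = _ from (hρ.wellFounded_closer hp).fix_eq _ g, dif_pos h]
  refine ⟨b, fun g => ?_⟩
  induction g using (hρ.wellFounded_closer hp).induction with
  | _ g ih =>
    intro h hh x hx hgx hhx
    have hex : ∃ h, Below h g := ⟨h, hh, x, hx, hgx, hhx⟩
    obtain ⟨hh', x', hx', hgx', hhx'⟩ := hex.choose_spec
    rw [b_eq g hex]
    refine hρ.closer_neighbours_connected (P := fun k => b k * c k g = b h * c h g) hp ?_
      hx hgx hhx hx' hgx' hhx' hh hh' rfl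
    intro X hX hg k hk k' hk' hkg hkg' hPk
    rw [← hPk]
    rcases lt_trichotomy (form p (ρ k origin)) (form p (ρ k' origin)) with hlt | heq | hlt
    · rw [ih k' hkg' k hlt X hX hk' hk, mul_assoc, hc X hX k hk k' hk' g hg]
    · rw [hinj heq]
    · rw [ih k hkg k' hlt X hX hk hk', mul_assoc, hc X hX k' hk' k hk g hg]

/-- This is where the simple connectedness of the hyperbolic plane enters. -/
lemma IsFuchsian.exists_potential (hρ : IsFuchsian ρ) (hc : IsCocycle ρ c) :
    ∃ b : G → K, ∀ x ∈ cone, ∀ g ∈ nearest ρ x, ∀ h ∈ nearest ρ x, b h = b g * c g h := by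
  obtain ⟨p, hp, hinj⟩ := hρ.exists_injective_form
  obtain ⟨b, hb⟩ := hρ.exists_forall_closer_eq_mul hc hp hinj
  refine ⟨b, fun x hx g hg h hh => ?_⟩
  rcases lt_trichotomy (form p (ρ g origin)) (form p (ρ h origin)) with hlt | heq | hlt
  · exact hb h g hlt x hx hh hg
  · rw [hinj heq, hc.self_eq_one hx hh, mul_one]
  · rw [hb g h hlt x hx hg hh, mul_assoc, hc x hx h hh g hg h hh, hc.self_eq_one hx hh, mul_one]

end Potential

end Voronoi

/-! ### Poincaré's polygon theorem -/

section iterateProd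

variable {α K : Type*} [Group K]

/-- The product `f s * f (φ s) * ⋯ * f (φ^[n - 1] s)` of the values of `f` along an orbit of `φ`. -/
def iterateProd (φ : α → α) (f : α → K) (s : α) (n : ℕ) : K :=
  ((List.range n).map fun i => f (φ^[i] s)).prod

variable (φ : α → α) (f : α → K) (s : α)

lemma iterateProd_zero : iterateProd φ f s 0 = 1 := by simp [iterateProd]

lemma iterateProd_succ (n : ℕ) :
    iterateProd φ f s (n + 1) = iterateProd φ f s n * f (φ^[n] s) := by
  simp [iterateProd, List.range_succ]

lemma iterateProd_add (n m : ℕ) :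
    iterateProd φ f s (n + m) = iterateProd φ f s n * iterateProd φ f (φ^[n] s) m := by
  induction m with
  | zero => simp [iterateProd_zero]
  | succ m ih =>
    rw [← add_assoc, iterateProd_succ, ih, iterateProd_succ, mul_assoc, add_comm n m,
      Function.iterate_add_apply]

variable {φ f s}

lemma iterateProd_mod {n : ℕ} (hn : φ^[n] s = s) (h : iterateProd φ f s n = 1) (m : ℕ) :
    iterateProd φ f s (m % n) = iterateProd φ f s m := by
  have hmul (q : ℕ) : iterateProd φ f s (n * q) = 1 ∧ φ^[n * q] s = s := by
    induction q with
    | zero => simp [iterateProd_zero]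
    | succ q ih =>
      rw [mul_add_one, iterateProd_add, Function.iterate_add_apply, hn, ih.1, ih.2, h,
        one_mul]
      exact ⟨rfl, rfl⟩
  nth_rw 2 [← Nat.div_add_mod m n]
  rw [iterateProd_add, (hmul _).1, (hmul _).2, one_mul]

end iterateProd

namespace Voronoi

open Minkowski

variable {G K : Type*} [Group G] [Group K] {ρ : Representation ℝ G Space}

/-- The neighbours of the central cell, that is, the side pairings of the fundamental polygon. -/
def sides (ρ : Representation ℝ G Space) : Set G := {s | Adj ρ 1 s}

/-- The sides of the central cell which have a starting vertex. -/
def cornerSides (ρ : Representation ℝ G Space) : Set G := {s | ∃ x, IsCorner ρ x 1 s}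

lemma IsCorner.of_cyclicSucc {x : Space} {g h a b : G} (hc : IsCorner ρ x g h)
    (hs : CyclicSucc ρ x a b) : IsCorner ρ x a b := by
  obtain ⟨hx, ⟨hg, hh, hgh, -⟩, k, hk, hkg, hkh⟩ := hc
  refine ⟨hx, hs, ?_⟩
  by_contra! hpair
  by_cases hga : g = a <;> by_cases hha : h = a <;> grind

lemma ne_one_of_mem_sides {s : G} (hs : s ∈ sides ρ) : s ≠ 1 := by
  obtain ⟨x, -, -, hne⟩ := hs
  exact hne.symm

namespace IsFuchsian

variable (hρ : IsFuchsian ρ)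
include hρ

lemma adj_iff {g h : G} : Adj ρ g h ↔ g⁻¹ * h ∈ sides ρ :=
  ⟨fun had => by simpa [sides] using hρ.adj_mul_left g⁻¹ had,
    fun hs => by simpa using hρ.adj_mul_left g hs⟩

lemma inv_mem_sides {s : G} (hs : s ∈ sides ρ) : s⁻¹ ∈ sides ρ := by
  simpa using hρ.adj_iff.mp (Adj.symm hs)

lemma inv_ne_self_of_mem_sides {s : G} (hs : s ∈ sides ρ) : s⁻¹ ≠ s := fun hinv =>
  ne_one_of_mem_sides hs <| hρ.torsionFree s <|
    isOfFinOrder_iff_pow_eq_one.mpr ⟨2, two_pos, by rw [sq, ← eq_inv_iff_mul_eq_one, hinv]⟩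

lemma isCorner_map (k : G) {x : Space} {g h : G} (hc : IsCorner ρ x g h) :
    IsCorner ρ (ρ k x) (k * g) (k * h) := by
  obtain ⟨hx, hs, j, hj, hjg, hjh⟩ := hc
  exact ⟨hρ.map_mem_cone _ _ hx, (hρ.cyclicSucc_map k).mpr hs, k * j,
    (hρ.mul_mem_nearest_map _ _ _).mpr hj, (mul_right_injective k).ne hjg,
    (mul_right_injective k).ne hjh⟩

lemma isCorner_one {x : Space} {g s : G} (hc : IsCorner ρ x g (g * s)) :
    IsCorner ρ (ρ g⁻¹ x) 1 s := by
  simpa using hρ.isCorner_map g⁻¹ hc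

lemma cornerSides_subset_sides : cornerSides ρ ⊆ sides ρ := by
  rintro s ⟨x, hx, hs, -⟩
  exact hρ.adj_of_cyclicSucc hx hs

lemma exists_turn (s : G) : ∃ t, ∀ x, IsCorner ρ x 1 s → CyclicSucc ρ x s (s * t) := by
  by_cases hs : s ∈ cornerSides ρ
  · obtain ⟨x, hx⟩ := hs
    obtain ⟨h, hh⟩ := hρ.exists_cyclicSucc hx.1 hx.2.1.2.1 hx.2.1.1 hx.2.1.2.2.1
    refine ⟨s⁻¹ * h, fun y hy => ?_⟩
    obtain ⟨c, hc, rfl⟩ := hρ.parallel_of_isCorner hx hy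
    rwa [cyclicSucc_smul hc, mul_inv_cancel_left]
  · exact ⟨1, fun x hx => absurd ⟨x, hx⟩ hs⟩

/-- Walking around the starting vertex of a side `s` of the central cell, one crosses `s` and then
the side `turn s` of the cell of `s`, seen from that cell. -/
noncomputable def turn (s : G) : G := (hρ.exists_turn s).choose

lemma isCorner_turn {x : Space} {g s : G} (hc : IsCorner ρ x g (g * s)) :
    IsCorner ρ x (g * s) (g * s * hρ.turn s) := by
  have hs := (hρ.exists_turn s).choose_spec _ (hρ.isCorner_one hc)
  refine hc.of_cyclicSucc ?_
  simpa [mul_assoc, turn] using (hρ.cyclicSucc_map g).mpr hs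

lemma turn_mem_cornerSides {s : G} (hs : s ∈ cornerSides ρ) : hρ.turn s ∈ cornerSides ρ := by
  obtain ⟨x, hx⟩ := hs
  exact ⟨_, hρ.isCorner_one (hρ.isCorner_turn (g := 1) (by simpa using hx))⟩

lemma iterate_turn_mem_cornerSides {s : G} (hs : s ∈ cornerSides ρ) (i : ℕ) :
    hρ.turn^[i] s ∈ cornerSides ρ :=
  Set.MapsTo.iterate (fun _ => hρ.turn_mem_cornerSides) i hs

lemma cyclicSucc_inv_one_of_isCorner_turn {s : G} {y : Space} (hs : s ∈ cornerSides ρ)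
    (hy : IsCorner ρ y 1 (hρ.turn s)) : CyclicSucc ρ y s⁻¹ 1 := by
  obtain ⟨x, hx⟩ := hs
  have hturn := hρ.isCorner_one (hρ.isCorner_turn (g := 1) (by simpa using hx))
  obtain ⟨c, hc, rfl⟩ := hρ.parallel_of_isCorner hturn hy
  rw [cyclicSucc_smul hc]
  simpa using (hρ.isCorner_map s⁻¹ hx).2.1

lemma injOn_turn : Set.InjOn hρ.turn (cornerSides ρ) := by
  intro s hs s' hs' heq
  obtain ⟨y, hy⟩ := hρ.turn_mem_cornerSides hs
  have hpred := hρ.cyclicSucc_inv_one_of_isCorner_turn hs hy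
  have hpred' := hρ.cyclicSucc_inv_one_of_isCorner_turn hs' (heq ▸ hy)
  exact inv_injective (hpred.left_unique hpred')

lemma isCorner_iterateProd_turn {x : Space} {g s : G} (hc : IsCorner ρ x g (g * s)) (i : ℕ) :
    IsCorner ρ x (g * iterateProd hρ.turn id s i) (g * iterateProd hρ.turn id s (i + 1)) := by
  induction i with
  | zero => simpa [iterateProd_zero, iterateProd_succ] using hc
  | succ i ih =>
    rw [iterateProd_succ, ← mul_assoc] at ih
    have hturn := hρ.isCorner_turn ih
    simpa only [iterateProd_succ _ _ _ (i + 1), iterateProd_succ, ← mul_assoc,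
      Function.iterate_succ_apply', id] using hturn

lemma turn_mem_periodicPts {s : G} (hs : s ∈ cornerSides ρ) : s ∈ Function.periodicPts hρ.turn := by
  obtain ⟨x, hx⟩ := id hs
  have hfin : (Set.image2 (fun a b : G => a⁻¹ * b) (nearest ρ x) (nearest ρ x)).Finite :=
    (hρ.finite_nearest hx.1).image2 _ (hρ.finite_nearest hx.1)
  have hmem (i : ℕ) : hρ.turn^[i] s ∈
      Set.image2 (fun a b : G => a⁻¹ * b) (nearest ρ x) (nearest ρ x) := by
    have hc := hρ.isCorner_iterateProd_turn (g := 1) (by simpa using hx) i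
    exact ⟨_, hc.2.1.1, _, hc.2.1.2.1, by simp [iterateProd_succ]⟩
  obtain ⟨i, -, j, -, hij, heq⟩ := Set.infinite_univ.exists_lt_map_eq_of_mapsTo
    (f := fun i : ℕ => hρ.turn^[i] s) (fun i _ => hmem i) hfin
  refine ⟨j - i, Nat.sub_pos_of_lt hij, ?_⟩
  refine hρ.injOn_turn.iterate (fun _ => hρ.turn_mem_cornerSides) i
    (hρ.iterate_turn_mem_cornerSides hs _) hs ?_
  rw [← Function.iterate_add_apply, Nat.add_sub_cancel' hij.le]
  exact heq.symm

lemma eq_one_of_map_eq_smul {x : Space} (hx : x ∈ cone) {c : ℝ} (hc : 0 < c) {g : G}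
    (hg : ρ g x = c • x) : g = 1 := by
  obtain ⟨h, hh⟩ := hρ.nearest_nonempty hx
  have hmem (i : ℕ) : g ^ i * h ∈ nearest ρ x := by
    induction i with
    | zero => simpa using hh
    | succ i ih => rwa [pow_succ', mul_assoc, ← nearest_smul hc, ← hg, hρ.mul_mem_nearest_map]
  refine hρ.torsionFree g (finite_powers.mp ?_)
  refine ((hρ.finite_nearest hx).image (· * h⁻¹)).subset ?_
  rintro _ ⟨i, rfl⟩
  exact ⟨_, hmem i, mul_inv_cancel_right _ _⟩

lemma iterateProd_turn_eq_one {s : G} (hs : s ∈ cornerSides ρ) {n : ℕ} (hn : hρ.turn^[n] s = s) :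
    iterateProd hρ.turn id s n = 1 := by
  obtain ⟨x, hx⟩ := hs
  have hcorner := hρ.isCorner_iterateProd_turn (g := 1) (by simpa using hx) n
  rw [one_mul, one_mul, iterateProd_succ, hn] at hcorner
  obtain ⟨c, hc, hfix⟩ := hρ.parallel_of_isCorner hx (hρ.isCorner_one hcorner)
  exact inv_eq_one.mp (hρ.eq_one_of_map_eq_smul hx.1 hc hfix)

lemma eq_of_forall_mul_side {α : Type*} (f : G → α) (hf : ∀ g, ∀ s ∈ sides ρ, f (g * s) = f g)
    (g h : G) : f g = f h := by
  refine hρ.eq_of_eq_on_nearest f (fun x hx g hg h hh => ?_) g h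
  have heq := hρ.eq_nearest_of_cyclicSucc_mem hx (C := {k | k ∈ nearest ρ x ∧ f g = f k})
    (fun k hk => hk.1) ⟨g, hg, rfl⟩ fun a ha b hb => ⟨hb.2.1, ?_⟩
  · exact (heq.ge hh).2
  · rw [ha.2, ← hf a _ (hρ.adj_iff.mp (hρ.adj_of_cyclicSucc hx hb)), mul_inv_cancel_left]

lemma closure_sides : Subgroup.closure (sides ρ) = ⊤ := by
  refine (Subgroup.eq_top_iff' _).mpr fun g => ?_
  have heq := hρ.eq_of_forall_mul_side (fun g => (g : G ⧸ Subgroup.closure (sides ρ)))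
    (fun g s hs => QuotientGroup.mk_mul_of_mem g (Subgroup.subset_closure hs)) 1 g
  simpa using QuotientGroup.eq.mp heq

end IsFuchsian

/-- Around `x`, the function `b` changes by `f s` whenever a side `s` is crossed. -/
def IsLocalPotential (ρ : Representation ℝ G Space) (f : G → K) (x : Space) (b : G → K) : Prop :=
  ∀ g h, CyclicSucc ρ x g h → b h = b g * f (g⁻¹ * h)

namespace IsFuchsian

variable (hρ : IsFuchsian ρ) {f : G → K}
include hρ

lemma exists_isLocalPotential_of_isCorner {x : Space} {g s : G} (hc : IsCorner ρ x g (g * s))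
    (hs : iterateProd hρ.turn f s (Function.minimalPeriod hρ.turn s) = 1) :
    ∃ b, IsLocalPotential ρ f x b := by
  set cell : ℕ → G := fun i => g * iterateProd hρ.turn id s i with hcell
  have hsucc (i : ℕ) : CyclicSucc ρ x (cell i) (cell (i + 1)) :=
    (hρ.isCorner_iterateProd_turn hc i).2.1
  have hstep (i : ℕ) : (cell i)⁻¹ * cell (i + 1) = hρ.turn^[i] s := by
    simp only [hcell, iterateProd_succ, id]
    group
  have hrange : Set.range cell = nearest ρ x := by
    refine hρ.eq_nearest_of_cyclicSucc_mem hc.1 ?_ (Set.range_nonempty _) ?_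
    · rintro _ ⟨i, rfl⟩
      exact (hsucc i).1
    · rintro _ ⟨i, rfl⟩ h hh
      exact ⟨i + 1, (hsucc i).right_unique hh⟩
  have hfactors : Function.FactorsThrough (iterateProd hρ.turn f s) cell := by
    intro i j hij
    have hij' : cell (i + 1) = cell (j + 1) := (hij ▸ hsucc i).right_unique (hsucc j)
    have hiter : hρ.turn^[i] s = hρ.turn^[j] s := by rw [← hstep, ← hstep, hij, hij']
    have hpos := Function.minimalPeriod_pos_of_mem_periodicPts
      (hρ.turn_mem_periodicPts ⟨_, hρ.isCorner_one hc⟩)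
    have hmod : i % Function.minimalPeriod hρ.turn s = j % Function.minimalPeriod hρ.turn s := by
      rw [← Function.iterate_eq_iterate_iff_of_lt_minimalPeriod (Nat.mod_lt _ hpos)
        (Nat.mod_lt _ hpos), Function.iterate_mod_minimalPeriod_eq,
        Function.iterate_mod_minimalPeriod_eq, hiter]
    have hper := Function.iterate_minimalPeriod (f := hρ.turn) (x := s)
    rw [← iterateProd_mod hper hs i, ← iterateProd_mod hper hs j, hmod]
  refine ⟨Function.extend cell (iterateProd hρ.turn f s) 1, fun a b hab => ?_⟩
  obtain ⟨i, rfl⟩ := hrange.ge hab.1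
  obtain rfl := (hsucc i).right_unique hab
  rw [hfactors.extend_apply, hfactors.extend_apply, iterateProd_succ, hstep]

lemma map_inv_mul_comm (hf : ∀ s ∈ sides ρ, f s⁻¹ = (f s)⁻¹) {x : Space} (hx : x ∈ cone) {g h : G}
    (hs : CyclicSucc ρ x g h) : f (h⁻¹ * g) = (f (g⁻¹ * h))⁻¹ := by
  rw [← hf _ (hρ.adj_iff.mp (hρ.adj_of_cyclicSucc hx hs)), mul_inv_rev, inv_inv]

lemma exists_isLocalPotential_of_pair (hf : ∀ s ∈ sides ρ, f s⁻¹ = (f s)⁻¹) {x : Space}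
    (hx : x ∈ cone) {g h : G} (hs : CyclicSucc ρ x g h) (hpair : ∀ k ∈ nearest ρ x, k ≠ g → k = h) :
    ∃ b, IsLocalPotential ρ f x b := by
  classical
  refine ⟨fun k => if k = g then 1 else f (g⁻¹ * h), fun a b hab => ?_⟩
  obtain rfl | hag := eq_or_ne a g
  · obtain rfl := hpair b hab.2.1 hab.2.2.1.symm
    simp [hab.2.2.1.symm]
  · obtain rfl := hpair a hab.1 hag
    obtain rfl : b = g := by
      by_contra hbg
      exact hab.2.2.1 (hpair b hab.2.1 hbg).symm
    simp [hag, hρ.map_inv_mul_comm hf hx hs]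

lemma exists_isLocalPotential (hf : ∀ s ∈ sides ρ, f s⁻¹ = (f s)⁻¹)
    (hcycle : ∀ s ∈ cornerSides ρ, ∃ i, iterateProd hρ.turn f (hρ.turn^[i] s)
      (Function.minimalPeriod hρ.turn (hρ.turn^[i] s)) = 1) {x : Space} (hx : x ∈ cone) :
    ∃ b, IsLocalPotential ρ f x b := by
  by_cases hedge : ∃ g h, CyclicSucc ρ x g h
  · obtain ⟨g, h, hs⟩ := hedge
    by_cases hpair : ∀ k ∈ nearest ρ x, k ≠ g → k = h
    · exact hρ.exists_isLocalPotential_of_pair hf hx hs hpair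
    · push Not at hpair
      have hc : IsCorner ρ x g (g * (g⁻¹ * h)) := by
        rw [mul_inv_cancel_left]
        exact ⟨hx, hs, hpair⟩
      obtain ⟨i, hi⟩ := hcycle _ ⟨_, hρ.isCorner_one hc⟩
      have hi' := hρ.isCorner_iterateProd_turn hc i
      rw [iterateProd_succ, ← mul_assoc] at hi'
      exact hρ.exists_isLocalPotential_of_isCorner hi' hi
  · push Not at hedge
    exact ⟨1, fun g h hs => absurd hs (hedge g h)⟩

lemma inv_mul_eq_of_isLocalPotential (hf : ∀ s ∈ sides ρ, f s⁻¹ = (f s)⁻¹) {x : Space}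
    (hx : x ∈ cone) {b : G → K} (hb : IsLocalPotential ρ f x b) {g h : G}
    (hs : CyclicSucc ρ x g h ∨ CyclicSucc ρ x h g) : (b g)⁻¹ * b h = f (g⁻¹ * h) := by
  rcases hs with hs | hs
  · rw [hb g h hs, inv_mul_cancel_left]
  · rw [hb h g hs, hρ.map_inv_mul_comm hf hx hs]
    group

lemma isLocalPotential_unique (hf : ∀ s ∈ sides ρ, f s⁻¹ = (f s)⁻¹) {x x' : Space} (hx : x ∈ cone)
    (hx' : x' ∈ cone) {b b' : G → K} (hb : IsLocalPotential ρ f x b)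
    (hb' : IsLocalPotential ρ f x' b') {g h : G} (hg : g ∈ nearest ρ x) (hh : h ∈ nearest ρ x)
    (hg' : g ∈ nearest ρ x') (hh' : h ∈ nearest ρ x') : (b g)⁻¹ * b h = (b' g)⁻¹ * b' h := by
  obtain rfl | hgh := eq_or_ne g h
  · rw [inv_mul_cancel, inv_mul_cancel]
  rcases hρ.parallel_or_cyclicSucc hx hx' hgh hg hh hg' hh' with ⟨c, hc, rfl⟩ | hs | hs
  · have heq := hρ.eq_nearest_of_cyclicSucc_mem hx
      (C := {k | k ∈ nearest ρ x ∧ (b g)⁻¹ * b k = (b' g)⁻¹ * b' k})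
      (fun k hk => hk.1) ⟨g, hg, by rw [inv_mul_cancel, inv_mul_cancel]⟩
      fun u hu v hv => ⟨hv.2.1, ?_⟩
    · exact (heq.ge hh).2
    · rw [hb u v hv, hb' u v ((cyclicSucc_smul hc).mpr hv), ← mul_assoc, ← mul_assoc, hu.2]
  · rw [hρ.inv_mul_eq_of_isLocalPotential hf hx hb (.inl hs.1),
      hρ.inv_mul_eq_of_isLocalPotential hf hx' hb' (.inr hs.2)]
  · rw [hρ.inv_mul_eq_of_isLocalPotential hf hx hb (.inr hs.1),
      hρ.inv_mul_eq_of_isLocalPotential hf hx' hb' (.inl hs.2)]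

lemma exists_isCocycle (hf : ∀ s ∈ sides ρ, f s⁻¹ = (f s)⁻¹)
    (hpot : ∀ x ∈ cone, ∃ b, IsLocalPotential ρ f x b) :
    ∃ c : G → G → K, IsCocycle ρ c ∧
      ∀ x ∈ cone, ∀ g h, CyclicSucc ρ x g h → c g h = f (g⁻¹ * h) := by
  choose! b hb using hpot
  let common (g h : G) (x : Space) : Prop := x ∈ cone ∧ g ∈ nearest ρ x ∧ h ∈ nearest ρ x
  let c (g h : G) : K :=
    (b (Classical.epsilon (common g h)) g)⁻¹ * b (Classical.epsilon (common g h)) h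
  have hc (x : Space) (hx : x ∈ cone) (g : G) (hg : g ∈ nearest ρ x) (h : G)
      (hh : h ∈ nearest ρ x) : c g h = (b x g)⁻¹ * b x h := by
    obtain ⟨hy, hgy, hhy⟩ := Classical.epsilon_spec (p := common g h) ⟨x, hx, hg, hh⟩
    exact hρ.isLocalPotential_unique hf hy hx (hb _ hy) (hb x hx) hgy hhy hg hh
  refine ⟨c, fun x hx g hg h hh k hk => ?_, fun x hx g h hs => ?_⟩
  · rw [hc x hx g hg h hh, hc x hx h hh k hk, hc x hx g hg k hk]
    group
  · rw [hc x hx g hs.1 h hs.2.1, hρ.inv_mul_eq_of_isLocalPotential hf hx (hb x hx) (.inl hs)]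

lemma exists_monoidHom_of_mul_side {b : G → K} (hb : ∀ g, ∀ s ∈ sides ρ, b (g * s) = b g * f s) :
    ∃ F : G →* K, ∀ s ∈ sides ρ, F s = f s := by
  have hmul (k g : G) : b (k * g) = b k * (b 1)⁻¹ * b g := by
    have heq := hρ.eq_of_forall_mul_side (fun g => b (k * g) * (b g)⁻¹) (fun g s hs => by
      rw [← mul_assoc, hb _ s hs, hb _ s hs]
      group) g 1
    rw [mul_one] at heq
    rw [← heq, inv_mul_cancel_right]
  refine ⟨MonoidHom.mk' (fun g => (b 1)⁻¹ * b g) fun g h => ?_, fun s hs => ?_⟩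
  · rw [hmul g h]
    group
  · have hs1 := hb 1 s hs
    rw [one_mul] at hs1
    exact inv_mul_eq_of_eq_mul hs1

/-- Poincaré's polygon theorem. -/
lemma exists_monoidHom (hf : ∀ s ∈ sides ρ, f s⁻¹ = (f s)⁻¹)
    (hcycle : ∀ s ∈ cornerSides ρ, ∃ i, iterateProd hρ.turn f (hρ.turn^[i] s)
      (Function.minimalPeriod hρ.turn (hρ.turn^[i] s)) = 1) :
    ∃ F : G →* K, ∀ s ∈ sides ρ, F s = f s := by
  obtain ⟨c, hc, hcf⟩ := hρ.exists_isCocycle hf fun x => hρ.exists_isLocalPotential hf hcycle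
  obtain ⟨b, hb⟩ := hρ.exists_potential hc
  refine hρ.exists_monoidHom_of_mul_side (b := b) fun g s hs => ?_
  obtain ⟨x, hx, hpair, hne⟩ : Adj ρ g (g * s) := hρ.adj_iff.mpr (by simpa using hs)
  have hsucc : CyclicSucc ρ x g (g * s) := by
    refine ⟨by simp [hpair], by simp [hpair], hne, fun k hk hkg hkh => ?_⟩
    simp [hpair, hkg, hkh] at hk
  rw [hb x hx g hsucc.1 _ hsucc.2.1, hcf x hx _ _ hsucc, inv_mul_cancel_left]

end IsFuchsian

end Voronoi

/-! ### Cells bounded by closed chains of sides -/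

namespace Minkowski

/-- The affine chart of the Klein model: the rays in `cone` correspond to the points of the open
unit disc, and `origin` to its centre. -/
def klein (w : ℝ × ℝ) : Space := ![1 + w.1, w.2, 1 - w.1]

lemma klein_zero : klein 0 = origin := by simp [klein, origin]

lemma continuous_klein : Continuous klein := by
  refine continuous_pi fun i => ?_
  fin_cases i <;> simp only [klein] <;> fun_prop

lemma klein_injective : Function.Injective klein := by
  intro w w' h
  have h0 := congrFun h 0
  have h1 := congrFun h 1
  simp only [klein, Matrix.cons_val_zero, Matrix.cons_val_one, add_right_inj] at h0 h1
  exact Prod.ext h0 h1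

lemma klein_combination {a b : ℝ} (h : a + b = 1) (w w' : ℝ × ℝ) :
    klein (a • w + b • w') = a • klein w + b • klein w' := by
  obtain rfl : a = 1 - b := by linarith
  ext i
  fin_cases i <;> simp [klein] <;> ring

lemma klein_smul (u : ℝ) (w : ℝ × ℝ) : klein (u • w) = (1 - u) • origin + u • klein w := by
  simpa [klein_zero] using klein_combination (sub_add_cancel 1 u) 0 w

lemma form_origin_klein (w : ℝ × ℝ) : form origin (klein w) = 1 := by
  simp [form_origin, klein]

lemma form_klein_self (w : ℝ × ℝ) : form (klein w) (klein w) = 1 - (w.1 ^ 2 + w.2 ^ 2) := by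
  simp [form_apply, klein]; ring

lemma exists_eq_smul_klein {X : Space} (hX : X ∈ cone) :
    ∃ w, klein w ∈ cone ∧ X = form origin X • klein w := by
  have h0 := hX.1
  have h2 := last_pos_of_mem_cone hX
  have hpos := form_pos origin_mem_cone hX
  have heq : X = form origin X • klein ((X 0 - X 2) / (X 0 + X 2), 2 * X 1 / (X 0 + X 2)) := by
    ext i
    fin_cases i <;> simp [form_origin, klein] <;> field_simp <;> ring
  refine ⟨_, ?_, heq⟩
  rw [← inv_smul_eq_iff₀ hpos.ne'] at heq
  exact heq ▸ smul_mem_cone hX (inv_pos.mpr hpos)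

lemma eq_of_klein_eq_smul {w w' : ℝ × ℝ} {c : ℝ} (h : klein w = c • klein w') : w = w' := by
  have hc := congrArg (form origin) h
  rw [map_smul, form_origin_klein, form_origin_klein, smul_eq_mul, mul_one] at hc
  rw [← hc, one_smul] at h
  exact klein_injective h

lemma exists_add_smul_eq_combination (x n : Space) {t t' : ℝ} (ht : 0 ≤ t) (htt : t ≤ t') :
    ∃ a b : ℝ, 0 ≤ a ∧ 0 ≤ b ∧ x + t • n = a • x + b • (x + t' • n) := by
  have hmul : t / t' * t' = t := div_mul_cancel_of_imp fun h => by linarith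
  refine ⟨1 - t / t', t / t', sub_nonneg.mpr (div_le_one_of_le₀ htt (ht.trans htt)),
    div_nonneg ht (ht.trans htt), ?_⟩
  rw [smul_add, smul_smul, hmul, ← add_assoc, ← add_smul, sub_add_cancel, one_smul]

end Minkowski

namespace Voronoi

open Minkowski Filter
open scoped Topology

variable {G : Type*} [Group G] {ρ : Representation ℝ G Space} {s k : G} {w : ℝ × ℝ}

/-- The side of the central cell along which it meets the cell of `s`, in the Klein model. -/
def side (ρ : Representation ℝ G Space) (s : G) : Set (ℝ × ℝ) :=
  {w | klein w ∈ cone ∧ 1 ∈ nearest ρ (klein w) ∧ s ∈ nearest ρ (klein w)}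

/-- The union of the open rays from the centre of the Klein model which meet a side in `C`. -/
def sideRays (ρ : Representation ℝ G Space) (C : Set G) : Set (ℝ × ℝ) :=
  {w | ∃ u : ℝ, 0 < u ∧ ∃ s ∈ C, u • w ∈ side ρ s}

/-- The amount by which the cell of `k` is further away from `w` than the central cell. -/
noncomputable def gap (ρ : Representation ℝ G Space) (k : G) (w : ℝ × ℝ) : ℝ :=
  form (klein w) (ρ k origin) - form (klein w) origin

/-- The ray from the centre through `w` meets the bisector of the centre and `ρ k origin` in
`hitTime ρ k w • w`. -/
noncomputable def hitTime (ρ : Representation ℝ G Space) (k : G) (w : ℝ × ℝ) : ℝ :=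
  gap ρ k 0 / (gap ρ k 0 - gap ρ k w)

lemma gap_smul (k : G) (u : ℝ) (w : ℝ × ℝ) :
    gap ρ k (u • w) = gap ρ k 0 - u * (gap ρ k 0 - gap ρ k w) := by
  simp only [gap, klein_smul, klein_zero, map_add, map_smul, LinearMap.add_apply,
    LinearMap.smul_apply, smul_eq_mul]
  ring

lemma continuous_gap (k : G) : Continuous (gap ρ k) :=
  ((continuous_form_left _).comp continuous_klein).sub
    ((continuous_form_left _).comp continuous_klein)

lemma gap_nonneg (h : 1 ∈ nearest ρ (klein w)) (k : G) : 0 ≤ gap ρ k w := by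
  simpa [gap] using h k

lemma gap_eq_zero (h : 1 ∈ nearest ρ (klein w)) (hk : k ∈ nearest ρ (klein w)) :
    gap ρ k w = 0 := by
  simpa [gap, sub_eq_zero] using form_eq_of_mem_nearest hk h

lemma one_mem_nearest_of_gap_nonneg (hk : k ∈ nearest ρ (klein w)) (h : 0 ≤ gap ρ k w) :
    1 ∈ nearest ρ (klein w) :=
  mem_nearest_of_form_eq hk (le_antisymm (by simpa [gap] using h) (hk 1))

lemma mem_nearest_of_gap_eq_zero (h : 1 ∈ nearest ρ (klein w)) (hk : gap ρ k w = 0) :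
    k ∈ nearest ρ (klein w) :=
  mem_nearest_of_form_eq h (by simpa [gap, sub_eq_zero] using hk)

lemma convex_side (s : G) : Convex ℝ (side ρ s) := by
  rintro w ⟨hw, h1, hs⟩ w' ⟨hw', h1', hs'⟩ a b ha hb hab
  rw [side, Set.mem_ofPred_eq, klein_combination hab]
  have hcell := convex_cell (ρ := ρ) 1 ⟨hw, h1⟩ ⟨hw', h1'⟩ ha hb hab
  exact ⟨hcell.1, hcell.2, (convex_cell (ρ := ρ) s ⟨hw, hs⟩ ⟨hw', hs'⟩ ha hb hab).2⟩

lemma IsCorner.exists_klein {x : Space} {g h : G} (hc : IsCorner ρ x g h) :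
    ∃ w, IsCorner ρ (klein w) g h := by
  obtain ⟨w, hw, heq⟩ := exists_eq_smul_klein hc.1
  have hpos := form_pos origin_mem_cone hc.1
  obtain ⟨-, hs, hk⟩ := hc
  rw [heq, cyclicSucc_smul hpos] at hs
  rw [heq, nearest_smul hpos] at hk
  exact ⟨w, hw, hs, hk⟩

lemma isClosed_rays {K : Set (ℝ × ℝ)} (hK : IsCompact K) :
    IsClosed {w : ℝ × ℝ | ∃ k ∈ K, ‖k‖ • w = ‖w‖ • k} := by
  have : CompactSpace K := isCompact_iff_compactSpace.mp hK
  have hclosed : IsClosed {q : (ℝ × ℝ) × K | ‖(q.2 : ℝ × ℝ)‖ • q.1 = ‖q.1‖ • (q.2 : ℝ × ℝ)} :=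
    isClosed_eq (by fun_prop) (by fun_prop)
  convert isClosedMap_fst_of_compactSpace _ hclosed
  ext w
  simp

namespace IsFuchsian

variable (hρ : IsFuchsian ρ)
include hρ

lemma gap_zero_pos (hk : k ≠ 1) : 0 < gap ρ k 0 := by
  have hlt := one_lt_form origin_mem_cone (hρ.map_origin_mem_cone k) form_origin_self
    (hρ.form_map_origin_self k) (by simpa using hρ.map_origin_injective.ne hk.symm)
  rw [gap, klein_zero, form_origin_self]
  linarith

lemma eventually_hitTime {q : ℝ × ℝ} (hq : klein q ∈ cone) (h1 : 1 ∈ nearest ρ (klein q))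
    (hk : k ∈ nearest ρ (klein q)) (hk1 : k ≠ 1) :
    ∀ᶠ w in 𝓝 q, 0 < hitTime ρ k w ∧ 0 < gap ρ k 0 - gap ρ k w ∧
      klein (hitTime ρ k w • w) ∈ cone ∧
      nearest ρ (klein (hitTime ρ k w • w)) ⊆ nearest ρ (klein q) := by
  have hpos := hρ.gap_zero_pos hk1
  have hgap : gap ρ k 0 - gap ρ k q = gap ρ k 0 := by rw [gap_eq_zero h1 hk, sub_zero]
  have hhit : hitTime ρ k q = 1 := by rw [hitTime, hgap, div_self hpos.ne']
  have hgapc : ContinuousAt (fun w => gap ρ k 0 - gap ρ k w) q :=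
    (continuous_const.sub (continuous_gap k)).continuousAt
  have hhitc : ContinuousAt (hitTime ρ k) q :=
    continuousAt_const.div hgapc (by rw [hgap]; exact hpos.ne')
  have hkleinc : ContinuousAt (fun w => klein (hitTime ρ k w • w)) q :=
    continuous_klein.continuousAt.comp (hhitc.smul continuousAt_id)
  have hnear : ∀ᶠ X in 𝓝 (klein (hitTime ρ k q • q)),
      X ∈ cone ∧ nearest ρ X ⊆ nearest ρ (klein q) := by
    rw [hhit, one_smul]
    exact hρ.eventually_nearest_subset hq
  filter_upwards [hhitc.eventually_const_lt (hhit ▸ one_pos),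
    hgapc.eventually_const_lt (hgap.symm ▸ hpos), hkleinc.eventually hnear] with w hw hw' hw''
  exact ⟨hw, hw', hw''⟩

lemma eventually_exists_smul_mem_side {q : ℝ × ℝ} (hs1 : s ≠ 1) (hq : q ∈ side ρ s) :
    ∀ᶠ w in 𝓝 q, ∃ u : ℝ, 0 < u ∧ ∃ k ∈ nearest ρ (klein q), k ≠ 1 ∧ u • w ∈ side ρ k := by
  obtain ⟨hqc, h1, hs⟩ := hq
  have hfin : (nearest ρ (klein q) \ {1}).Finite := (hρ.finite_nearest hqc).subset Set.sdiff_subset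
  have hall := (eventually_all_finite hfin).mpr fun k hk => hρ.eventually_hitTime hqc h1 hk.1 hk.2
  filter_upwards [hall] with w hw
  -- The ray leaves the central cell through the bisector which it meets first.
  obtain ⟨k, hk, hmin⟩ := Set.exists_min_image _ (hitTime ρ · w) hfin ⟨s, hs, hs1⟩
  obtain ⟨hpos, hgap, hcone, hsub⟩ := hw k hk
  have hone : 1 ∈ nearest ρ (klein (hitTime ρ k w • w)) := by
    obtain ⟨j, hj⟩ := hρ.nearest_nonempty hcone
    obtain rfl | hj1 := eq_or_ne j 1
    · exact hj
    refine one_mem_nearest_of_gap_nonneg hj ?_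
    have hle := hmin j ⟨hsub hj, hj1⟩
    rw [hitTime, hitTime, ← hitTime, le_div_iff₀ (hw j ⟨hsub hj, hj1⟩).2.1] at hle
    rw [gap_smul]
    exact sub_nonneg.mpr hle
  refine ⟨hitTime ρ k w, hpos, k, hk.1, hk.2, hcone, hone, mem_nearest_of_gap_eq_zero hone ?_⟩
  rw [gap_smul, hitTime, div_mul_cancel₀ _ hgap.ne', sub_self]

lemma le_one_of_mem_side {u : ℝ} (hk : k ≠ 1) (hw : w ∈ side ρ k)
    (h1 : 1 ∈ nearest ρ (klein (u • w))) : u ≤ 1 := by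
  have hle := gap_nonneg h1 k
  rw [gap_smul, gap_eq_zero hw.2.1 hw.2.2, sub_zero, ← one_sub_mul] at hle
  exact sub_nonneg.mp (nonneg_of_mul_nonneg_left hle (hρ.gap_zero_pos hk))

lemma one_le_of_smul_mem_side {u : ℝ} (hu : 0 < u) (hs : s ≠ 1) (hw : u • w ∈ side ρ s)
    (h1 : 1 ∈ nearest ρ (klein w)) : 1 ≤ u := by
  rw [← inv_le_one₀ hu]
  exact hρ.le_one_of_mem_side hs hw (by rwa [inv_smul_smul₀ hu.ne'])

lemma ne_zero_of_mem_side (hs : s ≠ 1) (hw : w ∈ side ρ s) : w ≠ 0 := by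
  rintro rfl
  exact (hρ.gap_zero_pos hs).ne' (gap_eq_zero hw.2.1 hw.2.2)

lemma exists_combination_of_isCorner {g h : G} {x y z : Space} (hx : IsCorner ρ x g h)
    (hy : IsCorner ρ y h g) (hz : z ∈ cone) (hg : g ∈ nearest ρ z) (hh : h ∈ nearest ρ z) :
    ∃ a b : ℝ, 0 ≤ a ∧ 0 ≤ b ∧ z = a • x + b • y := by
  obtain ⟨hxc, hxs, k, hk, hkg, hkh⟩ := hx
  obtain ⟨hyc, hys, j, hj, hjh, hjg⟩ := hy
  have hbisector {y : Space} (hy : y ∈ cone) (hg' : g ∈ nearest ρ y) (hh' : h ∈ nearest ρ y) :=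
    exists_eq_smul_add_cross hxc hy (hρ.map_origin_mem_cone g) (hρ.map_origin_mem_cone h)
      (hρ.form_map_origin_self g) (hρ.form_map_origin_self h)
      (hρ.map_origin_injective.ne hxs.2.2.1) (form_eq_of_mem_nearest hxs.1 hxs.2.1)
      (form_eq_of_mem_nearest hg' hh')
  obtain ⟨c, t, hc, rfl⟩ := hbisector hz hg hh
  obtain ⟨c', t', hc', rfl⟩ := hbisector hyc hys.2.1 hys.1
  rw [nearest_smul hc] at hg
  rw [cyclicSucc_smul hc'] at hys
  rw [nearest_smul hc'] at hj
  have hzle (l : G) : form x (ρ g origin) ≤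
      form x (ρ l origin) + t * vol (ρ g origin) (ρ h origin) (ρ l origin) := by
    simpa only [form_add_smul_cross_left, form_add_smul_cross] using hg l
  have ht : 0 ≤ t := by
    have hle := hzle k
    rw [form_eq_of_mem_nearest hk hxs.1, le_add_iff_nonneg_right] at hle
    exact nonneg_of_mul_nonneg_left hle (hxs.2.2.2 k hk hkg hkh)
  have htt : t ≤ t' := by
    have heq := form_eq_of_mem_nearest hys.2.1 hj
    rw [form_add_smul_cross_left, form_add_smul_cross] at heq
    have hvol := hys.2.2.2 j hj hjh hjg
    rw [vol_swap_left, neg_pos] at hvol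
    exact (mul_le_mul_right_of_neg hvol).mp (by linarith [hzle j])
  obtain ⟨a, b, ha, hb, hab⟩ := exists_add_smul_eq_combination x (cross (ρ g origin) (ρ h origin))
    ht htt
  refine ⟨c * a, c * b * c'⁻¹, by positivity, by positivity, ?_⟩
  rw [hab, smul_add, smul_smul, smul_smul, smul_smul, inv_mul_cancel_right₀ hc'.ne']

lemma isCompact_side (hs : s ∈ cornerSides ρ) (hs' : s⁻¹ ∈ cornerSides ρ) :
    IsCompact (side ρ s) := by
  obtain ⟨x, hx⟩ := hs
  obtain ⟨y, hy⟩ := hs'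
  have hy' := hρ.isCorner_map s hy
  rw [mul_one, mul_inv_cancel] at hy'
  obtain ⟨v, hv⟩ := hx.exists_klein
  obtain ⟨v', hv'⟩ := hy'.exists_klein
  have hsegment : side ρ s = segment ℝ v v' := by
    refine Set.Subset.antisymm ?_ ((convex_side s).segment_subset ⟨hv.1, hv.2.1.1, hv.2.1.2.1⟩
      ⟨hv'.1, hv'.2.1.2.1, hv'.2.1.1⟩)
    rintro w ⟨hw, h1, hs⟩
    obtain ⟨a, b, ha, hb, heq⟩ := hρ.exists_combination_of_isCorner hv hv' hw h1 hs
    have hab : a + b = 1 := by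
      simpa [form_origin_klein] using (congrArg (form origin) heq).symm
    rw [← klein_combination hab] at heq
    exact ⟨a, b, ha, hb, hab, (klein_injective heq).symm⟩
  rw [hsegment, segment_eq_image_lineMap]
  exact isCompact_Icc.image AffineMap.lineMap_continuous

lemma mem_sideRays_iff {C : Set G} (hC : ∀ s ∈ C, s ≠ 1) (hw : w ≠ 0) :
    w ∈ sideRays ρ C ↔ w ∈ ⋃ s ∈ C, {w : ℝ × ℝ | ∃ k ∈ side ρ s, ‖k‖ • w = ‖w‖ • k} := by
  have hnorm : 0 < ‖w‖ := norm_pos_iff.mpr hw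
  simp only [Set.mem_iUnion]
  constructor
  · rintro ⟨u, hu, s, hs, hk⟩
    exact ⟨s, hs, u • w, hk, by rw [norm_smul, Real.norm_of_nonneg hu.le, smul_smul, mul_comm]⟩
  · rintro ⟨s, hs, k, hk, heq⟩
    refine ⟨‖k‖ / ‖w‖, div_pos (norm_pos_iff.mpr (hρ.ne_zero_of_mem_side (hC s hs) hk)) hnorm, s,
      hs, ?_⟩
    rwa [div_eq_inv_mul, mul_smul, heq, inv_smul_smul₀ hnorm.ne']

/-- A finite nonempty set of sides which contains with each side its two neighbours on the boundary
of the central cell. -/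
structure IsClosedChain (C : Set G) : Prop where
  finite : C.Finite
  nonempty : C.Nonempty
  subset_cornerSides : C ⊆ cornerSides ρ
  inv_mem_cornerSides : ∀ s ∈ C, s⁻¹ ∈ cornerSides ρ
  inv_mem_of_turn_mem : ∀ s ∈ cornerSides ρ, hρ.turn s ∈ C → s⁻¹ ∈ C
  turn_inv_mem : ∀ s ∈ C, hρ.turn s⁻¹ ∈ C

end IsFuchsian

namespace IsFuchsian.IsClosedChain

variable {hρ : IsFuchsian ρ} {C : Set G} (hC : hρ.IsClosedChain C)
include hC

lemma ne_one (hs : s ∈ C) : s ≠ 1 :=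
  ne_one_of_mem_sides (hρ.cornerSides_subset_sides (hC.subset_cornerSides hs))

lemma mem_of_isCorner_one {x : Space} (hs : s ∈ C) (hc : IsCorner ρ x 1 s)
    (hk : CyclicSucc ρ x 1 k ∨ CyclicSucc ρ x k 1) : k ∈ C := by
  rcases hk with hk | hk
  · rwa [hk.right_unique hc.2.1]
  · have hkc : IsCorner ρ x k (k * k⁻¹) := by simpa using hc.of_cyclicSucc hk
    have hturn := hρ.isCorner_turn hkc
    rw [mul_inv_cancel, one_mul] at hturn
    have := hC.inv_mem_of_turn_mem k⁻¹ ⟨_, hρ.isCorner_one hkc⟩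
      (by rwa [hturn.2.1.right_unique hc.2.1])
    rwa [inv_inv] at this

lemma mem_of_isCorner {x : Space} (hs : s ∈ C) (hc : IsCorner ρ x s 1)
    (hk : CyclicSucc ρ x 1 k ∨ CyclicSucc ρ x k 1) : k ∈ C := by
  rcases hk with hk | hk
  · have hturn := hρ.isCorner_turn (g := s) (s := s⁻¹) (by simpa using hc)
    rw [mul_inv_cancel, one_mul] at hturn
    rw [hk.right_unique hturn.2.1]
    exact hC.turn_inv_mem s hs
  · rwa [hk.left_unique hc.2.1]

lemma mem_of_cyclicSucc {x : Space} (hx : x ∈ cone) (hs : s ∈ C) (h1 : 1 ∈ nearest ρ x)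
    (hsx : s ∈ nearest ρ x) (hk : CyclicSucc ρ x 1 k ∨ CyclicSucc ρ x k 1) : k ∈ C := by
  obtain ⟨y, hy⟩ := hC.subset_cornerSides hs
  have hs' : CyclicSucc ρ x 1 s ∨ CyclicSucc ρ x s 1 := by
    rcases hρ.parallel_or_cyclicSucc hy.1 hx (hC.ne_one hs).symm hy.2.1.1 hy.2.1.2.1 h1 hsx with
      ⟨c, hc, rfl⟩ | h | h
    · exact .inl ((cyclicSucc_smul hc).mpr hy.2.1)
    · exact .inr h.2
    · exact .inl h.2
  by_cases hpair : ∀ j ∈ nearest ρ x, j ≠ 1 → j = s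
  · obtain rfl : k = s := by
      rcases hk with hk | hk
      · exact hpair k hk.2.1 hk.2.2.1.symm
      · exact hpair k hk.1 hk.2.2.1
    exact hs
  · push Not at hpair
    obtain ⟨j, hj, hj1, hjs⟩ := hpair
    rcases hs' with hs' | hs'
    · exact hC.mem_of_isCorner_one hs ⟨hx, hs', j, hj, hj1, hjs⟩ hk
    · exact hC.mem_of_isCorner hs ⟨hx, hs', j, hj, hjs, hj1⟩ hk

lemma eventually_mem_sideRays {q : ℝ × ℝ} (hs : s ∈ C) (hq : q ∈ side ρ s) :
    ∀ᶠ w in 𝓝 q, w ∈ sideRays ρ C := by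
  filter_upwards [hρ.eventually_exists_smul_mem_side (hC.ne_one hs) hq]
    with w ⟨u, hu, k, hk, hk1, hw⟩
  obtain ⟨hqc, hq1, hqs⟩ := id hq
  rcases hρ.parallel_or_cyclicSucc hqc hw.1 hk1.symm hq1 hk hw.2.1 hw.2.2 with ⟨c, -, heq⟩ | h | h
  · exact ⟨u, hu, s, hs, by rwa [eq_of_klein_eq_smul heq]⟩
  · exact ⟨u, hu, k, hC.mem_of_cyclicSucc hqc hs hq1 hqs (.inl h.1), hw⟩
  · exact ⟨u, hu, k, hC.mem_of_cyclicSucc hqc hs hq1 hqs (.inr h.1), hw⟩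

lemma isOpen_sideRays : IsOpen (sideRays ρ C) := by
  refine isOpen_iff_mem_nhds.mpr fun w ⟨u, hu, s, hs, hw⟩ => ?_
  filter_upwards [(continuous_const_smul u).continuousAt.eventually
    (hC.eventually_mem_sideRays hs hw)] with w' ⟨u', hu', s', hs', hw'⟩
  rw [smul_smul] at hw'
  exact ⟨u' * u, mul_pos hu' hu, s', hs', hw'⟩

lemma exists_mem_side : ∃ s ∈ C, ∃ q, q ∈ side ρ s := by
  obtain ⟨s, hs⟩ := hC.nonempty
  obtain ⟨x, hx⟩ := hC.subset_cornerSides hs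
  obtain ⟨q, hq⟩ := hx.exists_klein
  exact ⟨s, hs, q, hq.1, hq.2.1.1, hq.2.1.2.1⟩

/-- The sides in `C` are seen in every direction because the union of the corresponding rays is
open and closed in the connected space `ℝ² \ {0}`. -/
lemma mem_sideRays (hw : w ≠ 0) : w ∈ sideRays ρ C := by
  have hne (s : G) (hs : s ∈ C) : s ≠ 1 := hC.ne_one hs
  have hclosed : IsClosed (⋃ s ∈ C, {w : ℝ × ℝ | ∃ k ∈ side ρ s, ‖k‖ • w = ‖w‖ • k}) :=
    hC.finite.isClosed_biUnion fun s hs =>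
      isClosed_rays (hρ.isCompact_side (hC.subset_cornerSides hs) (hC.inv_mem_cornerSides s hs))
  have hrank : 1 < Module.rank ℝ (ℝ × ℝ) := by simp [← Module.finrank_eq_rank]
  have hconn := (isConnected_compl_singleton_of_one_lt_rank hrank 0).isPreconnected
  obtain ⟨s, hs, q, hq⟩ := hC.exists_mem_side
  have hq0 : q ≠ 0 := hρ.ne_zero_of_mem_side (hC.ne_one hs) hq
  refine hconn.subset_left_of_subset_union hC.isOpen_sideRays
    (hclosed.isOpen_compl.inter (isOpen_compl_singleton (x := 0))) ?_ ?_ ?_ hw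
  · exact Set.disjoint_left.mpr fun v hv hv' => hv'.1 ((hρ.mem_sideRays_iff hne hv'.2).mp hv)
  · exact fun v hv =>
      or_iff_not_imp_left.mpr fun h => ⟨fun h' => h ((hρ.mem_sideRays_iff hne hv).mpr h'), hv⟩
  · exact ⟨q, hq0, 1, one_pos, s, hs, by rwa [one_smul]⟩

lemma eq_sides : C = sides ρ := by
  refine (hC.subset_cornerSides.trans hρ.cornerSides_subset_sides).antisymm ?_
  rintro k ⟨z, hz, hpair, hk1⟩
  obtain ⟨w, hwc, heq⟩ := exists_eq_smul_klein hz
  rw [heq, nearest_smul (form_pos origin_mem_cone hz)] at hpair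
  have hw : w ∈ side ρ k := ⟨hwc, by simp [hpair], by simp [hpair]⟩
  obtain ⟨u, hu, s, hs, hus⟩ := hC.mem_sideRays (hρ.ne_zero_of_mem_side hk1.symm hw)
  obtain rfl : u = 1 := le_antisymm (hρ.le_one_of_mem_side hk1.symm hw hus.2.1)
    (hρ.one_le_of_smul_mem_side hu (hC.ne_one hs) hus hw.2.1)
  have hsw := hus.2.2
  rw [one_smul, hpair] at hsw
  exact hsw.resolve_left (hC.ne_one hs) ▸ hs

/-- The central cell is bounded. -/
lemma exists_mul_sq_le_form : ∃ δ : ℝ, 0 < δ ∧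
    ∀ X ∈ cone, 1 ∈ nearest ρ X → δ * form origin X ^ 2 ≤ form X X := by
  have hK : IsCompact (⋃ s ∈ C, side ρ s) := hC.finite.isCompact_biUnion fun s hs =>
    hρ.isCompact_side (hC.subset_cornerSides hs) (hC.inv_mem_cornerSides s hs)
  obtain ⟨s₀, hs₀, q, hq⟩ := hC.exists_mem_side
  have hcont : Continuous fun w => form (klein w) (klein w) := by
    simp only [form_klein_self]
    fun_prop
  obtain ⟨m, hmK, hmin⟩ := hK.exists_isMinOn ⟨q, Set.mem_biUnion hs₀ hq⟩ hcont.continuousOn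
  obtain ⟨s, -, hms⟩ := Set.mem_iUnion₂.mp hmK
  refine ⟨_, hms.1.2, fun X hX h1 => ?_⟩
  obtain ⟨w, -, heq⟩ := exists_eq_smul_klein hX
  have hle : form (klein m) (klein m) ≤ form (klein w) (klein w) := by
    rw [heq, nearest_smul (form_pos origin_mem_cone hX)] at h1
    simp only [isMinOn_iff, form_klein_self] at hmin ⊢
    obtain rfl | hw0 := eq_or_ne w 0
    · simp only [Prod.fst_zero, Prod.snd_zero]
      nlinarith [sq_nonneg m.1, sq_nonneg m.2]
    obtain ⟨u, hu, s, hs, hus⟩ := hC.mem_sideRays hw0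
    have hu1 := hρ.one_le_of_smul_mem_side hu (hC.ne_one hs) hus h1
    have hmu := hmin _ (Set.mem_biUnion hs hus)
    simp only [Prod.smul_fst, Prod.smul_snd, smul_eq_mul] at hmu
    nlinarith [one_le_pow₀ hu1 (n := 2), sq_nonneg w.1, sq_nonneg w.2]
  have hform : form X X = form origin X * (form origin X * form (klein w) (klein w)) := by
    conv_lhs => rw [heq]
    simp only [map_smul, LinearMap.smul_apply, smul_eq_mul]
  rw [hform, ← mul_assoc, ← sq, mul_comm]
  gcongr

end IsFuchsian.IsClosedChain

end Voronoi

namespace Minkowski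

open scoped Topology

lemma norm_le_of_mem_cone {X : Space} (hX : X ∈ cone) : ‖X‖ ≤ 2 * form origin X := by
  have h0 := hX.1
  have h2 := last_pos_of_mem_cone hX
  have hform := hX.2
  rw [form_apply] at hform
  rw [form_origin, pi_norm_le_iff_of_nonneg (by positivity)]
  intro i
  rw [Real.norm_eq_abs, abs_le]
  fin_cases i <;> constructor <;> simp only [Fin.zero_eta, Fin.mk_one, Fin.reduceFinMk] <;>
    nlinarith

lemma form_le_norm_mul_norm (X Y : Space) : form X Y ≤ 2 * (‖X‖ * ‖Y‖) := by
  have hle (i j : Fin 3) : |X i * Y j| ≤ ‖X‖ * ‖Y‖ := by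
    rw [abs_mul]
    exact mul_le_mul (norm_le_pi_norm X i) (norm_le_pi_norm Y j) (abs_nonneg _) (norm_nonneg _)
  rw [form_apply]
  linarith [le_of_abs_le (hle 0 2), le_of_abs_le (hle 2 0), neg_le_of_abs_le (hle 1 1)]

lemma exists_form_map_le (A : Space →ₗ[ℝ] Space) :
    ∃ M, 0 ≤ M ∧ ∀ X ∈ cone, form (A X) X ≤ M * form origin X ^ 2 := by
  refine ⟨8 * ‖A.toContinuousLinearMap‖, by positivity, fun X hX => ?_⟩
  have hpos := form_pos origin_mem_cone hX
  have hX' := norm_le_of_mem_cone hX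
  calc form (A X) X ≤ 2 * (‖A X‖ * ‖X‖) := form_le_norm_mul_norm _ _
    _ ≤ 2 * (‖A.toContinuousLinearMap‖ * ‖X‖ * ‖X‖) := by
      gcongr
      exact A.toContinuousLinearMap.le_opNorm X
    _ ≤ 2 * (‖A.toContinuousLinearMap‖ * (2 * form origin X) * (2 * form origin X)) := by gcongr
    _ = 8 * ‖A.toContinuousLinearMap‖ * form origin X ^ 2 := by ring

/-- The isotropic vectors on the boundary of `cone`, parametrized by the projective line without
its point at infinity. -/
def nullVector (t : ℝ) : Space := ![1, t, t ^ 2]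

lemma form_nullVector (s t : ℝ) : form (nullVector s) (nullVector t) = (s - t) ^ 2 / 2 := by
  simp [form_apply, nullVector]; ring

lemma nullVector_add_mem_cone (t : ℝ) {ε : ℝ} (hε : 0 < ε) :
    nullVector t + ε • ![0, 0, 1] ∈ cone := by
  refine ⟨by simp [nullVector], ?_⟩
  simp only [form_apply, nullVector, Pi.add_apply, Pi.smul_apply, smul_eq_mul]
  simp
  nlinarith

lemma eq_smul_nullVector {X : Space} {t : ℝ} (hX : form X X = 0)
    (hXt : form X (nullVector t) = 0) : X = X 0 • nullVector t := by
  simp only [form_apply, nullVector, Matrix.cons_val_zero, Matrix.cons_val_one,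
    Matrix.cons_val] at hX hXt
  have h1 : X 1 = X 0 * t := by
    refine sub_eq_zero.mp (pow_eq_zero_iff two_ne_zero |>.mp ?_)
    linear_combination 2 * X 0 * hXt - hX
  have h2 : X 2 = X 0 * t ^ 2 := by linear_combination 2 * hXt + 2 * t * h1
  ext i
  fin_cases i <;> simp [nullVector, h1, h2]

lemma exists_map_nullVector_eq_smul {A : Space →ₗ[ℝ] Space}
    (hform : ∀ X Y, form (A X) (A Y) = form X Y) (hcone : ∀ X ∈ cone, A X ∈ cone) {M : ℝ}
    (hM : ∀ X ∈ cone, form (A X) X ≤ M * form X X) (t : ℝ) :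
    ∃ α : ℝ, A (nullVector t) = α • nullVector t := by
  set X : ℝ → Space := fun ε => nullVector t + ε • ![0, 0, 1] with hXdef
  have hX0 : X 0 = nullVector t := by simp only [hXdef, zero_smul, add_zero]
  have hXcone : ∀ᶠ ε in 𝓝[>] (0 : ℝ), X ε ∈ cone := by
    filter_upwards [self_mem_nhdsWithin] with ε hε using nullVector_add_mem_cone t hε
  have hA : Continuous A := A.continuous_of_finiteDimensional
  have hlim {f : ℝ → ℝ} (hf : Continuous f) : Filter.Tendsto f (𝓝[>] 0) (𝓝 (f 0)) :=
    hf.continuousAt.continuousWithinAt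
  have hformc {f : ℝ → Space} (hf : Continuous f) : Continuous fun ε => form (f ε) (X ε) := by
    simp only [form_apply, hXdef]
    fun_prop
  have hle : form (A (X 0)) (X 0) ≤ M * form (X 0) (X 0) :=
    le_of_tendsto_of_tendsto (hlim (hformc (hA.comp (by fun_prop))))
      (hlim (continuous_const.mul (hformc (by fun_prop)))) (hXcone.mono fun ε hε => hM _ hε)
  have hge : 0 ≤ form (A (X 0)) (X 0) :=
    ge_of_tendsto (hlim (hformc (hA.comp (by fun_prop))))
      (hXcone.mono fun ε hε => (form_pos (hcone _ hε) hε).le)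
  rw [hX0] at hle hge
  have hnull : form (nullVector t) (nullVector t) = 0 := by simp [form_nullVector]
  rw [hnull, mul_zero] at hle
  exact ⟨_, eq_smul_nullVector (by rw [hform, hnull]) (le_antisymm hle hge)⟩

lemma exists_map_origin_eq_smul {A : Space →ₗ[ℝ] Space}
    (hform : ∀ X Y, form (A X) (A Y) = form X Y)
    (hnull : ∀ t, ∃ α : ℝ, A (nullVector t) = α • nullVector t) :
    ∃ α : ℝ, A origin = α • origin := by
  choose α hα using hnull
  have hmul {s t : ℝ} (hst : s ≠ t) : α s * α t = 1 := by
    have h := hform (nullVector s) (nullVector t)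
    simp only [hα, map_smul, LinearMap.smul_apply, smul_eq_mul, form_nullVector] at h
    have : (s - t) ^ 2 ≠ 0 := pow_ne_zero 2 (sub_ne_zero.mpr hst)
    field_simp at h
    linarith
  have hα1 : α (-1) = α 1 := by
    have h0 : α 0 ≠ 0 := left_ne_zero_of_mul_eq_one (hmul zero_ne_one)
    exact mul_left_cancel₀ h0 ((hmul (by norm_num)).trans (hmul (by norm_num)).symm)
  have horigin : origin = (2⁻¹ : ℝ) • (nullVector 1 + nullVector (-1)) := by
    ext i
    fin_cases i <;> simp [origin, nullVector] <;> norm_num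
  refine ⟨α 1, ?_⟩
  rw [horigin, map_smul, map_add, hα, hα, hα1, ← smul_add, smul_comm]

end Minkowski

namespace Voronoi.IsFuchsian

open Minkowski

variable {G : Type*} [Group G] {ρ : Representation ℝ G Space} (hρ : IsFuchsian ρ)
include hρ

lemma exists_form_map_le_of_commute (hcomm : ∀ g h : G, g * h = h * g) {δ : ℝ} (hδ : 0 < δ)
    (hle : ∀ X ∈ cone, 1 ∈ nearest ρ X → δ * form origin X ^ 2 ≤ form X X) (g : G) :
    ∃ M, ∀ X ∈ cone, form (ρ g X) X ≤ M * form X X := by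
  obtain ⟨M, hM, hgM⟩ := exists_form_map_le (ρ g)
  refine ⟨M / δ, fun X hX => ?_⟩
  obtain ⟨h, hh⟩ := hρ.nearest_nonempty hX
  have hY := hρ.map_mem_cone h⁻¹ X hX
  have h1 : 1 ∈ nearest ρ (ρ h⁻¹ X) := by
    simpa using (hρ.mul_mem_nearest_map h⁻¹ h X).mpr hh
  have hgh : ρ g (ρ h⁻¹ X) = ρ h⁻¹ (ρ g X) := by
    rw [← Module.End.mul_apply, ← Module.End.mul_apply, ← map_mul, ← map_mul, hcomm]
  calc form (ρ g X) X = form (ρ g (ρ h⁻¹ X)) (ρ h⁻¹ X) := by rw [hgh, hρ.form_map]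
    _ ≤ M * form origin (ρ h⁻¹ X) ^ 2 := hgM _ hY
    _ = M / δ * (δ * form origin (ρ h⁻¹ X) ^ 2) := by field_simp
    _ ≤ M / δ * form (ρ h⁻¹ X) (ρ h⁻¹ X) := by gcongr; exact hle _ hY h1
    _ = M / δ * form X X := by rw [hρ.form_map]

/-- An element of an abelian cocompact group moves all points by a bounded amount, so it fixes the
boundary of the disc. -/
lemma eq_one_of_commute (hcomm : ∀ g h : G, g * h = h * g) {δ : ℝ} (hδ : 0 < δ)
    (hle : ∀ X ∈ cone, 1 ∈ nearest ρ X → δ * form origin X ^ 2 ≤ form X X) (g : G) : g = 1 := by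
  obtain ⟨M, hM⟩ := hρ.exists_form_map_le_of_commute hcomm hδ hle g
  obtain ⟨α, hα⟩ := exists_map_origin_eq_smul (hρ.form_map g)
    (exists_map_nullVector_eq_smul (hρ.form_map g) (hρ.map_mem_cone g) hM)
  have hpos := form_pos origin_mem_cone (hρ.map_origin_mem_cone g)
  rw [hα, map_smul, form_origin_self, smul_eq_mul, mul_one] at hpos
  exact hρ.eq_one_of_map_eq_smul origin_mem_cone hpos hα

end Voronoi.IsFuchsian

/-! ### Ranks on forests and locally finite graphs -/

section RankFunctions

open Function

variable {T : Type*}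

/-- The descendants of `t` (including `t` itself) in the forest with parent map `p`, in which the
roots are the fixed points of `p`. -/
def descendants (p : T → T) (t : T) : Set T :=
  {u | ∃ n, p^[n] u = t}

theorem exists_child_infinite_descendants {p : T → T} {t : T} (hp : (p ⁻¹' {t}).Finite)
    (ht : (descendants p t).Infinite) : ∃ c, p c = t ∧ c ≠ t ∧ (descendants p c).Infinite := by
  by_contra! h
  refine ht (((Set.finite_singleton t).union
    ((hp.sdiff (t := {t})).biUnion fun c hc => h c hc.1 hc.2)).subset ?_)
  rintro u ⟨n, hn⟩
  induction n with
  | zero => exact .inl hn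
  | succ n ih =>
    by_cases hu : p^[n] u = t
    · exact ih hu
    · rw [iterate_succ_apply'] at hn
      exact .inr (Set.mem_biUnion ⟨hn, hu⟩ ⟨n, rfl⟩)

theorem descendants_ssubset {p : T → T} {d : T → ℕ} (hd : ∀ t, p t ≠ t → d t = d (p t) + 1)
    {t : T} (ht : p t ≠ t) : descendants p t ⊂ descendants p (p t) := by
  have hle : ∀ n u, d (p^[n] u) ≤ d u := fun n => by
    induction n with
    | zero => simp
    | succ n ih =>
      intro u
      refine (ih (p u)).trans ?_
      by_cases hu : p u = u
      · rw [hu]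
      · have := hd u hu
        omega
  refine (Set.ssubset_iff_of_subset ?_).mpr ⟨p t, ⟨0, rfl⟩, ?_⟩
  · rintro u ⟨n, hn⟩
    exact ⟨n + 1, by rw [iterate_succ_apply', hn]⟩
  · rintro ⟨n, hn⟩
    have := hle n (p t)
    have := hd t ht
    rw [hn] at *
    omega

/-- The rank counts the descendants of `t` if there are finitely many, and is the depth of `t`,
made larger than all finite counts, otherwise. -/
theorem exists_rank_of_parent (p : T → T) (d : T → ℕ) (hd : ∀ t, p t ≠ t → d t = d (p t) + 1)
    (hp : ∀ t, (p ⁻¹' {t}).Finite) :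
    ∃ ρ : T → ℕ ×ₗ ℕ, ∀ t, (p t ≠ t ∧ ρ t < ρ (p t)) ∨ (∃ c, p c = t ∧ c ≠ t ∧ ρ t < ρ c) ∨
      p t = t ∧ (descendants p t).Finite := by
  classical
  refine ⟨fun t => if (descendants p t).Finite then toLex (0, (descendants p t).ncard)
    else toLex (1, d t), fun t => ?_⟩
  by_cases hfin : (descendants p t).Finite
  · by_cases hroot : p t = t
    · exact .inr (.inr ⟨hroot, hfin⟩)
    refine .inl ⟨hroot, ?_⟩
    by_cases hfin' : (descendants p (p t)).Finite
    · simp [hfin, hfin', Prod.Lex.toLex_lt_toLex,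
        Set.ncard_lt_ncard (descendants_ssubset hd hroot) hfin']
    · simp [hfin, hfin', Prod.Lex.toLex_lt_toLex]
  · obtain ⟨c, hc, hct, hinf⟩ := exists_child_infinite_descendants (hp t) hfin
    have hdc := hd c fun h => hct (h.symm.trans hc)
    rw [hc] at hdc
    rw [Set.Infinite] at hinf
    exact .inr (.inl ⟨c, hc, hct, by simp [hfin, hinf, Prod.Lex.toLex_lt_toLex, hdc]⟩)

theorem exists_adj_dist_eq_add_one {Γ : SimpleGraph T} {o t : T} (hot : Γ.Reachable o t)
    (hne : t ≠ o) : ∃ s, Γ.Adj t s ∧ Γ.dist o t = Γ.dist o s + 1 := by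
  obtain ⟨w, hw⟩ := hot.symm.exists_walk_length_eq_dist
  cases w with
  | nil => exact absurd rfl hne
  | @cons _ s _ hadj q =>
    refine ⟨s, hadj, ?_⟩
    have hq := SimpleGraph.dist_le q
    have htri := hadj.symm.reachable.dist_triangle_right o
    rw [SimpleGraph.dist_eq_one_iff_adj.mpr hadj.symm] at htri
    rw [SimpleGraph.Walk.length_cons, SimpleGraph.dist_comm] at hw
    rw [SimpleGraph.dist_comm] at hq
    omega

theorem exists_spanning_forest {Γ : SimpleGraph T} {root : Γ.ConnectedComponent → T}
    (hroot : ∀ κ, Γ.connectedComponentMk (root κ) = κ) :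
    ∃ (p : T → T) (d : T → ℕ), (∀ t, p t ≠ t → Γ.Adj t (p t) ∧ d t = d (p t) + 1) ∧
      ∀ t, ∃ n, p^[n] t = root (Γ.connectedComponentMk t) := by
  classical
  set o : T → T := fun t => root (Γ.connectedComponentMk t) with ho
  have hreach : ∀ t, Γ.Reachable (o t) t := fun t =>
    SimpleGraph.ConnectedComponent.exact (hroot _)
  have ho_adj : ∀ {t u}, Γ.Adj t u → o t = o u := fun h => by
    simp only [ho, SimpleGraph.ConnectedComponent.sound h.reachable]
  choose! q hq_adj hq_dist using fun t => exists_adj_dist_eq_add_one (hreach t)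
  refine ⟨fun t => if t = o t then t else q t, fun t => Γ.dist (o t) t, fun t ht => ?_, fun t => ?_⟩
  · have hto : t ≠ o t := fun h => ht (if_pos h)
    simp only [if_neg hto]
    exact ⟨hq_adj t hto, by rw [hq_dist t hto, ho_adj (hq_adj t hto)]⟩
  · induction hn : Γ.dist (o t) t generalizing t with
    | zero => exact ⟨0, ((hreach t).dist_eq_zero_iff.mp hn).symm⟩
    | succ n ih =>
      have hto : t ≠ o t := fun h => by
        rw [← h, SimpleGraph.dist_self] at hn
        exact n.succ_ne_zero hn.symm
      have hot := ho_adj (hq_adj t hto)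
      obtain ⟨m, hm⟩ := ih (q t) (by rw [← hot]; have := hq_dist t hto; omega)
      exact ⟨m + 1, by rw [iterate_succ_apply, if_neg hto, hm]; exact hot.symm⟩

theorem exists_root {Γ : SimpleGraph T} {O : Set T}
    (hO : ∀ t, {u | Γ.Reachable t u}.Finite → ∃ u ∈ O, Γ.Reachable t u)
    (κ : Γ.ConnectedComponent) :
    ∃ o, Γ.connectedComponentMk o = κ ∧ ({u | Γ.Reachable o u}.Finite → o ∈ O) := by
  induction κ using SimpleGraph.ConnectedComponent.ind with | _ t
  by_cases hfin : {u | Γ.Reachable t u}.Finite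
  · obtain ⟨u, hu, htu⟩ := hO t hfin
    exact ⟨u, SimpleGraph.ConnectedComponent.sound htu.symm, fun _ => hu⟩
  · exact ⟨t, rfl, fun h => absurd h hfin⟩

/-- A set `O` of vertices meeting every finite component can serve as the set of local maxima of a
rank function. -/
theorem exists_rank_of_locallyFinite {Γ : SimpleGraph T}
    (hΓ : ∀ t, (Γ.neighborSet t).Finite) {O : Set T}
    (hO : ∀ t, {u | Γ.Reachable t u}.Finite → ∃ u ∈ O, Γ.Reachable t u) :
    ∃ ρ : T → ℕ ×ₗ ℕ, ∀ t, t ∈ O ∨ ∃ t', Γ.Adj t t' ∧ ρ t < ρ t' := by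
  choose root hroot_mk hroot_mem using exists_root hO
  obtain ⟨p, d, hp, hp_root⟩ := exists_spanning_forest hroot_mk
  have hp_finite : ∀ t, (p ⁻¹' {t}).Finite := fun t => ((hΓ t).insert t).subset fun u hu => by
    rcases eq_or_ne t u with h | h
    · exact .inl h.symm
    · have hpu : p u = t := hu
      exact .inr (hpu ▸ (hp u (hpu ▸ h)).1.symm)
  obtain ⟨ρ, hρ⟩ := exists_rank_of_parent p d (fun t ht => (hp t ht).2) hp_finite
  refine ⟨ρ, fun t => ?_⟩
  rcases hρ t with ⟨hpt, hlt⟩ | ⟨c, hc, hct, hlt⟩ | ⟨hpt, hfin⟩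
  · exact .inr ⟨_, (hp t hpt).1, hlt⟩
  · have hadj := (hp c (hc ▸ hct.symm)).1
    exact .inr ⟨c, hc ▸ hadj.symm, hlt⟩
  · obtain ⟨n, hn⟩ := hp_root t
    rw [iterate_fixed hpt] at hn
    left
    rw [hn]
    refine hroot_mem _ (hfin.subset fun u hu => ?_)
    obtain ⟨m, hm⟩ := hp_root u
    refine ⟨m, hm.trans ?_⟩
    rw [← hn] at hu
    rw [hn, SimpleGraph.ConnectedComponent.sound (hn ▸ hu : Γ.Reachable t u)]

end RankFunctions

/-! ### Groups glued from polygons -/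

namespace EdgeWord

universe u v

theorem exists_isRotated_cons {L : Type*} {w : List L} {l : L} (hl : l ∈ w) :
    ∃ q, w ~r l :: q := by
  obtain ⟨p, q, rfl⟩ := List.append_of_mem hl
  exact ⟨q ++ p, List.isRotated_append⟩

theorem prod_map_eq_one_iff_of_isRotated {L K : Type*} [Group K] (f : L → K) {w w' : List L}
    (h : w ~r w') :
    (w.map f).prod = 1 ↔ (w'.map f).prod = 1 := by
  have key : ∀ {u u' : List L}, u ~r u' → (u.map f).prod = 1 → (u'.map f).prod = 1 := by
    rintro u _ ⟨n, rfl⟩ hu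
    rw [List.map_rotate]
    exact List.prod_rotate_eq_one_of_prod_eq_one hu n
  exact ⟨key h, key h.symm⟩

section Presentations

variable {L : Type v} [InvolutiveInv L] {K K' : Type*} [Group K] [Group K']

/-- The labelling `f` of oriented edges by group elements is compatible with reversal and closes up
along the boundary words in `R`. -/
def Solves (R : Set (List L)) (f : L → K) : Prop :=
  (∀ l, f l⁻¹ = (f l)⁻¹) ∧ ∀ w ∈ R, (w.map f).prod = 1

theorem Solves.comp {R : Set (List L)} {f : L → K} (hf : Solves R f) (F : K →* K') :
    Solves R (F ∘ f) :=
  ⟨fun l => by simp [hf.1], fun w hw => by rw [← List.map_map, ← map_list_prod, hf.2 w hw, map_one]⟩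

/-- Modifies an equivariant labelling `f` on `P ∪ P⁻¹` so that it takes the values `c` on `P`. -/
noncomputable def override (P : Set L) (c f : L → K) (l : L) : K :=
  open Classical in if l ∈ P then c l else if l⁻¹ ∈ P then (c l⁻¹)⁻¹ else f l

section Override

variable {P : Set L} {c f : L → K} {l : L}

theorem override_of_mem (hl : l ∈ P) : override P c f l = c l :=
  if_pos hl

theorem override_of_notMem (hl : l ∉ P) (hl' : l⁻¹ ∉ P) : override P c f l = f l := by
  simp only [override, hl, hl', if_false]

theorem override_inv (hP : ∀ l ∈ P, l⁻¹ ∉ P) (hf : ∀ l, f l⁻¹ = (f l)⁻¹) (l : L) :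
    override P c f l⁻¹ = (override P c f l)⁻¹ := by
  by_cases h : l ∈ P
  · simp [override, h, hP l h]
  · by_cases h' : l⁻¹ ∈ P <;> simp [override, h, h', hf]

end Override

variable {G : Type u} [Group G]

/-- The elements `ev l`, for `l ∈ S`, generate `G` subject only to the relators `R` and
`ev l⁻¹ = (ev l)⁻¹`. -/
structure Presents (S : Set L) (R : Set (List L)) (ev : L → G) : Prop where
  solves : Solves R ev
  existsUnique_hom : ∀ {K : Type u} [Group K] {f : L → K}, Solves R f →
    ∃! F : G →* K, ∀ l ∈ S, F (ev l) = f l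

theorem Presents.hom_ext {S : Set L} {R : Set (List L)} {ev : L → G} (h : Presents S R ev)
    {K : Type u} [Group K] {F F' : G →* K} (hF : ∀ l ∈ S, F (ev l) = F' (ev l)) : F = F' :=
  (h.existsUnique_hom (h.solves.comp F')).unique hF fun _ _ => rfl

end Presentations

section Free

variable {L G : Type u} [InvolutiveInv L] [Group G] {S : Set L} {R : Set (List L)} {ev : L → G}

theorem Presents.isFreeGroup (h : Presents S R ev) {X : Set L} (hX : X ⊆ S)
    (hext : ∀ {K : Type u} [Group K] (c : L → K), ∃ f, Solves R f ∧ X.EqOn f c)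
    (huniq : ∀ {K : Type u} [Group K] {f f' : L → K}, Solves R f → Solves R f' → X.EqOn f f' →
      S.EqOn f f') : IsFreeGroup G := by
  refine IsFreeGroup.ofUniqueLift X (fun x => ev x) fun {H} _ c => ?_
  obtain ⟨f, hf, hfc⟩ := hext (Function.extend Subtype.val c 1)
  replace hfc : ∀ x : X, f x = c x := fun x => by
    rw [hfc x.2, Subtype.val_injective.extend_apply]
  obtain ⟨F, hF, hF_unique⟩ := h.existsUnique_hom hf
  refine ⟨F, fun x => (hF x (hX x.2)).trans (hfc x), fun F' hF' => hF_unique F' ?_⟩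
  exact huniq (h.solves.comp F') hf fun l hl => (hF' ⟨l, hl⟩).trans (hfc ⟨l, hl⟩).symm

theorem exists_transversal_inv {S : Set L} (hinv : ∀ l ∈ S, l⁻¹ ∈ S) (hne : ∀ l ∈ S, l⁻¹ ≠ l) :
    ∃ X ⊆ S, (∀ l ∈ X, l⁻¹ ∉ X) ∧ ∀ l ∈ S, l ∈ X ∨ l⁻¹ ∈ X := by
  refine ⟨{l ∈ S | WellOrderingRel l l⁻¹}, Set.sep_subset _ _, fun l hl hl' => ?_, fun l hl => ?_⟩
  · have := hl'.2
    rw [inv_inv] at this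
    exact asymm_of WellOrderingRel hl.2 this
  · rcases trichotomous_of WellOrderingRel l l⁻¹ with h | h | h
    · exact .inl ⟨hl, h⟩
    · exact absurd h.symm (hne l hl)
    · exact .inr ⟨hinv l hl, by rwa [inv_inv]⟩

theorem exists_fixedPoint_of_wellFounded {T K : Type*} [Nonempty K] {r : T → T → Prop}
    (hr : WellFounded r) {Φ : (T → K) → T → K}
    (hΦ : ∀ v v' t, (∀ s, r s t → v s = v' s) → Φ v t = Φ v' t) : ∃ v, ∀ t, v t = Φ v t := by
  classical
  inhabit K
  let v : T → K := hr.fix fun t ih => Φ (fun s => if h : r s t then ih s h else default) t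
  refine ⟨v, fun t => (hr.fix_eq _ t).trans (hΦ _ _ t fun s hs => ?_)⟩
  simp only [dif_pos hs]
  rfl

/-- Boundary words of polygons whose edges are to be glued in pairs `l`, `l⁻¹`; an edge whose
inverse occurs in no word is free. -/
structure IsGluing (S : Set L) (R : Set (List L)) : Prop where
  inv_mem : ∀ l ∈ S, l⁻¹ ∈ S
  inv_ne : ∀ l ∈ S, l⁻¹ ≠ l
  mem_of_mem : ∀ w ∈ R, ∀ l ∈ w, l ∈ S
  nodup : ∀ w ∈ R, w.Nodup
  eq_of_mem : ∀ w ∈ R, ∀ w' ∈ R, ∀ l, l ∈ w → l ∈ w' → w = w'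

section Elimination

variable {e : R → L}

theorem IsGluing.notMem_range (hG : IsGluing S R) (he : ∀ w, e w ∈ w.1) {w : R} {q : List L}
    (hq : w.1 ~r e w :: q) {l : L} (hl : l ∈ q) : l ∉ Set.range e := by
  rintro ⟨w', rfl⟩
  have hmem : e w' ∈ w.1 := hq.mem_iff.mpr (List.mem_cons_of_mem _ hl)
  obtain rfl : w' = w := Subtype.ext (hG.eq_of_mem _ w'.2 _ w.2 _ (he w') hmem)
  exact (List.nodup_cons.mp (hq.nodup_iff.mp (hG.nodup _ w'.2))).1 hl

theorem inv_notMem_range (he : ∀ w, e w ∈ w.1)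
    (hwf : WellFounded fun w' w : R => (e w')⁻¹ ∈ w.1) : ∀ l ∈ Set.range e, l⁻¹ ∉ Set.range e := by
  rintro _ ⟨w, rfl⟩ ⟨w', hw'⟩
  refine hwf.asymmetric w w' ?_ ?_
  · rw [← hw']
    exact he w'
  · rw [hw', inv_inv]
    exact he w

theorem IsGluing.exists_solves (hG : IsGluing S R) (he : ∀ w, e w ∈ w.1)
    (hwf : WellFounded fun w' w : R => (e w')⁻¹ ∈ w.1) {K : Type*} [Group K] {f₀ : L → K}
    (hf₀ : ∀ l, f₀ l⁻¹ = (f₀ l)⁻¹) :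
    ∃ f, Solves R f ∧ ∀ l, l ∉ Set.range e → l⁻¹ ∉ Set.range e → f l = f₀ l := by
  have he_inj : Function.Injective e := fun w w' h =>
    Subtype.ext (hG.eq_of_mem _ w.2 _ w'.2 _ (he w) (h ▸ he w'))
  choose q hq using fun w => exists_isRotated_cons (he w)
  let f (v : R → K) : L → K := override (Set.range e) (Function.extend e v 1) f₀
  have hf_e : ∀ v w, f v (e w) = v w := fun v w => by
    rw [← he_inj.extend_apply v 1 w]
    exact override_of_mem ⟨w, rfl⟩
  have hf_inv : ∀ v l, f v l⁻¹ = (f v l)⁻¹ := fun v =>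
    override_inv (inv_notMem_range he hwf) hf₀
  obtain ⟨v, hv⟩ := exists_fixedPoint_of_wellFounded hwf
    (Φ := fun v w => (((q w).map (f v)).prod)⁻¹) fun v v' w hvv' => by
      congr 2
      refine List.map_congr_left fun l hl => ?_
      have hle := hG.notMem_range he (hq w) hl
      by_cases hle' : l⁻¹ ∈ Set.range e
      · obtain ⟨w', hw'⟩ := hle'
        obtain rfl := inv_eq_iff_eq_inv.mp hw'.symm
        rw [hf_inv, hf_inv, hf_e, hf_e, hvv' w' ((hq w).mem_iff.mpr (List.mem_cons_of_mem _ hl))]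
      · simp only [f, override_of_notMem hle hle']
  refine ⟨f v, ⟨hf_inv v, fun w hw => ?_⟩, fun l => override_of_notMem⟩
  lift w to R using hw
  rw [prod_map_eq_one_iff_of_isRotated _ (hq w), List.map_cons, List.prod_cons, hf_e, hv,
    inv_mul_cancel]

theorem IsGluing.eqOn_of_solves (hG : IsGluing S R) (he : ∀ w, e w ∈ w.1)
    (hwf : WellFounded fun w' w : R => (e w')⁻¹ ∈ w.1) {K : Type*} [Group K] {f f' : L → K}
    (hf : Solves R f) (hf' : Solves R f')
    (hff' : ∀ l ∈ S, l ∉ Set.range e → l⁻¹ ∉ Set.range e → f l = f' l) : S.EqOn f f' := by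
  choose q hq using fun w => exists_isRotated_cons (he w)
  have key : ∀ {g : L → K}, Solves R g → ∀ w, g (e w) = ((q w).map g).prod⁻¹ := fun hg w => by
    have := (prod_map_eq_one_iff_of_isRotated _ (hq w)).mp (hg.2 _ w.2)
    rwa [List.map_cons, List.prod_cons, mul_eq_one_iff_eq_inv] at this
  have hinv : ∀ l, f l⁻¹ = f' l⁻¹ → f l = f' l := fun l hl => by
    rwa [hf.1, hf'.1, inv_inj] at hl
  have he_eq : ∀ w, f (e w) = f' (e w) := fun w => by
    induction w using hwf.induction with | _ w ih
    rw [key hf, key hf']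
    congr 2
    refine List.map_congr_left fun l hl => ?_
    have hlw : l ∈ w.1 := (hq w).mem_iff.mpr (List.mem_cons_of_mem _ hl)
    by_cases hle : l⁻¹ ∈ Set.range e
    · obtain ⟨w', hw'⟩ := hle
      exact hinv l (hw' ▸ ih w' (by rwa [hw', inv_inv]))
    · exact hff' l (hG.mem_of_mem _ w.2 l hlw) (hG.notMem_range he (hq w) hl) hle
  intro l hl
  by_cases hle : l ∈ Set.range e
  · obtain ⟨w, rfl⟩ := hle
    exact he_eq w
  by_cases hle' : l⁻¹ ∈ Set.range e
  · obtain ⟨w, hw⟩ := hle'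
    exact hinv l (hw ▸ he_eq w)
  · exact hff' l hl hle hle'

theorem Presents.isFreeGroup_of_wellFounded (h : Presents S R ev) (hG : IsGluing S R)
    (he : ∀ w, e w ∈ w.1) (hwf : WellFounded fun w' w : R => (e w')⁻¹ ∈ w.1) : IsFreeGroup G := by
  obtain ⟨X, hXS, hX_inv, hX⟩ := exists_transversal_inv
    (S := {l ∈ S | l ∉ Set.range e ∧ l⁻¹ ∉ Set.range e})
    (fun l hl => ⟨hG.inv_mem l hl.1, hl.2.2, by rw [inv_inv]; exact hl.2.1⟩)
    (fun l hl => hG.inv_ne l hl.1)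
  refine h.isFreeGroup (hXS.trans (Set.sep_subset _ _)) (fun c => ?_)
    fun {K} _ {f f'} hf hf' hff' => hG.eqOn_of_solves he hwf hf hf' fun l hl hle hle' => ?_
  · obtain ⟨f, hf, hf_eq⟩ := hG.exists_solves he hwf
      (override_inv (c := c) (f := 1) hX_inv fun _ => inv_one.symm)
    exact ⟨f, hf, fun l hl => (hf_eq l (hXS hl).2.1 (hXS hl).2.2).trans (override_of_mem hl)⟩
  · rcases hX l ⟨hl, hle, hle'⟩ with hlX | hlX
    · exact hff' hlX
    · have := hff' hlX
      rwa [hf.1, hf'.1, inv_inj] at this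

end Elimination

theorem IsGluing.finite_adj (hG : IsGluing S R) (w : List L) :
    {w' ∈ R | ∃ l ∈ w, l⁻¹ ∈ w'}.Finite := by
  refine (w.finite_toSet.biUnion (t := fun l => {w' ∈ R | l⁻¹ ∈ w'}) fun l _ =>
    Set.Subsingleton.finite fun w₁ h₁ w₂ h₂ => hG.eq_of_mem _ h₁.1 _ h₂.1 _ h₁.2 h₂.2).subset ?_
  rintro w' ⟨hw', l, hl, hl'⟩
  exact Set.mem_biUnion hl ⟨hw', hl'⟩

/-- A union of polygons in which every finite component has a free edge deformation retracts to a
graph. -/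
theorem Presents.isFreeGroup_of_exists_free_edge (h : Presents S R ev) (hG : IsGluing S R)
    (hfree : ∀ C ⊆ R, C.Finite → C.Nonempty →
      (∀ w ∈ C, ∀ l ∈ w, ∀ w' ∈ R, l⁻¹ ∈ w' → w' ∈ C) →
      ∃ w ∈ C, ∃ l ∈ w, ∀ w' ∈ R, l⁻¹ ∉ w') : IsFreeGroup G := by
  let Γ : SimpleGraph R :=
    { Adj := fun w w' => w ≠ w' ∧ ∃ l ∈ w.1, l⁻¹ ∈ w'.1
      symm := ⟨fun w w' ⟨hne, l, hl, hl'⟩ => ⟨hne.symm, l⁻¹, hl', by rwa [inv_inv]⟩⟩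
      loopless := ⟨fun w hw => hw.1 rfl⟩ }
  have hΓ : ∀ w, (Γ.neighborSet w).Finite := fun w =>
    ((hG.finite_adj w.1).preimage Subtype.val_injective.injOn).subset
      fun w' ⟨_, hw'⟩ => ⟨w'.2, hw'⟩
  obtain ⟨ρ, hρ⟩ := exists_rank_of_locallyFinite hΓ (O := {w | ∃ l ∈ w.1, ∀ w' ∈ R, l⁻¹ ∉ w'})
    fun w hfin => by
      obtain ⟨_, ⟨u, hwu, rfl⟩, hu⟩ := hfree (Subtype.val '' {u | Γ.Reachable w u})
        (Set.image_subset_iff.mpr fun u _ => u.2) (hfin.image _)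
        ⟨w, w, SimpleGraph.Reachable.refl _, rfl⟩
        (by
          rintro _ ⟨u, hwu, rfl⟩ l hl u' hu' hlu'
          lift u' to R using hu'
          by_cases huu' : u = u'
          · exact ⟨u, hwu, huu' ▸ rfl⟩
          · have hadj : Γ.Adj u u' := ⟨huu', l, hl, hlu'⟩
            exact ⟨u', hwu.trans hadj.reachable, rfl⟩)
      exact ⟨u, hu, hwu⟩
  have hletter : ∀ w : R, ∃ l ∈ w.1, ∀ w' : R, l⁻¹ ∈ w'.1 → ρ w < ρ w' := fun w => by
    rcases hρ w with ⟨l, hl, hl'⟩ | ⟨w', ⟨_, l, hl, hl'⟩, hlt⟩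
    · exact ⟨l, hl, fun w' hw' => absurd hw' (hl' _ w'.2)⟩
    · refine ⟨l, hl, fun w'' hw'' => ?_⟩
      rwa [Subtype.ext (hG.eq_of_mem _ w''.2 _ w'.2 _ hw'' hl')]
  choose e he he_lt using hletter
  exact h.isFreeGroup_of_wellFounded hG he
    (Subrelation.wf (fun {w' w} hw => he_lt w' w hw) (InvImage.wf ρ wellFounded_lt))

end Free

/-! ### One-vertex gluings of polygons -/

section Override

variable {L : Type*} [InvolutiveInv L] {K K' : Type*} [Group K] [Group K']
  {P : Set L} {c c' f f' : L → K}

theorem override_override : override P c (override P c' f) = override P c f := by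
  funext l
  by_cases h : l ∈ P <;> by_cases h' : l⁻¹ ∈ P <;> simp [override, h, h']

theorem override_self (hf : ∀ l, f l⁻¹ = (f l)⁻¹) : override P f f = f := by
  funext l
  by_cases h : l ∈ P <;> by_cases h' : l⁻¹ ∈ P <;> simp [override, h, h', hf]

theorem comp_override (F : K →* K') : F ∘ override P c f = override P (F ∘ c) (F ∘ f) := by
  funext l
  by_cases h : l ∈ P <;> by_cases h' : l⁻¹ ∈ P <;> simp [override, h, h']

theorem override_congr {S : Set L} (hc : P.EqOn c c')
    (hf : ∀ l ∈ S, l ∉ P → l⁻¹ ∉ P → f l = f' l) : S.EqOn (override P c f) (override P c' f') := by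
  intro l hl
  by_cases h : l ∈ P
  · simp [override, h, hc h]
  · by_cases h' : l⁻¹ ∈ P
    · simp [override, h, h', hc h']
    · simp [override, h, h', hf l hl h h']

theorem map_override {w : List L} (hw : ∀ l ∈ w, l ∉ P ∧ l⁻¹ ∉ P) :
    w.map (override P c f) = w.map f :=
  List.map_congr_left fun l hl => override_of_notMem (hw l hl).1 (hw l hl).2

end Override

section Transport

variable {L : Type v} [InvolutiveInv L] {G : Type u} [Group G] {S S' : Set L}
  {R R' : Set (List L)} {ev : L → G}

/-- A natural bijection between the solutions of two systems of relators identifies the groups they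
present. -/
theorem Presents.transport (h : Presents S R ev)
    (α β : ∀ {K : Type u} [Group K], (L → K) → L → K)
    (hα : ∀ {K : Type u} [Group K] {f : L → K}, Solves R f → Solves R' (α f))
    (hβ : ∀ {K : Type u} [Group K] {f : L → K}, Solves R' f → Solves R (β f))
    (hαβ : ∀ {K : Type u} [Group K] {f : L → K}, Solves R' f → S'.EqOn (α (β f)) f)
    (hβα : ∀ {K : Type u} [Group K] {f : L → K}, Solves R f → S.EqOn (β (α f)) f)
    (hα_comp : ∀ {K K' : Type u} [Group K] [Group K'] (F : K →* K') (f : L → K),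
      F ∘ α f = α (F ∘ f))
    (hβ_comp : ∀ {K K' : Type u} [Group K] [Group K'] (F : K →* K') (f : L → K),
      F ∘ β f = β (F ∘ f))
    (hα_congr : ∀ {K : Type u} [Group K] {f f' : L → K}, S.EqOn f f' → S'.EqOn (α f) (α f'))
    (hβ_congr : ∀ {K : Type u} [Group K] {f f' : L → K}, S'.EqOn f f' → S.EqOn (β f) (β f')) :
    Presents S' R' (α ev) where
  solves := hα h.solves
  existsUnique_hom {K} _ {f} hf := by
    obtain ⟨F, hF, hF_unique⟩ := h.existsUnique_hom (hβ hf)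
    refine ⟨F, fun l hl => ?_, fun F' hF' => hF_unique F' fun l hl => ?_⟩
    · exact (congrFun (hα_comp F ev) l).trans ((hα_congr hF hl).trans (hαβ hf hl))
    · calc F' (ev l) = F' (β (α ev) l) := by rw [hβα h.solves hl]
        _ = β (F' ∘ α ev) l := congrFun (hβ_comp F' _) l
        _ = β f l := hβ_congr hF' hl

theorem Presents.congr (h : Presents S R ev) (hS : S = S')
    (hR : ∀ w, w ≠ [] → (w ∈ R ↔ w ∈ R')) : Presents S' R' ev := by
  have hiff : ∀ {K : Type u} [Group K] {f : L → K}, Solves R f ↔ Solves R' f := by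
    refine and_congr_right fun _ => forall_congr' fun w => ?_
    rcases eq_or_ne w [] with rfl | hw
    · simp
    · rw [hR w hw]
  subst hS
  exact ⟨hiff.mp h.solves, fun hf => h.existsUnique_hom (hiff.mpr hf)⟩

end Transport

variable {L : Type v} [InvolutiveInv L]

section Paths

variable {V : Type*} {src src' : L → V} {w w' : List L} {p q : V}

/-- `w` is an edge path from `p` to `q`, where the edge `l` goes from `src l` to `src l⁻¹`. -/
def IsPath (src : L → V) : V → List L → V → Prop
  | p, [], q => p = q
  | p, l :: w, q => src l = p ∧ IsPath src (src l⁻¹) w q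

theorem isPath_append : IsPath src p (w ++ w') q ↔ ∃ r, IsPath src p w r ∧ IsPath src r w' q := by
  induction w generalizing p with
  | nil => simp [IsPath]
  | cons l w ih => simp [IsPath, ih, and_assoc]

theorem IsPath.congr (h : IsPath src p w q)
    (hsrc : ∀ l ∈ w, src l = src' l ∧ src l⁻¹ = src' l⁻¹) : IsPath src' p w q := by
  induction w generalizing p with
  | nil => exact h
  | cons l w ih =>
    obtain ⟨hl, hl'⟩ := hsrc l List.mem_cons_self
    exact ⟨hl ▸ h.1, hl' ▸ ih h.2 fun l hl => hsrc l (List.mem_cons_of_mem _ hl)⟩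

theorem isPath_of_forall_eq (h : ∀ l ∈ w, src l = p ∧ src l⁻¹ = p) : IsPath src p w p := by
  induction w with
  | nil => rfl
  | cons l w ih =>
    obtain ⟨hl, hl'⟩ := h l List.mem_cons_self
    exact ⟨hl, hl'.symm ▸ ih fun l hl => h l (List.mem_cons_of_mem _ hl)⟩

end Paths

/-- Gluing the polygons with boundary words `ws` identifies all their vertices: every labelling of
edge sources that is compatible with the boundary words is constant. -/
def OneVertex (ws : List (List L)) : Prop :=
  ∀ src : L → Bool, (∀ w ∈ ws, ∃ p, IsPath src p w p) →
    ∀ l ∈ ws.flatten, ∀ l' ∈ ws.flatten, src l = src l'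

theorem OneVertex.congr {A B : List (List L)} (h : OneVertex A)
    (hflatten : A.flatten.Perm B.flatten) (hAB : ∀ w, w ≠ [] → (w ∈ A ↔ w ∈ B)) : OneVertex B := by
  intro src hsrc l hl l' hl'
  refine h src (fun w hw => ?_) l (hflatten.mem_iff.mpr hl) l' (hflatten.mem_iff.mpr hl')
  rcases eq_or_ne w [] with rfl | hne
  · exact ⟨true, rfl⟩
  · exact hsrc w ((hAB w hne).mp hw)

/-- The edges in the list `w` are pairwise distinct and come in inverse pairs. -/
structure IsPairing (w : List L) : Prop where
  nodup : w.Nodup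
  inv_mem : ∀ l ∈ w, l⁻¹ ∈ w
  inv_ne : ∀ l ∈ w, l⁻¹ ≠ l

namespace IsPairing

variable {w w' : List L} {l : L}

theorem perm (h : IsPairing w) (hw : w.Perm w') : IsPairing w' where
  nodup := hw.nodup_iff.mp h.nodup
  inv_mem l hl := hw.mem_iff.mp (h.inv_mem l (hw.mem_iff.mpr hl))
  inv_ne l hl := h.inv_ne l (hw.mem_iff.mpr hl)

theorem ne_and_ne_inv_of_mem (h : IsPairing (l :: l⁻¹ :: w)) {x : L} (hx : x ∈ w) :
    x ≠ l ∧ x ≠ l⁻¹ := by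
  have := h.nodup
  simp only [List.nodup_cons, List.mem_cons, not_or] at this
  exact ⟨fun e => this.1.2 (e ▸ hx), fun e => this.2.1 (e ▸ hx)⟩

theorem notMem_singleton (h : IsPairing (l :: l⁻¹ :: w)) {x : L} (hx : x ∈ w) :
    x ∉ ({l} : Set L) ∧ x⁻¹ ∉ ({l} : Set L) :=
  ⟨(h.ne_and_ne_inv_of_mem hx).1,
    fun e => (h.ne_and_ne_inv_of_mem hx).2 (inv_eq_iff_eq_inv.mp e)⟩

theorem of_cons_cons (h : IsPairing (l :: l⁻¹ :: w)) : IsPairing w where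
  nodup := (List.nodup_cons.mp (List.nodup_cons.mp h.nodup).2).2
  inv_mem x hx := by
    have hmem := h.inv_mem x (by simp [hx])
    have hne := h.ne_and_ne_inv_of_mem hx
    rw [List.mem_cons, List.mem_cons, inv_inj, inv_eq_iff_eq_inv] at hmem
    tauto
  inv_ne x hx := h.inv_ne x (by simp [hx])

end IsPairing

section Merge

variable {P Q P' Q' : List L} {l : L} {rest : List (List L)}

theorem merge_perm : ((P ++ l :: Q) :: (P' ++ l⁻¹ :: Q') :: rest).flatten.Perm
    (l :: l⁻¹ :: ((P ++ Q' ++ P' ++ Q) :: rest).flatten) := by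
  classical
  refine List.perm_iff_count.mpr fun x => ?_
  simp only [List.flatten_cons, List.count_append, List.count_cons]
  omega

theorem OneVertex.merge (h : OneVertex ((P ++ l :: Q) :: (P' ++ l⁻¹ :: Q') :: rest))
    (hpair : IsPairing ((P ++ l :: Q) :: (P' ++ l⁻¹ :: Q') :: rest).flatten) :
    OneVertex ((P ++ Q' ++ P' ++ Q) :: rest) := by
  classical
  intro src hsrc
  obtain ⟨p, hp⟩ := hsrc _ List.mem_cons_self
  simp only [isPath_append] at hp
  obtain ⟨s, ⟨t, ⟨q, hP, hQ'⟩, hP'⟩, hQ⟩ := hp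
  set src' : L → Bool := Function.update (Function.update src l q) l⁻¹ s
  have hpair' := hpair.perm merge_perm
  have hinv : l⁻¹ ≠ l := hpair'.inv_ne l (by simp)
  have hl : src' l = q := by simp [src', hinv.symm]
  have hl' : src' l⁻¹ = s := by simp [src']
  have hx : ∀ x ∈ ((P ++ Q' ++ P' ++ Q) :: rest).flatten,
      src x = src' x ∧ src x⁻¹ = src' x⁻¹ := fun x hx => by
    obtain ⟨hne, hne'⟩ := hpair'.ne_and_ne_inv_of_mem hx
    have hne'' : x⁻¹ ≠ l := fun e => hne' (inv_eq_iff_eq_inv.mp e)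
    simp [src', hne, hne', hne'']
  have key := h src' fun w hw => by
    rcases List.mem_cons.mp hw with rfl | hw
    · exact ⟨p, isPath_append.mpr ⟨q, hP.congr fun x h => hx x (by simp [h]), hl,
        hl'.symm ▸ hQ.congr fun x h => hx x (by simp [h])⟩⟩
    rcases List.mem_cons.mp hw with rfl | hw
    · exact ⟨t, isPath_append.mpr ⟨s, hP'.congr fun x h => hx x (by simp [h]), hl', by
        rw [inv_inv, hl]
        exact hQ'.congr fun x h => hx x (by simp [h])⟩⟩
    · obtain ⟨p, hp⟩ := hsrc w (List.mem_cons_of_mem _ hw)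
      exact ⟨p, hp.congr fun x h => hx x
        (List.mem_flatten_of_mem (List.mem_cons_of_mem _ hw) h)⟩
  have hmem : ∀ x ∈ ((P ++ Q' ++ P' ++ Q) :: rest).flatten,
      x ∈ ((P ++ l :: Q) :: (P' ++ l⁻¹ :: Q') :: rest).flatten := fun x hx =>
    merge_perm.mem_iff.mpr (by simp only [List.mem_cons, hx, or_true])
  intro x hxm y hym
  rw [(hx x hxm).1, (hx y hym).1]
  exact key x (hmem x hxm) y (hmem y hym)

variable {G : Type u} [Group G] {ev : L → G}

theorem prod_map_append_inv_cons_eq_one_iff {K : Type*} [Group K] {f : L → K}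
    (hl : f l⁻¹ = (f l)⁻¹) :
    ((P' ++ l⁻¹ :: Q').map f).prod = 1 ↔ f l = (Q'.map f).prod * (P'.map f).prod := by
  rw [prod_map_eq_one_iff_of_isRotated f List.isRotated_append, List.cons_append, List.map_cons,
    List.prod_cons, hl, List.map_append, List.prod_append, inv_mul_eq_one]

theorem Solves.merge {K : Type*} [Group K] {f : L → K}
    (hf : Solves {w | w ∈ (P ++ l :: Q) :: (P' ++ l⁻¹ :: Q') :: rest} f) :
    Solves {w | w ∈ (P ++ Q' ++ P' ++ Q) :: rest} f := by
  refine ⟨hf.1, fun w hw => ?_⟩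
  rcases List.mem_cons.mp hw with rfl | hw
  · have hl := (prod_map_append_inv_cons_eq_one_iff (hf.1 l)).mp
      (hf.2 _ (List.mem_cons_of_mem _ List.mem_cons_self))
    have hw := hf.2 _ List.mem_cons_self
    simpa only [List.map_append, List.map_cons, List.prod_append, List.prod_cons, hl, mul_assoc]
      using hw
  · exact hf.2 w (List.mem_cons_of_mem _ (List.mem_cons_of_mem _ hw))

theorem Solves.unmerge {K : Type*} [Group K] {f : L → K} (hl : l⁻¹ ≠ l)
    (hl_notMem : ∀ x ∈ ((P ++ Q' ++ P' ++ Q) :: rest).flatten,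
      x ∉ ({l} : Set L) ∧ x⁻¹ ∉ ({l} : Set L))
    (hf : Solves {w | w ∈ (P ++ Q' ++ P' ++ Q) :: rest} f) :
    Solves {w | w ∈ (P ++ l :: Q) :: (P' ++ l⁻¹ :: Q') :: rest}
      (override {l} (fun _ => (Q'.map f).prod * (P'.map f).prod) f) := by
  have hinv := override_inv (P := {l}) (c := fun _ => (Q'.map f).prod * (P'.map f).prod)
    (by rintro x rfl; exact hl) hf.1
  refine ⟨hinv, fun w hw => ?_⟩
  rcases List.mem_cons.mp hw with rfl | hw
  · have hw := hf.2 _ List.mem_cons_self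
    rw [List.map_append, List.map_cons, map_override fun x hx => hl_notMem x (by simp [hx]),
      map_override fun x hx => hl_notMem x (by simp [hx]), override_of_mem (P := {l}) rfl]
    simpa only [List.map_append, List.prod_append, List.prod_cons, mul_assoc] using hw
  rcases List.mem_cons.mp hw with rfl | hw
  · rw [prod_map_append_inv_cons_eq_one_iff (hinv l), override_of_mem (P := {l}) rfl,
      map_override fun x hx => hl_notMem x (by simp [hx]),
      map_override fun x hx => hl_notMem x (by simp [hx])]
  · rw [map_override fun x hx =>
      hl_notMem x (List.mem_flatten_of_mem (List.mem_cons_of_mem _ hw) hx)]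
    exact hf.2 w (List.mem_cons_of_mem _ hw)

theorem Presents.merge
    (hpair : IsPairing ((P ++ l :: Q) :: (P' ++ l⁻¹ :: Q') :: rest).flatten)
    (h : Presents {x | x ∈ ((P ++ l :: Q) :: (P' ++ l⁻¹ :: Q') :: rest).flatten}
      {w | w ∈ (P ++ l :: Q) :: (P' ++ l⁻¹ :: Q') :: rest} ev) :
    Presents {x | x ∈ ((P ++ Q' ++ P' ++ Q) :: rest).flatten}
      {w | w ∈ (P ++ Q' ++ P' ++ Q) :: rest} ev := by
  have hpair' := hpair.perm merge_perm
  have hmem : ∀ x ∈ ((P ++ Q' ++ P' ++ Q) :: rest).flatten,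
      x ∈ ((P ++ l :: Q) :: (P' ++ l⁻¹ :: Q') :: rest).flatten := fun x hx =>
    merge_perm.mem_iff.mpr (by simp only [List.mem_cons, hx, or_true])
  have hl_notMem : ∀ x ∈ ((P ++ Q' ++ P' ++ Q) :: rest).flatten,
      x ∉ ({l} : Set L) ∧ x⁻¹ ∉ ({l} : Set L) := fun x hx => hpair'.notMem_singleton hx
  -- The word `P' l⁻¹ Q'` expresses `l` as `Q' P'`.
  refine h.transport (fun f => f)
    (fun f => override {l} (fun _ => (Q'.map f).prod * (P'.map f).prod) f)
    Solves.merge (Solves.unmerge (hpair'.inv_ne l List.mem_cons_self) hl_notMem)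
    (fun _ x hx => override_of_notMem (hl_notMem x hx).1 (hl_notMem x hx).2)
    (fun {K} _ f hf x hx => ?_) (fun _ _ => rfl)
    (fun F f => ?_) (fun hff' x hx => hff' (hmem x hx)) (fun {K} _ f f' hff' => ?_)
  · have hl := (prod_map_append_inv_cons_eq_one_iff (hf.1 l)).mp
      (hf.2 _ (List.mem_cons_of_mem _ List.mem_cons_self))
    rw [← hl]
    refine (override_congr (P := {l}) (f := f) ?_ (fun _ _ _ _ => rfl) hx).trans
      (congrFun (override_self hf.1) x)
    rintro _ rfl
    rfl
  · rw [comp_override]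
    simp only [Function.comp_def, map_mul, map_list_prod, List.map_map]
  · refine override_congr (fun _ _ => ?_) fun x hx h h' => ?_
    · rw [List.map_congr_left fun x hx => hff' (show x ∈ List.flatten _ by simp [hx]),
        List.map_congr_left fun x hx => hff' (show x ∈ List.flatten _ by simp [hx])]
    · have := merge_perm.mem_iff.mp hx
      rw [List.mem_cons, List.mem_cons] at this
      exact hff' ((this.resolve_left h).resolve_left fun e => h' (inv_eq_iff_eq_inv.mpr e))

end Merge

section OneVertexSurface

variable {G : Type u} [Group G] {ev : L → G} {ws ws' : List (List L)}

/-- The polygons with boundary words `ws` glue, along inverse edges, to a closed surface with one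
vertex, and `G` is presented by the edges and the boundary words. -/
structure OneVertexSurface (ws : List (List L)) (ev : L → G) : Prop where
  isPairing : IsPairing ws.flatten
  presents : Presents {l | l ∈ ws.flatten} {w | w ∈ ws} ev
  oneVertex : OneVertex ws

namespace OneVertexSurface

theorem congr (h : OneVertexSurface ws ev) (hperm : ws.flatten.Perm ws'.flatten)
    (hmem : ∀ w, w ≠ [] → (w ∈ ws ↔ w ∈ ws')) : OneVertexSurface ws' ev where
  isPairing := h.isPairing.perm hperm
  presents := h.presents.congr (Set.ext fun _ => hperm.mem_iff) hmem
  oneVertex := h.oneVertex.congr hperm hmem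

theorem perm (h : OneVertexSurface ws ev) (hperm : ws.Perm ws') : OneVertexSurface ws' ev :=
  h.congr hperm.flatten fun _ _ => hperm.mem_iff

theorem of_nil_cons (h : OneVertexSurface ([] :: ws) ev) : OneVertexSurface ws ev :=
  h.congr (by simp) fun w hw => by simp [hw]

theorem merge {P Q P' Q' : List L} {l : L} {rest : List (List L)}
    (h : OneVertexSurface ((P ++ l :: Q) :: (P' ++ l⁻¹ :: Q') :: rest) ev) :
    OneVertexSurface ((P ++ Q' ++ P' ++ Q) :: rest) ev where
  isPairing := (h.isPairing.perm merge_perm).of_cons_cons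
  presents := h.presents.merge h.isPairing
  oneVertex := h.oneVertex.merge h.isPairing

theorem eq_nil_of_forall_inv_mem {w : List L} {rest : List (List L)}
    (h : OneVertexSurface (w :: rest) ev) (hw : w ≠ []) (hinv : ∀ l ∈ w, l⁻¹ ∈ w) :
    ∀ w' ∈ rest, w' = [] := by
  classical
  have hinv_iff : ∀ l, l⁻¹ ∈ w ↔ l ∈ w := fun l => ⟨fun hl => inv_inv l ▸ hinv _ hl, hinv l⟩
  have hdisj := (List.nodup_append.mp (List.flatten_cons ▸ h.isPairing.nodup)).2.2
  have hnot : ∀ l ∈ rest.flatten, l ∉ w := fun l hl hlw => hdisj l hlw l hl rfl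
  have key := h.oneVertex (fun l => decide (l ∈ w)) fun w' hw' => by
    rcases List.mem_cons.mp hw' with rfl | hw'
    · exact ⟨true, isPath_of_forall_eq fun l hl => by simp [hinv_iff, hl]⟩
    · refine ⟨false, isPath_of_forall_eq fun l hl => ?_⟩
      have := hnot l (List.mem_flatten_of_mem hw' hl)
      simp [hinv_iff, this]
  intro w' hw'
  obtain ⟨l, hl⟩ := List.exists_mem_of_ne_nil w hw
  refine List.eq_nil_iff_forall_not_mem.mpr fun x hx => ?_
  have hx := List.mem_flatten_of_mem hw' hx
  have := key l (by simp [hl]) x (by rw [List.flatten_cons]; exact List.mem_append_right _ hx)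
  simp [hl, hnot x hx] at this

theorem exists_singleton (h : OneVertexSurface ws ev) : ∃ w, OneVertexSurface [w] ev := by
  classical
  induction hn : ws.length using Nat.strong_induction_on generalizing ws with | _ n ih
  match ws, hn with
  | [], _ => exact ⟨[], h.congr (by simp) fun w hw => by simp [hw]⟩
  | [w], _ => exact ⟨w, h⟩
  | [] :: w' :: rest, hn => exact ih _ (by simp at hn ⊢; omega) h.of_nil_cons rfl
  | (x :: w) :: w' :: rest, hn =>
    by_cases hinv : ∀ l ∈ x :: w, l⁻¹ ∈ x :: w
    · obtain rfl := h.eq_nil_of_forall_inv_mem (by simp) hinv w' (by simp)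
      exact ih _ (by simp at hn ⊢; omega) (h.perm (List.Perm.swap _ _ _)).of_nil_cons rfl
    · push Not at hinv
      obtain ⟨l, hl, hl'⟩ := hinv
      have hmem : l⁻¹ ∈ (w' :: rest).flatten := by
        have := h.isPairing.inv_mem l (by rw [List.flatten_cons]; exact List.mem_append_left _ hl)
        rw [List.flatten_cons] at this
        exact (List.mem_append.mp this).resolve_left hl'
      obtain ⟨w'', hw'', hl''⟩ := List.mem_flatten.mp hmem
      obtain ⟨P, Q, hPQ⟩ := List.append_of_mem hl
      obtain ⟨P', Q', rfl⟩ := List.append_of_mem hl''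
      have hperm := List.perm_cons_erase hw''
      have hlen := hperm.length_eq
      rw [hPQ] at h
      exact ih _ (by simp at hn hlen ⊢; omega) (h.perm (hperm.cons _)).merge rfl

end OneVertexSurface

end OneVertexSurface

/-! ### Normal forms of polygon words -/

section Handle

variable {H X Y Z W : List L} {a b : L}

theorem handle_perm : (H ++ (a :: X ++ b :: Y ++ a⁻¹ :: Z ++ b⁻¹ :: W)).Perm
    (a :: a⁻¹ :: b :: b⁻¹ :: (H ++ X ++ Y ++ Z ++ W)) := by
  classical
  refine List.perm_iff_count.mpr fun x => ?_
  simp only [List.count_append, List.count_cons]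
  omega

theorem handle_perm' : (H ++ [a, b, a⁻¹, b⁻¹] ++ (Z ++ Y ++ X ++ W)).Perm
    (a :: a⁻¹ :: b :: b⁻¹ :: (H ++ X ++ Y ++ Z ++ W)) := by
  classical
  refine List.perm_iff_count.mpr fun x => ?_
  simp only [List.count_append, List.count_cons, List.count_nil]
  omega

theorem IsPairing.notMem_pair {w : List L} (h : IsPairing (a :: a⁻¹ :: b :: b⁻¹ :: w)) {x : L}
    (hx : x ∈ w) : x ∉ ({a, b} : Set L) ∧ x⁻¹ ∉ ({a, b} : Set L) := by
  obtain ⟨ha, ha'⟩ := h.ne_and_ne_inv_of_mem (x := x) (by simp [hx])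
  obtain ⟨hb, hb'⟩ := h.of_cons_cons.ne_and_ne_inv_of_mem hx
  simp [ha, ha', hb, hb', inv_eq_iff_eq_inv]

theorem IsPairing.pair {w : List L} (h : IsPairing (a :: a⁻¹ :: b :: b⁻¹ :: w)) :
    b ≠ a ∧ b ≠ a⁻¹ ∧ a⁻¹ ≠ a ∧ b⁻¹ ≠ b := by
  obtain ⟨h₁, h₂⟩ := h.ne_and_ne_inv_of_mem (x := b) (by simp)
  exact ⟨h₁, h₂, h.inv_ne a (by simp), h.inv_ne b (by simp)⟩

theorem OneVertex.handle (h : OneVertex [a :: X ++ b :: Y ++ a⁻¹ :: Z ++ b⁻¹ :: W])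
    (hpair : IsPairing (a :: X ++ b :: Y ++ a⁻¹ :: Z ++ b⁻¹ :: W)) :
    OneVertex [Z ++ Y ++ X ++ W] := by
  classical
  intro src hsrc
  obtain ⟨p, hp⟩ := hsrc _ List.mem_cons_self
  simp only [isPath_append] at hp
  obtain ⟨t, ⟨r, ⟨q, hZ, hY⟩, hX⟩, hW⟩ := hp
  have hpair' := hpair.perm (handle_perm (H := []))
  obtain ⟨hba, hba', ha, hb⟩ := hpair'.pair
  have hba'' : b⁻¹ ≠ a := fun e => hba' (inv_eq_iff_eq_inv.mp e)
  set src' : L → Bool := fun l =>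
    if l = a then p else if l = a⁻¹ then r else if l = b then t else if l = b⁻¹ then q else src l
  have hsrc_a : src' a = p := by simp [src']
  have hsrc_a' : src' a⁻¹ = r := by simp [src', ha]
  have hsrc_b : src' b = t := by simp [src', hba, hba']
  have hsrc_b' : src' b⁻¹ = q := by simp [src', hba, hba'', hb]
  have hx : ∀ x ∈ [] ++ X ++ Y ++ Z ++ W, src x = src' x ∧ src x⁻¹ = src' x⁻¹ := fun x hx => by
    have := hpair'.notMem_pair hx
    simp only [Set.mem_insert_iff, Set.mem_singleton_iff, not_or] at this
    obtain ⟨⟨hxa, hxb⟩, hxa', hxb'⟩ := this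
    simp [src', hxa, hxb, hxa', hxb', ← inv_eq_iff_eq_inv]
  have key := h src' fun w hw => by
    obtain rfl := List.mem_singleton.mp hw
    refine ⟨p, ?_⟩
    simp only [isPath_append]
    refine ⟨q, ⟨r, ⟨t, ⟨hsrc_a, hsrc_a' ▸ hX.congr ?_⟩, hsrc_b, hsrc_b' ▸ hY.congr ?_⟩,
      hsrc_a', ?_⟩, hsrc_b', ?_⟩
    · exact fun x h => hx x (by simp [h])
    · exact fun x h => hx x (by simp [h])
    · rw [inv_inv, hsrc_a]
      exact hZ.congr fun x h => hx x (by simp [h])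
    · rw [inv_inv, hsrc_b]
      exact hW.congr fun x h => hx x (by simp [h])
  simp only [List.flatten_singleton] at key ⊢
  intro x hxm y hym
  have hmem : ∀ x ∈ Z ++ Y ++ X ++ W, x ∈ [] ++ X ++ Y ++ Z ++ W := by simp; tauto
  rw [(hx x (hmem x hxm)).1, (hx y (hmem y hym)).1]
  simp only [List.mem_append] at hxm hym
  exact key x (by simp; tauto) y (by simp; tauto)

open Classical in
/-- The change of generators, depending on the exponent `e`, that slides the words `X`, `Y`, `Z`
off the handle `(a, b)`. -/
noncomputable def slide (a b : L) (X Y Z : List L) (e : ℤ) {K : Type*} [Group K] (f : L → K) :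
    L → K :=
  override {a, b} (fun l => if l = a then f a * ((Z ++ Y).map f).prod ^ e else
    ((Z ++ Y ++ X).map f).prod ^ (-e) * f b * (Z.map f).prod ^ e) f

variable {K K' : Type*} [Group K] [Group K'] {f f' : L → K} {e : ℤ}

theorem slide_left : slide a b X Y Z e f a = f a * ((Z ++ Y).map f).prod ^ e := by
  rw [slide, override_of_mem (by simp), if_pos rfl]

theorem slide_right (hab : b ≠ a) : slide a b X Y Z e f b =
    ((Z ++ Y ++ X).map f).prod ^ (-e) * f b * (Z.map f).prod ^ e := by
  rw [slide, override_of_mem (by simp), if_neg hab]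

theorem map_slide {w : List L} (hw : ∀ x ∈ w, x ∉ ({a, b} : Set L) ∧ x⁻¹ ∉ ({a, b} : Set L)) :
    w.map (slide a b X Y Z e f) = w.map f :=
  map_override hw

theorem comp_slide (F : K →* K') : F ∘ slide a b X Y Z e f = slide a b X Y Z e (F ∘ f) := by
  rw [slide, comp_override, slide]
  congr 1
  funext l
  by_cases h : l = a <;> simp [h, map_list_prod]

theorem slide_congr {S : Set L} (ha : a ∈ S) (hb : b ∈ S) (hXYZ : ∀ x ∈ Z ++ Y ++ X, x ∈ S)
    (h : S.EqOn f f') : S.EqOn (slide a b X Y Z e f) (slide a b X Y Z e f') := by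
  have hmap : ∀ w : List L, (∀ x ∈ w, x ∈ Z ++ Y ++ X) → w.map f = w.map f' := fun w hw =>
    List.map_congr_left fun x hx => h (hXYZ x (hw x hx))
  refine override_congr (fun l _ => ?_) fun x hx _ _ => h hx
  simp only [h ha, h hb]
  rw [hmap (Z ++ Y) (by simp; tauto), hmap (Z ++ Y ++ X) (by simp), hmap Z (by simp; tauto)]

theorem slide_slide_neg (hab : b ≠ a)
    (hXYZ : ∀ x ∈ Z ++ Y ++ X, x ∉ ({a, b} : Set L) ∧ x⁻¹ ∉ ({a, b} : Set L))
    (hf : ∀ l, f l⁻¹ = (f l)⁻¹) : slide a b X Y Z (-e) (slide a b X Y Z e f) = f := by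
  rw [slide, slide_left, slide_right hab, map_slide hXYZ,
    map_slide fun x hx => hXYZ x (List.mem_append_left _ hx),
    map_slide fun x hx => hXYZ x (List.mem_append_left _ (List.mem_append_left _ hx)), slide,
    override_override]
  refine Eq.trans ?_ (override_self (P := {a, b}) hf)
  funext l
  refine override_congr (S := Set.univ) (fun l hl => ?_) (fun _ _ _ _ => rfl) (Set.mem_univ l)
  rcases hl with rfl | rfl
  · simp [mul_assoc]
  · simp only [if_neg hab]
    group

end Handle

section Handles

variable {H X Y Z W : List L} {a b : L}

theorem slide_inv {K : Type*} [Group K] {f : L → K} {e : ℤ} {w : List L}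
    (hpair : IsPairing (a :: a⁻¹ :: b :: b⁻¹ :: w)) (hf : ∀ l, f l⁻¹ = (f l)⁻¹) (l : L) :
    slide a b X Y Z e f l⁻¹ = (slide a b X Y Z e f l)⁻¹ := by
  obtain ⟨hba, hba', ha, hb⟩ := hpair.pair
  refine override_inv ?_ hf l
  rintro l (rfl | rfl)
  · simp [ha, hba'.symm]
  · simp [hb, inv_eq_iff_eq_inv, hba']

theorem prod_map_slide {K : Type*} [Group K] {f : L → K}
    (hpair : IsPairing (a :: a⁻¹ :: b :: b⁻¹ :: (H ++ X ++ Y ++ Z ++ W)))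
    (hf : ∀ l, f l⁻¹ = (f l)⁻¹) :
    ((H ++ (a :: X ++ b :: Y ++ a⁻¹ :: Z ++ b⁻¹ :: W)).map (slide a b X Y Z 1 f)).prod =
      ((H ++ [a, b, a⁻¹, b⁻¹] ++ (Z ++ Y ++ X ++ W)).map f).prod := by
  have hmap : ∀ w : List L, (∀ x ∈ w, x ∈ H ++ X ++ Y ++ Z ++ W) →
      w.map (slide a b X Y Z 1 f) = w.map f := fun w hw =>
    map_slide fun x hx => hpair.notMem_pair (hw x hx)
  simp only [List.map_append, List.map_cons, List.map_nil, List.prod_append, List.prod_cons,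
    List.prod_nil, hmap H (by simp; tauto), hmap X (by simp; tauto), hmap Y (by simp; tauto),
    hmap Z (by simp; tauto), hmap W (by simp; tauto), slide_inv hpair hf, hf, slide_left,
    slide_right hpair.pair.1]
  group

variable {G : Type u} [Group G] {ev : L → G}

theorem Presents.handle
    (hpair : IsPairing (H ++ (a :: X ++ b :: Y ++ a⁻¹ :: Z ++ b⁻¹ :: W)))
    (h : Presents {l | l ∈ H ++ (a :: X ++ b :: Y ++ a⁻¹ :: Z ++ b⁻¹ :: W)}
      {H ++ (a :: X ++ b :: Y ++ a⁻¹ :: Z ++ b⁻¹ :: W)} ev) :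
    Presents {l | l ∈ H ++ [a, b, a⁻¹, b⁻¹] ++ (Z ++ Y ++ X ++ W)}
      {H ++ [a, b, a⁻¹, b⁻¹] ++ (Z ++ Y ++ X ++ W)} (slide a b X Y Z (-1) ev) := by
  have hpair' := hpair.perm handle_perm
  have hXYZ : ∀ x ∈ Z ++ Y ++ X, x ∉ ({a, b} : Set L) ∧ x⁻¹ ∉ ({a, b} : Set L) := fun x hx =>
    hpair'.notMem_pair (by simp only [List.mem_append] at hx ⊢; tauto)
  have hslide : ∀ {K : Type u} [Group K] (e : ℤ) {f : L → K}, (∀ l, f l⁻¹ = (f l)⁻¹) →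
      slide a b X Y Z (-e) (slide a b X Y Z e f) = f := fun e _ hf =>
    slide_slide_neg hpair'.pair.1 hXYZ hf
  have hS : {l | l ∈ H ++ (a :: X ++ b :: Y ++ a⁻¹ :: Z ++ b⁻¹ :: W)} =
      {l | l ∈ H ++ [a, b, a⁻¹, b⁻¹] ++ (Z ++ Y ++ X ++ W)} :=
    Set.ext fun x => (handle_perm.trans handle_perm'.symm).mem_iff
  rw [hS] at h
  have hmem : ∀ x ∈ Z ++ Y ++ X, x ∈ H ++ [a, b, a⁻¹, b⁻¹] ++ (Z ++ Y ++ X ++ W) :=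
    fun x hx => List.mem_append_right _ (List.mem_append_left _ hx)
  refine h.transport (slide a b X Y Z (-1)) (slide a b X Y Z 1)
    (fun {K} _ f hf => ⟨slide_inv hpair' hf.1, ?_⟩) (fun {K} _ f hf => ⟨slide_inv hpair' hf.1, ?_⟩)
    (fun hf l _ => congrFun (hslide 1 hf.1) l) (fun hf l _ => congrFun (hslide (-1) hf.1) l)
    (fun F f => comp_slide F) (fun F f => comp_slide F)
    (slide_congr (by simp) (by simp) hmem) (slide_congr (by simp) (by simp) hmem)
  · rintro _ rfl
    rw [← prod_map_slide hpair' (slide_inv hpair' hf.1), ← neg_neg 1, neg_neg (-1 : ℤ),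
      hslide (-1) hf.1]
    exact hf.2 _ rfl
  · rintro _ rfl
    rw [prod_map_slide hpair' hf.1]
    exact hf.2 _ rfl

end Handles

section NormalForm

variable {hs : List (L × L)} {w : List L} {G : Type u} [Group G] {ev : L → G}

/-- The boundary word of the standard polygon whose handles are the pairs in `hs`. -/
def handles (hs : List (L × L)) : List L :=
  hs.flatMap fun h => [h.1, h.2, h.1⁻¹, h.2⁻¹]

theorem inv_mem_handles {l : L} (hl : l ∈ handles hs) : l⁻¹ ∈ handles hs := by
  simp only [handles, List.mem_flatMap, List.mem_cons, List.not_mem_nil, or_false] at hl ⊢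
  obtain ⟨h, hh, hl⟩ := hl
  refine ⟨h, hh, ?_⟩
  rcases hl with rfl | rfl | rfl | rfl <;> simp

theorem IsPairing.of_handles_append (h : IsPairing (handles hs ++ w)) : IsPairing w where
  nodup := (List.nodup_append.mp h.nodup).2.1
  inv_mem l hl := by
    have hmem := h.inv_mem l (List.mem_append_right _ hl)
    refine (List.mem_append.mp hmem).resolve_left fun hl' => ?_
    exact (List.nodup_append.mp h.nodup).2.2 l (inv_inv l ▸ inv_mem_handles hl') l hl rfl
  inv_ne l hl := h.inv_ne l (List.mem_append_right _ hl)

theorem OneVertex.exists_linked {a : L} {M N : List L} (h : OneVertex [a :: (M ++ a⁻¹ :: N)])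
    (hpair : IsPairing (a :: (M ++ a⁻¹ :: N))) : ∃ b ∈ M, b⁻¹ ∈ N := by
  classical
  by_contra! hlink
  have hpair' := hpair.perm ((List.perm_middle (a := a⁻¹)).cons a)
  have hinv_ne : a⁻¹ ≠ a := hpair'.inv_ne a (by simp)
  have hM : ∀ x ∈ M, x⁻¹ ∈ M := fun x hx => by
    have := hpair'.of_cons_cons.inv_mem x (List.mem_append_left _ hx)
    exact (List.mem_append.mp this).resolve_right (hlink x hx)
  have hne : ∀ x ∈ M ++ N, x ≠ a ∧ x ≠ a⁻¹ := fun x hx => hpair'.ne_and_ne_inv_of_mem hx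
  have haM : a ∉ M := fun ha => (hne a (by simp [ha])).1 rfl
  have haN : ∀ x ∈ N, x ∉ M := fun x hx hxM =>
    (List.nodup_append.mp hpair'.of_cons_cons.nodup).2.2 x hxM x hx rfl
  have hN : ∀ x ∈ N, x⁻¹ ∉ M := fun x hx hxM => haN x hx (inv_inv x ▸ hM _ hxM)
  let src : L → Bool := fun x => decide (x ∈ M ∨ x = a⁻¹)
  have hsrc : src a = false := decide_eq_false (by simp [haM, hinv_ne.symm])
  have hsrc' : src a⁻¹ = true := decide_eq_true (Or.inr rfl)
  have key := h src fun w hw => by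
    obtain rfl := List.mem_singleton.mp hw
    refine ⟨false, hsrc, isPath_append.mpr ⟨true, ?_, hsrc', ?_⟩⟩
    · rw [hsrc']
      exact isPath_of_forall_eq fun x hx => by simp [src, hx, hM x hx]
    · rw [inv_inv, hsrc]
      refine isPath_of_forall_eq fun x hx => ?_
      simp [src, haN x hx, hN x hx, hne x (List.mem_append_right _ hx)]
  exact absurd (key a (by simp) a⁻¹ (by simp)) (by simp [hsrc, hsrc'])

theorem Presents.exists_handles (hpair : IsPairing (handles hs ++ w)) (hvert : OneVertex [w])
    (h : Presents {l | l ∈ handles hs ++ w} {handles hs ++ w} ev) :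
    ∃ (hs : List (L × L)) (ev : L → G), IsPairing (handles hs) ∧
      Presents {l | l ∈ handles hs} {handles hs} ev := by
  induction hn : w.length using Nat.strong_induction_on generalizing w hs ev with | _ n ih
  rcases w with - | ⟨a, w⟩
  · rw [List.append_nil] at hpair h
    exact ⟨hs, ev, hpair, h⟩
  have hpair' := hpair.of_handles_append
  have ha : a⁻¹ ∈ w := (List.mem_cons.mp (hpair'.inv_mem a List.mem_cons_self)).resolve_left
    (hpair'.inv_ne a List.mem_cons_self)
  obtain ⟨M, N, rfl⟩ := List.append_of_mem ha
  obtain ⟨b, hbM, hbN⟩ := hvert.exists_linked hpair'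
  obtain ⟨X, Y, rfl⟩ := List.append_of_mem hbM
  obtain ⟨Z, W, rfl⟩ := List.append_of_mem hbN
  have hw : a :: (X ++ b :: Y ++ a⁻¹ :: (Z ++ b⁻¹ :: W)) =
    a :: X ++ b :: Y ++ a⁻¹ :: Z ++ b⁻¹ :: W := by simp
  rw [hw] at hpair hpair' hvert h
  have hsnoc : handles (hs ++ [(a, b)]) = handles hs ++ [a, b, a⁻¹, b⁻¹] := by simp [handles]
  refine ih (Z ++ Y ++ X ++ W).length ?_ (hs := hs ++ [(a, b)])
    (ev := slide a b X Y Z (-1) ev) ?_ (hvert.handle hpair') ?_ rfl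
  · simp at hn ⊢
    omega
  · rw [hsnoc]
    exact hpair.perm (handle_perm.trans handle_perm'.symm)
  · rw [hsnoc]
    exact h.handle hpair

theorem OneVertexSurface.exists_handles {ws : List (List L)} (h : OneVertexSurface ws ev) :
    ∃ (hs : List (L × L)) (ev : L → G), IsPairing (handles hs) ∧
      Presents {l | l ∈ handles hs} {handles hs} ev := by
  obtain ⟨w, hpair, hpres, hvert⟩ := h.exists_singleton
  rw [List.flatten_singleton] at hpair
  refine Presents.exists_handles (hs := []) (w := w) (ev := ev) hpair hvert ?_
  simpa [handles] using hpres

end NormalForm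

section PresentedGroup

variable {G ι : Type u} [Group G] {S : Set L} {R : Set (List L)} {ev : L → G}

theorem Presents.nonempty_mulEquiv_presentedGroup (h : Presents S R ev) {lab : ι → L}
    (hlab : lab.Injective) (hlab_inv : ∀ i j, (lab i)⁻¹ ≠ lab j)
    (hS : ∀ l, l ∈ S ↔ ∃ i, l = lab i ∨ l = (lab i)⁻¹) {rels : Set (FreeGroup ι)}
    (hR : ∀ {K : Type u} [Group K] {f : L → K}, (∀ l, f l⁻¹ = (f l)⁻¹) →
      ((∀ w ∈ R, (w.map f).prod = 1) ↔ ∀ r ∈ rels, FreeGroup.lift (f ∘ lab) r = 1)) :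
    Nonempty (G ≃* PresentedGroup rels) := by
  let f : L → PresentedGroup rels :=
    override (Set.range lab) (Function.extend lab PresentedGroup.of 1) 1
  have hf_lab : f ∘ lab = PresentedGroup.of := funext fun i =>
    (override_of_mem (Set.mem_range_self i)).trans (hlab.extend_apply _ _ i)
  have hf_inv : ∀ l, f l⁻¹ = (f l)⁻¹ := override_inv
    (by rintro _ ⟨i, rfl⟩ ⟨j, hj⟩; exact hlab_inv i j hj.symm) fun _ => inv_one.symm
  have hf : Solves R f := ⟨hf_inv, (hR hf_inv).mpr fun r hr => by
    rw [hf_lab, ← PresentedGroup.one_of_mem hr]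
    exact (FreeGroup.lift_unique (PresentedGroup.mk rels) fun _ => rfl).symm⟩
  obtain ⟨F, hF, -⟩ := h.existsUnique_hom hf
  let F' : PresentedGroup rels →* G :=
    PresentedGroup.toGroup (f := ev ∘ lab) ((hR h.solves.1).mp h.solves.2)
  have hF' : ∀ i, F' (PresentedGroup.of i) = ev (lab i) := fun i => PresentedGroup.toGroup.of _
  have hF_lab : ∀ i, F (ev (lab i)) = PresentedGroup.of i := fun i =>
    (hF _ ((hS _).mpr ⟨i, Or.inl rfl⟩)).trans (congrFun hf_lab i)
  refine ⟨MonoidHom.toMulEquiv F F' (h.hom_ext fun l hl => ?_) (PresentedGroup.ext fun i => ?_)⟩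
  · obtain ⟨i, rfl | rfl⟩ := (hS l).mp hl
    · simp [hF_lab, hF']
    · simp [hF_lab, hF', h.solves.1]
  · simp [hF_lab, hF']

end PresentedGroup

section Handles

variable {hs : List (L × L)}

/-- The edges `aᵢ` and `bᵢ` of the handles `hs`, indexed like the generators of a surface group. -/
def handleEdge (hs : List (L × L)) (x : Fin hs.length × Fin 2) : L :=
  if x.2 = 0 then (hs.get x.1).1 else (hs.get x.1).2

theorem exists_handles_perm_map_handleEdge (hs : List (L × L)) :
    ∃ E : List (Fin hs.length × Fin 2), (∀ x, x ∈ E) ∧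
      (handles hs).Perm (E.map (handleEdge hs) ++ (E.map (handleEdge hs)).map (·⁻¹)) := by
  let E := (List.finRange hs.length).flatMap fun i => (List.finRange 2).map (i, ·)
  have hmap : E.map (handleEdge hs) = hs.flatMap fun h => [h.1, h.2] := by
    conv_rhs => rw [← List.map_get_finRange hs, List.flatMap_map]
    rw [List.map_flatMap]
    rfl
  refine ⟨E, fun x => List.mem_flatMap.mpr
    ⟨x.1, by simp, List.mem_map.mpr ⟨x.2, by simp⟩⟩, ?_⟩
  rw [hmap, List.map_flatMap]
  exact (List.flatMap_append_perm hs (fun h => [h.1, h.2])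
    fun h => [h.1, h.2].map (·⁻¹)).symm

theorem IsPairing.handleEdge_injective (h : IsPairing (handles hs)) :
    (handleEdge hs).Injective := fun x y hxy => by
  obtain ⟨E, hE, hperm⟩ := exists_handles_perm_map_handleEdge hs
  have hnodup := List.nodup_append.mp (hperm.nodup_iff.mp h.nodup)
  exact List.inj_on_of_nodup_map hnodup.1 (hE x) (hE y) hxy

theorem IsPairing.inv_handleEdge_ne (h : IsPairing (handles hs)) (x y : Fin hs.length × Fin 2) :
    (handleEdge hs x)⁻¹ ≠ handleEdge hs y := by
  obtain ⟨E, hE, hperm⟩ := exists_handles_perm_map_handleEdge hs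
  have hnodup := List.nodup_append.mp (hperm.nodup_iff.mp h.nodup)
  exact (hnodup.2.2 _ (List.mem_map_of_mem (hE y)) _
    (List.mem_map_of_mem (List.mem_map_of_mem (hE x)))).symm

theorem mem_handles_iff {l : L} :
    l ∈ handles hs ↔ ∃ x, l = handleEdge hs x ∨ l = (handleEdge hs x)⁻¹ := by
  obtain ⟨E, hE, hperm⟩ := exists_handles_perm_map_handleEdge hs
  simp only [hperm.mem_iff, List.mem_append, List.mem_map, hE, true_and, exists_exists_eq_and,
    exists_or, eq_comm (a := l)]

theorem lift_surfaceRelator {K : Type*} [Group K] {f : L → K} (hf : ∀ l, f l⁻¹ = (f l)⁻¹) :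
    FreeGroup.lift (f ∘ handleEdge hs) (surfaceRelator hs.length) = ((handles hs).map f).prod := by
  have hprod : ((handles hs).map f).prod =
      (hs.map fun h => f h.1 * f h.2 * (f h.1)⁻¹ * (f h.2)⁻¹).prod := by
    simp only [handles, List.flatMap, List.map_flatten, List.prod_flatten, List.map_map]
    congr 2
    funext h
    simp [hf, mul_assoc]
  have hget : hs.map (fun h => f h.1 * f h.2 * (f h.1)⁻¹ * (f h.2)⁻¹) = List.ofFn
      fun i => f (hs.get i).1 * f (hs.get i).2 * (f (hs.get i).1)⁻¹ * (f (hs.get i).2)⁻¹ := by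
    conv_lhs => rw [← List.ofFn_get hs, List.map_ofFn]
    rfl
  rw [hprod, hget, surfaceRelator, map_list_prod, List.map_ofFn]
  congr 2
  funext i
  simp [handleEdge]

variable {G : Type} [Group G] {ev : L → G}

theorem Presents.nonempty_mulEquiv_surfaceGroup (hpair : IsPairing (handles hs))
    (h : Presents {l | l ∈ handles hs} {handles hs} ev) :
    Nonempty (G ≃* SurfaceGroup hs.length) :=
  h.nonempty_mulEquiv_presentedGroup hpair.handleEdge_injective hpair.inv_handleEdge_ne
    (fun _ => mem_handles_iff) fun hf => by simp [lift_surfaceRelator hf]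

theorem Presents.commute_of_handles_singleton {p : L × L}
    (h : Presents {l | l ∈ handles [p]} {handles [p]} ev) (x y : G) : x * y = y * x := by
  have hmem : ∀ l, l ∈ handles [p] ↔ l = p.1 ∨ l = p.2 ∨ l = p.1⁻¹ ∨ l = p.2⁻¹ := by
    simp [handles]
  have hinv := h.solves.1
  have hprod := h.solves.2 _ rfl
  simp only [handles, List.flatMap_cons, List.flatMap_nil, List.append_nil, List.map_cons,
    List.map_nil, List.prod_cons, List.prod_nil, hinv, mul_one] at hprod
  have hcomm : Commute (ev p.1) (ev p.2) := by
    rw [← mul_assoc, ← mul_assoc, mul_inv_eq_one, mul_inv_eq_iff_eq_mul] at hprod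
    exact hprod
  have hcomm_ev : ∀ l ∈ handles [p], ∀ l' ∈ handles [p], Commute (ev l) (ev l') := by
    intro l hl l' hl'
    rw [hmem] at hl hl'
    rcases hl with rfl | rfl | rfl | rfl <;> rcases hl' with rfl | rfl | rfl | rfl <;>
      simp [hinv, hcomm, hcomm.symm]
  have hconj : ∀ z, (∀ l ∈ handles [p], Commute z (ev l)) → MulAut.conj z = 1 := fun z hz =>
    MulEquiv.toMonoidHom_injective <| h.hom_ext fun l hl => by
      simp [(hz l hl).eq]
  have key : ∀ z, (∀ l ∈ handles [p], Commute z (ev l)) → ∀ w, Commute z w := fun z hz w => by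
    have := DFunLike.congr_fun (hconj z hz) w
    exact mul_inv_eq_iff_eq_mul.mp this
  exact key x (fun l hl => (key (ev l) (hcomm_ev l hl) x).symm) y

end Handles

end EdgeWord

/-! ### Discrete torsion-free groups are free or surface groups -/

namespace EdgeWord

variable {L V : Type*} [InvolutiveInv L] {w w' : List L} {src : L → V}

theorem exists_isPath_of_isRotated (h : w ~r w') (hw : ∃ p, IsPath src p w p) :
    ∃ p, IsPath src p w' p := by
  obtain ⟨n, rfl⟩ := h
  obtain ⟨p, hp⟩ := hw
  rw [List.rotate_eq_drop_append_take_mod]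
  rw [← List.take_append_drop (n % w.length) w] at hp
  obtain ⟨r, hu, hv⟩ := isPath_append.mp hp
  exact ⟨r, isPath_append.mpr ⟨p, hv, hu⟩⟩

end EdgeWord

theorem isFreeGroup_of_subsingleton (G : Type*) [Group G] [Subsingleton G] : IsFreeGroup G :=
  .ofUniqueLift PEmpty (fun _ => 1) fun _ =>
    ⟨1, fun x => x.elim, fun _ _ => MonoidHom.ext fun x => by simp [Subsingleton.elim x 1]⟩

namespace Voronoi.IsFuchsian

universe u

open EdgeWord Minkowski

section TurnCycle

variable {G : Type u} [Group G] {ρ : Representation ℝ G Space} (hρ : IsFuchsian ρ) {s t : G}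

/-- The sides of the central cell whose translates surround the vertex at the end of `s`, in turn.
The starting point is chosen so that all sides of the list have the same `turnCycle`. -/
noncomputable def turnCycle (s : G) : List G := (Function.periodicOrbit hρ.turn s).out

/-- The relators attached to the vertices of the tessellation. -/
def vertexWords : Set (List G) := hρ.turnCycle '' cornerSides ρ

lemma isRotated_turnCycle (s : G) : hρ.turnCycle s ~r
    (List.range (Function.minimalPeriod hρ.turn s)).map (hρ.turn^[·] s) :=
  Cycle.coe_eq_coe.mp (Quotient.out_eq _)

lemma nodup_turnCycle (s : G) : (hρ.turnCycle s).Nodup :=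
  (hρ.isRotated_turnCycle s).nodup_iff.mpr Function.nodup_periodicOrbit

lemma prod_map_turnCycle_eq_one_iff {K : Type*} [Group K] {f : G → K} :
    ((hρ.turnCycle s).map f).prod = 1 ↔
      iterateProd hρ.turn f s (Function.minimalPeriod hρ.turn s) = 1 := by
  rw [prod_map_eq_one_iff_of_isRotated f (hρ.isRotated_turnCycle s), List.map_map]
  rfl

variable (hs : s ∈ cornerSides ρ)
include hs

lemma mem_turnCycle : t ∈ hρ.turnCycle s ↔ ∃ i, hρ.turn^[i] s = t :=
  (hρ.isRotated_turnCycle s).mem_iff.trans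
    (Function.mem_periodicOrbit_iff (hρ.turn_mem_periodicPts hs))

lemma self_mem_turnCycle : s ∈ hρ.turnCycle s := (hρ.mem_turnCycle hs).mpr ⟨0, rfl⟩

lemma mem_cornerSides_of_mem_turnCycle (ht : t ∈ hρ.turnCycle s) : t ∈ cornerSides ρ := by
  obtain ⟨i, rfl⟩ := (hρ.mem_turnCycle hs).mp ht
  exact hρ.iterate_turn_mem_cornerSides hs i

lemma turnCycle_eq_of_mem (ht : t ∈ hρ.turnCycle s) : hρ.turnCycle t = hρ.turnCycle s := by
  obtain ⟨i, rfl⟩ := (hρ.mem_turnCycle hs).mp ht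
  rw [turnCycle, Function.periodicOrbit_apply_iterate_eq (hρ.turn_mem_periodicPts hs), turnCycle]

lemma turnCycle_turn : hρ.turnCycle (hρ.turn s) = hρ.turnCycle s :=
  hρ.turnCycle_eq_of_mem hs ((hρ.mem_turnCycle hs).mpr ⟨1, rfl⟩)

lemma src_turn_eq {V : Type*} {src : G → V} (h : ∃ p, IsPath src p (hρ.turnCycle s) p) :
    src (hρ.turn s) = src s⁻¹ := by
  obtain ⟨p, hp⟩ := exists_isPath_of_isRotated (hρ.isRotated_turnCycle s) h
  have hpos := Function.minimalPeriod_pos_of_mem_periodicPts (hρ.turn_mem_periodicPts hs)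
  have hper := Function.iterate_minimalPeriod (f := hρ.turn) (x := s)
  match hn : Function.minimalPeriod hρ.turn s with
  | 0 => omega
  | 1 =>
    rw [hn, Function.iterate_one] at hper
    obtain ⟨hsrc, hend⟩ : src s = p ∧ src s⁻¹ = p := by simpa [hn, IsPath] using hp
    rw [hper, hsrc, hend]
  | n + 2 =>
    simp only [hn, List.range_succ_eq_map, List.map_cons, IsPath] at hp
    exact hp.2.1

omit hs

lemma isGluing_vertexWords : IsGluing (sides ρ) hρ.vertexWords where
  inv_mem _ := hρ.inv_mem_sides
  inv_ne _ := hρ.inv_ne_self_of_mem_sides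
  mem_of_mem := by
    rintro _ ⟨s, hs, rfl⟩ t ht
    exact hρ.cornerSides_subset_sides (hρ.mem_cornerSides_of_mem_turnCycle hs ht)
  nodup := by
    rintro _ ⟨s, -, rfl⟩
    exact hρ.nodup_turnCycle s
  eq_of_mem := by
    rintro _ ⟨s, hs, rfl⟩ _ ⟨s', hs', rfl⟩ t ht ht'
    rw [← hρ.turnCycle_eq_of_mem hs ht, hρ.turnCycle_eq_of_mem hs' ht']

lemma presents_vertexWords : Presents (sides ρ) hρ.vertexWords (id : G → G) where
  solves := by
    refine ⟨fun _ => rfl, ?_⟩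
    rintro _ ⟨s, hs, rfl⟩
    exact hρ.prod_map_turnCycle_eq_one_iff.mpr
      (hρ.iterateProd_turn_eq_one hs Function.iterate_minimalPeriod)
  existsUnique_hom {K _ f} hf := by
    obtain ⟨F, hF⟩ := hρ.exists_monoidHom (fun s _ => hf.1 s) fun s hs =>
      ⟨0, hρ.prod_map_turnCycle_eq_one_iff.mp (hf.2 _ ⟨s, hs, rfl⟩)⟩
    refine ⟨F, hF, fun F' hF' => MonoidHom.eq_of_eqOn_dense hρ.closure_sides fun s hs => ?_⟩
    rw [hF s hs]
    exact hF' s hs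

lemma isClosedChain_of_forall_exists_inv_mem {C : Set (List G)} (hCR : C ⊆ hρ.vertexWords)
    (hfin : C.Finite) (hne : C.Nonempty)
    (hclosed : ∀ w ∈ C, ∀ l ∈ w, ∀ w' ∈ hρ.vertexWords, l⁻¹ ∈ w' → w' ∈ C)
    (hpaired : ∀ w ∈ C, ∀ l ∈ w, ∃ w' ∈ hρ.vertexWords, l⁻¹ ∈ w') :
    hρ.IsClosedChain {s | s ∈ cornerSides ρ ∧ hρ.turnCycle s ∈ C} := by
  have hinv : ∀ s ∈ cornerSides ρ, hρ.turnCycle s ∈ C →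
      s⁻¹ ∈ cornerSides ρ ∧ hρ.turnCycle s⁻¹ ∈ C := fun s hs hsC => by
    have hmem := hρ.self_mem_turnCycle hs
    obtain ⟨_, ⟨t, ht, rfl⟩, hst⟩ := hpaired _ hsC s hmem
    have hinv_corner := hρ.mem_cornerSides_of_mem_turnCycle ht hst
    exact ⟨hinv_corner, hclosed _ hsC s hmem _ ⟨_, hinv_corner, rfl⟩
      (hρ.self_mem_turnCycle hinv_corner)⟩
  refine ⟨(hfin.biUnion fun w _ => w.finite_toSet).subset fun s hs =>
    Set.mem_biUnion hs.2 (hρ.self_mem_turnCycle hs.1), ?_, fun s hs => hs.1,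
    fun s hs => (hinv s hs.1 hs.2).1, fun s hs hsC => ?_, fun s hs => ?_⟩
  · obtain ⟨w, hw⟩ := hne
    obtain ⟨s, hs, rfl⟩ := hCR hw
    exact ⟨s, hs, hw⟩
  · exact hinv s hs (hρ.turnCycle_turn hs ▸ hsC.2)
  · obtain ⟨hcorner, hC⟩ := hinv s hs.1 hs.2
    exact ⟨hρ.turn_mem_cornerSides hcorner, by rwa [hρ.turnCycle_turn hcorner]⟩

theorem isFreeGroup_or_isClosedChain_sides : IsFreeGroup G ∨ hρ.IsClosedChain (sides ρ) := by
  by_contra! ⟨hfree, hchain⟩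
  refine hfree (hρ.presents_vertexWords.isFreeGroup_of_exists_free_edge hρ.isGluing_vertexWords
    fun C hCR hfin hne hclosed => ?_)
  by_contra! hpaired
  have hC := hρ.isClosedChain_of_forall_exists_inv_mem hCR hfin hne hclosed hpaired
  exact hchain (hC.eq_sides ▸ hC)

end TurnCycle

section ClosedSurface

variable {G : Type u} [Group G] {ρ : Representation ℝ G Space} {hρ : IsFuchsian ρ}
  (hC : hρ.IsClosedChain (sides ρ))
include hC

lemma IsClosedChain.cornerSides_eq : cornerSides ρ = sides ρ :=
  hρ.cornerSides_subset_sides.antisymm hC.subset_cornerSides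

/-- The sides whose sources carry a given label form a closed chain, so all sides do. -/
lemma IsClosedChain.oneVertex {ws : List (List G)} (hws : ∀ w, w ∈ ws ↔ w ∈ hρ.vertexWords)
    (hmem : ∀ s, s ∈ ws.flatten ↔ s ∈ sides ρ) : OneVertex ws := by
  intro src hsrc l hl l' hl'
  rw [hmem] at hl hl'
  have hturn : ∀ s ∈ cornerSides ρ, src (hρ.turn s) = src s⁻¹ := fun s hs =>
    hρ.src_turn_eq hs (hsrc _ ((hws _).mpr ⟨s, hs, rfl⟩))
  have hsub : hρ.IsClosedChain {s | s ∈ sides ρ ∧ src s = src l} := by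
    refine ⟨hC.finite.subset fun s hs => hs.1, ⟨l, hl, rfl⟩,
      fun s hs => hC.subset_cornerSides hs.1, fun s hs => hC.inv_mem_cornerSides s hs.1,
      fun s hs hsl => ⟨hC.inv_mem_of_turn_mem s hs hsl.1, by rw [← hturn s hs, hsl.2]⟩,
      fun s hs => ⟨hC.turn_inv_mem s hs.1, ?_⟩⟩
    rw [hturn _ (hC.inv_mem_cornerSides s hs.1), inv_inv, hs.2]
  exact (hsub.eq_sides.ge hl').2.symm

theorem IsClosedChain.exists_oneVertexSurface :
    ∃ ws : List (List G), OneVertexSurface ws (id : G → G) := by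
  have hfin : hρ.vertexWords.Finite := (hC.finite.subset hρ.cornerSides_subset_sides).image _
  let ws := hfin.toFinset.toList
  have hws : ∀ w, w ∈ ws ↔ w ∈ hρ.vertexWords := by simp [ws]
  have hmem : ∀ s, s ∈ ws.flatten ↔ s ∈ sides ρ := fun s => by
    rw [List.mem_flatten]
    constructor
    · rintro ⟨w, hw, hs⟩
      exact hρ.isGluing_vertexWords.mem_of_mem w ((hws w).mp hw) s hs
    · intro hs
      rw [← hC.cornerSides_eq] at hs
      exact ⟨_, (hws _).mpr ⟨s, hs, rfl⟩, hρ.self_mem_turnCycle hs⟩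
  refine ⟨ws, ⟨List.nodup_flatten.mpr ⟨fun w hw => ?_, ?_⟩, fun s hs => ?_, fun s hs => ?_⟩,
    ?_, hC.oneVertex hws hmem⟩
  · exact hρ.isGluing_vertexWords.nodup w ((hws w).mp hw)
  · refine (Finset.nodup_toList _).imp_of_mem fun hw hw' hne s hs hs' => hne ?_
    exact hρ.isGluing_vertexWords.eq_of_mem _ ((hws _).mp hw) _ ((hws _).mp hw') s hs hs'
  · exact (hmem _).mpr (hρ.inv_mem_sides ((hmem s).mp hs))
  · exact hρ.inv_ne_self_of_mem_sides ((hmem s).mp hs)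
  · exact hρ.presents_vertexWords.congr (Set.ext fun s => (hmem s).symm) fun w _ => (hws w).symm

end ClosedSurface

variable {G : Type} [Group G] {ρ : Representation ℝ G Space}

theorem isFreeGroup_or_isSurfaceGroup (hρ : IsFuchsian ρ) :
    IsFreeGroup G ∨ IsSurfaceGroup G := by
  obtain hfree | hC := hρ.isFreeGroup_or_isClosedChain_sides
  · exact Or.inl hfree
  obtain ⟨ws, hws⟩ := hC.exists_oneVertexSurface
  obtain ⟨hs, ev, hpair, hpres⟩ := hws.exists_handles
  match hs with
  | [] =>
    have : Subsingleton G := subsingleton_of_forall_eq 1 fun g => DFunLike.congr_fun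
      (hpres.hom_ext (F := MonoidHom.id G) (F' := 1) (by simp [handles])) g
    exact Or.inl (isFreeGroup_of_subsingleton G)
  | [p] =>
    obtain ⟨δ, hδ, hle⟩ := hC.exists_mul_sq_le_form
    have : Subsingleton G := subsingleton_of_forall_eq 1
      (hρ.eq_one_of_commute hpres.commute_of_handles_singleton hδ hle)
    exact Or.inl (isFreeGroup_of_subsingleton G)
  | p :: q :: hs => exact Or.inr ⟨_, by simp, hpres.nonempty_mulEquiv_surfaceGroup hpair⟩

end Voronoi.IsFuchsian

/-! ### The symmetric square of the standard representation -/

lemma mem_center_SL2_iff {A : SL(2, ℝ)} :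
    A ∈ Subgroup.center SL(2, ℝ) ↔ A = 1 ∨ A = -1 := by
  rw [Matrix.SpecialLinearGroup.mem_center_iff, Fintype.card_fin]
  constructor
  · rintro ⟨r, hr, hA⟩
    refine (sq_eq_one_iff.mp hr).imp ?_ ?_ <;> rintro rfl <;> ext i j <;>
      simp [← hA, Matrix.one_apply, Matrix.diagonal_apply, neg_ite]
  · rintro (rfl | rfl)
    · exact ⟨1, by simp⟩
    · exact ⟨-1, by simp [map_neg, map_one]⟩

namespace Voronoi

open Minkowski Matrix

section SymSquare

/-- The action `X ↦ A * X * Aᵀ` of `2 × 2` matrices on the symmetric matrices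
`!![X 0, X 1; X 1, X 2]`. -/
noncomputable def symSquare : Representation ℝ (Matrix (Fin 2) (Fin 2) ℝ) Space where
  toFun A := toLin' !![A 0 0 ^ 2, 2 * (A 0 0 * A 0 1), A 0 1 ^ 2;
    A 0 0 * A 1 0, A 0 0 * A 1 1 + A 0 1 * A 1 0, A 0 1 * A 1 1;
    A 1 0 ^ 2, 2 * (A 1 0 * A 1 1), A 1 1 ^ 2]
  map_one' := by
    rw [← toLin'_one.trans Module.End.one_eq_id.symm]
    congr 1
    ext i j
    fin_cases i <;> fin_cases j <;> simp
  map_mul' A B := by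
    rw [Module.End.mul_eq_comp, ← toLin'_mul]
    congr 1
    ext i j
    fin_cases i <;> fin_cases j <;> simp [mul_apply, Fin.sum_univ_succ] <;> ring

lemma symSquare_apply (A : Matrix (Fin 2) (Fin 2) ℝ) (X : Space) : symSquare A X =
    ![A 0 0 ^ 2 * X 0 + 2 * (A 0 0 * A 0 1) * X 1 + A 0 1 ^ 2 * X 2,
      A 0 0 * A 1 0 * X 0 + (A 0 0 * A 1 1 + A 0 1 * A 1 0) * X 1 + A 0 1 * A 1 1 * X 2,
      A 1 0 ^ 2 * X 0 + 2 * (A 1 0 * A 1 1) * X 1 + A 1 1 ^ 2 * X 2] := by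
  ext i
  fin_cases i <;> simp [symSquare, mulVec, dotProduct, Fin.sum_univ_succ] <;> ring

variable (A : Matrix (Fin 2) (Fin 2) ℝ)

lemma symSquare_neg : symSquare (-A) = symSquare A :=
  LinearMap.ext fun X => by simp [symSquare_apply]

lemma form_symSquare (X Y : Space) :
    form (symSquare A X) (symSquare A Y) = A.det ^ 2 * form X Y := by
  simp [form_apply, symSquare_apply, det_fin_two]
  ring

lemma vol_symSquare (X Y Z : Space) :
    vol (symSquare A X) (symSquare A Y) (symSquare A Z) = A.det ^ 3 * vol X Y Z := by
  simp [vol_apply, symSquare_apply, det_fin_two]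
  ring

lemma form_origin_symSquare_origin :
    2 * form origin (symSquare A origin) = ∑ i, ∑ j, A i j ^ 2 := by
  rw [form_origin, symSquare_apply]
  simp [origin, Fin.sum_univ_succ]
  ring

variable {A}

lemma symSquare_mem_cone (hA : A.det ≠ 0) {X : Space} (hX : X ∈ cone) : symSquare A X ∈ cone := by
  obtain ⟨h0, hform⟩ := hX
  refine ⟨?_, by rw [form_symSquare]; positivity⟩
  have hsq : X 0 * symSquare A X 0 = (A 0 0 * X 0 + A 0 1 * X 1) ^ 2 + A 0 1 ^ 2 * form X X := by
    simp [form_apply, symSquare_apply]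
    ring
  refine pos_of_mul_pos_right (hsq ▸ ?_) h0.le
  by_cases hb : A 0 1 = 0
  · have ha : A 0 0 ≠ 0 := fun ha => hA (by simp [det_fin_two, ha, hb])
    simp only [hb, zero_mul, add_zero, ne_eq, OfNat.ofNat_ne_zero, not_false_eq_true, zero_pow]
    positivity
  · positivity

end SymSquare

section Projective

/-- The action of `PSL(2, ℝ)` on symmetric matrices induced by `symSquare`. -/
noncomputable def projSymSquare : Representation ℝ PSL(2, ℝ) Space :=
  QuotientGroup.lift _ (symSquare.comp Matrix.SpecialLinearGroup.coeMonoidHom) fun A hA => by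
    obtain rfl | rfl := mem_center_SL2_iff.mp hA
    · exact map_one _
    · exact (symSquare_neg 1).trans (map_one _)

lemma isDiscrete_comap_mk {P : Subgroup PSL(2, ℝ)} (hP : DiscreteTopology P) :
    IsDiscrete (P.comap (QuotientGroup.mk' _) : Set SL(2, ℝ)) := by
  have : T1Space SL(2, ℝ) := Matrix.SpecialLinearGroup.instT1Space
  refine (isDiscrete_iff_discreteTopology.mpr hP : IsDiscrete (P : Set PSL(2, ℝ))).preimage'
    (f := QuotientGroup.mk' _) (continuous_quotient_mk' (X := SL(2, ℝ))).continuousOn fun x => ?_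
  obtain ⟨A, rfl⟩ := QuotientGroup.mk_surjective x
  refine ((Set.toFinite {A, -A}).subset fun B (hB : (B : PSL(2, ℝ)) = A) => ?_).isDiscrete
  obtain h | h := mem_center_SL2_iff.mp (QuotientGroup.eq.mp hB.symm)
  · exact Or.inl (inv_mul_eq_one.mp h).symm
  · exact Or.inr (by simpa using inv_mul_eq_iff_eq_mul.mp h)

lemma isCompact_setOf_mem_Icc (a b : ℝ) :
    IsCompact {A : SL(2, ℝ) | ∀ i j, A i j ∈ Set.Icc a b} :=
  Matrix.SpecialLinearGroup.isClosedEmbedding_val.isCompact_preimage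
    (isCompact_pi_infinite fun _ => isCompact_pi_infinite fun _ => isCompact_Icc)

lemma finite_form_origin_le_of_isDiscrete {Λ : Subgroup SL(2, ℝ)}
    (hΛ : IsDiscrete (Λ : Set SL(2, ℝ))) (R : ℝ) :
    {A | A ∈ Λ ∧ form origin (symSquare A origin) ≤ R}.Finite := by
  have : IsTopologicalGroup SL(2, ℝ) := Matrix.SpecialLinearGroup.topologicalGroup
  have : T1Space SL(2, ℝ) := Matrix.SpecialLinearGroup.instT1Space
  have hfin := (Λ.tendsto_coe_cofinite_of_discrete hΛ)
    (isCompact_setOf_mem_Icc (-√(2 * R)) √(2 * R)).compl_mem_cocompact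
  refine (Set.Finite.image Subtype.val hfin).subset fun A ⟨hA, hR⟩ => ?_
  refine ⟨⟨A, hA⟩, not_not.mpr fun i j => abs_le.mp (Real.abs_le_sqrt ?_), rfl⟩
  calc A i j ^ 2 ≤ ∑ j, A i j ^ 2 := Finset.single_le_sum (fun j _ => sq_nonneg _) (by simp)
    _ ≤ ∑ i, ∑ j, A i j ^ 2 :=
      Finset.single_le_sum (f := fun i => ∑ j, A i j ^ 2)
        (fun i _ => Finset.sum_nonneg fun j _ => sq_nonneg _) (by simp)
    _ ≤ 2 * R := by linarith [form_origin_symSquare_origin A.1]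

theorem isFuchsian_comp_projSymSquare {G : Type*} [Group G] {ψ : G →* PSL(2, ℝ)}
    (hinj : Function.Injective ψ) (hdisc : DiscreteTopology ψ.range)
    (htf : ∀ g : G, IsOfFinOrder g → g = 1) : IsFuchsian (projSymSquare.comp ψ) := by
  have hlift : ∀ g, ∃ A : SL(2, ℝ), (A : PSL(2, ℝ)) = ψ g ∧
      projSymSquare.comp ψ g = symSquare A := fun g => by
    obtain ⟨A, hA⟩ := QuotientGroup.mk_surjective (ψ g)
    exact ⟨A, hA, congrArg projSymSquare hA.symm⟩
  choose A hA hρ using hlift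
  refine ⟨fun g X Y => ?_, fun g X hX => ?_, fun g X Y Z => ?_, fun R => ?_, htf⟩
  · rw [hρ, form_symSquare, (A g).det_coe, one_pow, one_mul]
  · rw [hρ]
    exact symSquare_mem_cone (by simp) hX
  · rw [hρ, vol_symSquare, (A g).det_coe, one_pow, one_mul]
  · refine .of_finite_image
      ((finite_form_origin_le_of_isDiscrete (isDiscrete_comap_mk hdisc) R).subset ?_)
      (f := A) fun g _ h _ hgh => hinj (by rw [← hA, hgh, hA])
    rintro _ ⟨g, hg, rfl⟩
    exact ⟨⟨g, (hA g).symm⟩, by rwa [← hρ g]⟩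

end Projective

end Voronoi

/-! ### Selberg's lemma -/

section Selberg

lemma isJacobsonRing_int : IsJacobsonRing ℤ := by
  refine isJacobsonRing_iff_prime_eq.mpr fun P hP ↦ ?_
  rcases eq_or_ne P ⊥ with rfl | hne
  · refine eq_bot_iff.mpr fun x hx ↦ ?_
    obtain h | h := Int.isUnit_iff.mp (Ideal.mem_jacobson_bot.mp hx x)
    · exact mul_self_eq_zero.mp (by lia)
    · nlinarith [mul_self_nonneg x]
  · have := hP.isMaximal hne
    exact Ideal.jacobson_eq_self_of_isMaximal

lemma finite_of_finiteType_int (K : Type*) [Field K] [alg : Algebra ℤ K] [Algebra.FiniteType ℤ K] :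
    Finite K := by
  obtain rfl : alg = Ring.toIntAlgebra K := Subsingleton.elim _ _
  have := isJacobsonRing_int
  have : Module.Finite ℤ K := finite_of_finite_type_of_isJacobsonRing ℤ K
  obtain ⟨p, hp⟩ := CharP.exists K
  rcases eq_or_ne p 0 with rfl | hp0
  · have : CharZero K := CharP.charP_to_charZero K
    exact absurd (isField_of_isIntegral_of_isField (algebraMap ℤ K).injective_int
      (Field.toIsField K)) Int.not_isField
  · refine Module.finite_of_fg_torsion K fun {x} ↦
      ⟨⟨p, mem_nonZeroDivisors_of_ne_zero (mod_cast hp0)⟩, ?_⟩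
    simp [Submonoid.smul_def]

lemma finite_quotient_of_finiteType_int {A : Type*} [CommRing A] [Algebra.FiniteType ℤ A]
    (m : Ideal A) [m.IsMaximal] : Finite (A ⧸ m) := by
  let := Ideal.Quotient.field m
  have : Algebra.FiniteType ℤ (A ⧸ m) :=
    .of_surjective (Ideal.Quotient.mkₐ ℤ m) (Ideal.Quotient.mkₐ_surjective ℤ m)
  exact finite_of_finiteType_int (A ⧸ m)

lemma exists_isMaximal_notMem {R : Type*} [CommRing R] [IsDomain R] [IsJacobsonRing R] {x : R}
    (hx : x ≠ 0) : ∃ m : Ideal R, m.IsMaximal ∧ x ∉ m := by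
  by_contra! h
  have hmem : x ∈ (⊥ : Ideal R).jacobson := Ideal.mem_sInf.mpr fun _ hm ↦ h _ hm.2
  rw [← Ideal.radical_eq_jacobson, Ideal.isPrime_bot.radical] at hmem
  exact hx hmem

lemma exists_one_add_pow_eq {R : Type*} [Ring R] (x : R) (n : ℕ) :
    ∃ y, (1 + x) ^ n = 1 + n * x + y * x ^ 2 := by
  obtain ⟨q, hq⟩ := Polynomial.powAddExpansion (1 : Polynomial ℤ) Polynomial.X n
  exact ⟨Polynomial.aeval x q, by simpa using congrArg (Polynomial.aeval x) hq⟩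

variable {n : Type*} [Fintype n] [DecidableEq n] {R : Type*} [CommRing R]

/- If `X ≠ 0` is the least-order term of `1 + X` in the `m`-adic filtration, then `r X` and the
quadratic remainder of `(1 + X) ^ r` cannot cancel. -/
lemma entry_mem_pow_of_one_add_pow_eq_one {m : Ideal R} [m.IsMaximal] {r : ℕ} (hr : (r : R) ∉ m)
    {X : Matrix n n R} (hX : ∀ i j, X i j ∈ m) (hpow : (1 + X) ^ r = 1) (k : ℕ) (i j : n) :
    X i j ∈ m ^ (k + 1) := by
  induction k generalizing i j with
  | zero => simpa using hX i j
  | succ k ih =>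
    obtain ⟨Y, hY⟩ := exists_one_add_pow_eq X r
    have hcancel : r • X = -(Y * X ^ 2) := by
      rw [nsmul_eq_mul, eq_neg_iff_add_eq_zero, ← add_right_inj 1, ← add_assoc, ← hY, hpow,
        add_zero]
    have hrX : r * X i j ∈ m ^ (k + 1 + 1) := by
      have := congrFun (congrFun hcancel i) j
      rw [Matrix.smul_apply, nsmul_eq_mul, Matrix.neg_apply, Matrix.mul_apply] at this
      rw [this, neg_mem_iff]
      refine Ideal.sum_mem _ fun a _ ↦ Ideal.mul_mem_left _ _ ?_
      rw [sq, Matrix.mul_apply, pow_succ]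
      exact Ideal.sum_mem _ fun b _ ↦ Ideal.mul_mem_mul (ih a b) (hX b j)
    obtain ⟨s, y, hy, hs⟩ := Ideal.IsMaximal.exists_inv_pow m hr (k + 1 + 1)
    have hsplit : X i j = s * (r * X i j) + y * X i j := by
      rw [← mul_assoc, ← add_mul, hs, one_mul]
    rw [hsplit]
    exact add_mem (Ideal.mul_mem_left _ _ hrX) (Ideal.mul_mem_right _ _ hy)

lemma eq_one_of_pow_eq_one_of_map_mk_eq_one [IsDomain R] [IsNoetherianRing R] {m : Ideal R}
    [m.IsMaximal] {r : ℕ} (hr : (r : R) ∉ m) {a : Matrix.SpecialLinearGroup n R}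
    (ha : Matrix.SpecialLinearGroup.map (Ideal.Quotient.mk m) a = 1) (hpow : a ^ r = 1) :
    a = 1 := by
  obtain ⟨X, hX⟩ : ∃ X : Matrix n n R, (a : Matrix n n R) = 1 + X := ⟨a - 1, by simp⟩
  have hXm (i j : n) : X i j ∈ m := by
    have hentry := congrArg (fun b : Matrix.SpecialLinearGroup n (R ⧸ m) ↦ b i j) ha
    simp only [Matrix.SpecialLinearGroup.map_apply_coe, RingHom.mapMatrix_apply, hX,
      Matrix.map_apply, Matrix.add_apply, map_add, Matrix.SpecialLinearGroup.coe_one,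
      Matrix.one_apply, map_one, add_eq_left] at hentry
    exact Ideal.Quotient.eq_zero_iff_mem.mp hentry
  have hXpow : (1 + X) ^ r = 1 := by
    rw [← hX, ← Matrix.SpecialLinearGroup.coe_pow, hpow, Matrix.SpecialLinearGroup.coe_one]
  have hX0 : X = 0 := by
    ext i j
    have hmem : X i j ∈ ⨅ k : ℕ, m ^ k := Ideal.mem_iInf.mpr fun k ↦
      Ideal.pow_le_pow_right k.le_succ (entry_mem_pow_of_one_add_pow_eq_one hr hXm hXpow k i j)
    rwa [Ideal.iInf_pow_eq_bot_of_isDomain m (Ideal.IsMaximal.ne_top ‹_›)] at hmem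
  exact Subtype.ext (by rw [hX, hX0, add_zero, Matrix.SpecialLinearGroup.coe_one])

lemma eq_one_of_isOfFinOrder_of_forall_prime {G : Type*} [Group G] {K : Subgroup G}
    (hK : ∀ a ∈ K, ∀ p : ℕ, p.Prime → a ^ p = 1 → a = 1) {a : G} (ha : a ∈ K)
    (hfin : IsOfFinOrder a) : a = 1 := by
  by_contra hne
  obtain ⟨p, hp, k, hk⟩ := Nat.exists_prime_and_dvd (mt orderOf_eq_one_iff.mp hne)
  have hpos := hfin.orderOf_pos
  have hroot : a ^ k = 1 := hK _ (pow_mem ha k) p hp (by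
    rw [← pow_mul, mul_comm, ← hk, pow_orderOf_eq_one])
  have hk0 : 0 < k := Nat.pos_of_mul_pos_left (hk ▸ hpos)
  have hle := orderOf_le_of_pow_eq_one hk0 hroot
  exact hle.not_gt (hk ▸ lt_mul_left hk0 hp.one_lt)

/- Two congruence subgroups whose residue fields have different characteristics: the first can only
have `p`-torsion, the second has none. -/
variable (n R) in
lemma exists_finiteIndex_torsionFree_of_finiteType_int [IsDomain R] [CharZero R]
    [Algebra.FiniteType ℤ R] : ∃ K : Subgroup (Matrix.SpecialLinearGroup n R),
      K.FiniteIndex ∧ ∀ a ∈ K, IsOfFinOrder a → a = 1 := by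
  have := isJacobsonRing_int
  have : IsJacobsonRing R := isJacobsonRing_of_finiteType (A := ℤ)
  have : IsNoetherianRing R := Algebra.FiniteType.isNoetherianRing ℤ R
  obtain ⟨m, hm⟩ := Ideal.exists_maximal R
  have := finite_quotient_of_finiteType_int m
  let p := ringChar (R ⧸ m)
  have hp : p ≠ 0 := CharP.ringChar_ne_zero_of_finite (R ⧸ m)
  obtain ⟨m', hm', hpm'⟩ := exists_isMaximal_notMem (Nat.cast_ne_zero (R := R).mpr hp)
  have := finite_quotient_of_finiteType_int m'
  refine ⟨(Matrix.SpecialLinearGroup.map (n := n) (Ideal.Quotient.mk m)).ker ⊓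
    (Matrix.SpecialLinearGroup.map (Ideal.Quotient.mk m')).ker, inferInstance, fun a ha hfin ↦
    eq_one_of_isOfFinOrder_of_forall_prime (fun b hb r hr hbr ↦ ?_) ha hfin⟩
  by_cases hrm : (r : R) ∈ m
  · have hpr : p ∣ r := by
      rw [← ringChar.spec, ← map_natCast (Ideal.Quotient.mk m)]
      exact Ideal.Quotient.eq_zero_iff_mem.mpr hrm
    have hrp : r = p :=
      ((Nat.dvd_prime hr).mp hpr).resolve_left (CharP.ringChar_ne_one (R := R ⧸ m)) |>.symm
    exact eq_one_of_pow_eq_one_of_map_mk_eq_one (hrp ▸ hpm') hb.2 hbr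
  · exact eq_one_of_pow_eq_one_of_map_mk_eq_one hrm hb.1 hbr

lemma exists_finiteType_le_range_map {H : Subgroup (Matrix.SpecialLinearGroup n R)} (hH : H.FG) :
    ∃ A : Subalgebra ℤ R, Algebra.FiniteType ℤ A ∧
      H ≤ (Matrix.SpecialLinearGroup.map (n := n) (algebraMap A R)).range := by
  obtain ⟨s, rfl⟩ := hH
  let E : Set R := ⋃ a ∈ s, ⋃ i, Set.range (a.1 i)
  have hE : E.Finite :=
    s.finite_toSet.biUnion fun a _ ↦ Set.finite_iUnion fun i ↦ Set.finite_range (a.1 i)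
  refine ⟨Algebra.adjoin ℤ E, .adjoin_of_finite hE, (Subgroup.closure_le _).mpr fun a ha ↦ ?_⟩
  have hmem (i j : n) : a i j ∈ Algebra.adjoin ℤ E :=
    Algebra.subset_adjoin (Set.mem_biUnion ha (Set.mem_iUnion.mpr ⟨i, j, rfl⟩))
  let M : Matrix n n (Algebra.adjoin ℤ E) := fun i j ↦ ⟨a i j, hmem i j⟩
  have hM : M.det = 1 :=
    Subtype.ext (((algebraMap (Algebra.adjoin ℤ E) R).map_det M).trans a.det_coe)
  exact ⟨⟨M, hM⟩, Matrix.SpecialLinearGroup.ext _ _ fun _ _ ↦ rfl⟩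

theorem exists_relIndex_ne_zero_torsionFree [IsDomain R] [CharZero R]
    {H : Subgroup (Matrix.SpecialLinearGroup n R)} (hH : H.FG) :
    ∃ K : Subgroup (Matrix.SpecialLinearGroup n R),
      K.relIndex H ≠ 0 ∧ ∀ a ∈ K, IsOfFinOrder a → a = 1 := by
  obtain ⟨A, hA, hle⟩ := exists_finiteType_le_range_map hH
  obtain ⟨K, hK, htf⟩ := exists_finiteIndex_torsionFree_of_finiteType_int n A
  let θ : Matrix.SpecialLinearGroup n A →* Matrix.SpecialLinearGroup n R :=
    Matrix.SpecialLinearGroup.map (algebraMap A R)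
  have hθ : Function.Injective θ := fun a b hab ↦ Matrix.SpecialLinearGroup.ext _ _ fun i j ↦
    Subtype.ext (congrArg (fun c : Matrix.SpecialLinearGroup n R ↦ c i j) hab)
  have hindex : (K.map θ).relIndex θ.range ≠ 0 := by
    rw [MonoidHom.range_eq_map, Subgroup.relIndex_map_map_of_injective _ _ hθ,
      Subgroup.relIndex_top_right]
    exact hK.index_ne_zero
  refine ⟨K.map θ, fun h ↦ hindex (Subgroup.relIndex_eq_zero_of_le_right hle h), ?_⟩
  rintro _ ⟨a, ha, rfl⟩ hfin
  rw [htf a ha (hθ.isOfFinOrder_iff.mp hfin), map_one]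

/-- **Selberg's lemma** for `PSL(2, ℝ)`. -/
theorem exists_finiteIndex_torsionFree_of_injective_PSL2 {G : Type*} [Group G] [hG : Group.FG G]
    {ψ : G →* PSL(2, ℝ)} (hinj : Function.Injective ψ) :
    ∃ N : Subgroup G, N.FiniteIndex ∧ ∀ g ∈ N, IsOfFinOrder g → g = 1 := by
  let q : SL(2, ℝ) →* PSL(2, ℝ) := QuotientGroup.mk' _
  obtain ⟨s, hs⟩ := hG.out
  choose lift hlift using fun g ↦ QuotientGroup.mk'_surjective (Subgroup.center SL(2, ℝ)) (ψ g)
  classical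
  let H : Subgroup SL(2, ℝ) := Subgroup.closure (s.image lift)
  have hrange : ψ.range ≤ H.map q := by
    rw [MonoidHom.range_eq_map, ← hs, MonoidHom.map_closure, Subgroup.closure_le]
    rintro _ ⟨g, hg, rfl⟩
    exact ⟨lift g, Subgroup.subset_closure (Finset.mem_image_of_mem lift hg), hlift g⟩
  obtain ⟨K, hK, htf⟩ := exists_relIndex_ne_zero_torsionFree ⟨_, rfl⟩ (H := H)
  refine ⟨(K.map q).comap ψ, ⟨?_⟩, ?_⟩
  · rw [Subgroup.index_comap]
    intro h
    have hcomap := Subgroup.relIndex_eq_zero_of_le_right hrange h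
    rw [← Subgroup.relIndex_comap] at hcomap
    exact hK (Subgroup.relIndex_eq_zero_of_le_left (Subgroup.le_comap_map q K) hcomap)
  · rintro g ⟨a, ha, hag⟩ hfin
    have hcenter : IsOfFinOrder a := by
      obtain ⟨k, hk, hgk⟩ := isOfFinOrder_iff_pow_eq_one.mp hfin
      have hak : a ^ k ∈ Subgroup.center SL(2, ℝ) := by
        rw [← QuotientGroup.eq_one_iff]
        exact (map_pow q a k).trans (by rw [hag, ← map_pow, hgk, map_one])
      refine isOfFinOrder_iff_pow_eq_one.mpr ⟨k * 2, by lia, ?_⟩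
      obtain h | h := mem_center_SL2_iff.mp hak <;> simp [pow_mul, h]
    exact hinj (by rw [← hag, htf a ha hcenter, map_one, map_one])

end Selberg

/-! ### Finite extensions -/

section CentralExtension

open scoped commutatorElement

lemma map_mem_zpowers_of_mem_normalClosure {F G : Type*} [Group F] [Group G] (f : F →* G) {r : F}
    (hr : ∀ w, Commute (f w) (f r)) {w : F} (hw : w ∈ Subgroup.normalClosure {r}) :
    f w ∈ Subgroup.zpowers (f r) := by
  suffices Subgroup.normalClosure {r} ≤ (Subgroup.zpowers (f r)).comap f from this hw
  refine (Subgroup.closure_le _).mpr fun x hx ↦ ?_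
  obtain ⟨_, rfl, hconj⟩ := Group.mem_conjugatesOfSet_iff.mp hx
  obtain ⟨g, rfl⟩ := isConj_iff.mp hconj
  refine ⟨1, ?_⟩
  simp only [zpow_one, map_mul, map_inv, (hr g).eq, mul_inv_cancel_right]

/- A Heisenberg group modulo `n`, acting on `ZMod n × ZMod n` by a shear and a translation. -/
lemma exists_finite_central_commutator (n : ℕ) [NeZero n] :
    ∃ (P : Type) (_ : Group P) (_ : Finite P) (a b : P),
      Commute a ⁅a, b⁆ ∧ Commute b ⁅a, b⁆ ∧ orderOf ⁅a, b⁆ = n := by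
  let shear : Equiv.Perm (ZMod n × ZMod n) := (Equiv.refl _).prodShear Equiv.addRight
  let horizontal : Equiv.Perm (ZMod n × ZMod n) := (Equiv.addRight 1).prodCongr (Equiv.refl _)
  let vertical (k : ZMod n) : Equiv.Perm (ZMod n × ZMod n) :=
    (Equiv.refl _).prodCongr (Equiv.addRight k)
  have hcomm : ⁅shear, horizontal⁆ = vertical 1 := by
    rw [commutatorElement_def, mul_inv_eq_iff_eq_mul, mul_inv_eq_iff_eq_mul]
    ext p <;> simp [shear, horizontal, vertical]; ring
  have hpow (k : ℕ) : vertical 1 ^ k = vertical k := by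
    induction k with
    | zero => ext p <;> simp [vertical]
    | succ k ih => rw [pow_succ, ih]; ext p <;> simp [vertical]; ring
  refine ⟨_, inferInstance, inferInstance, shear, horizontal, ?_, ?_, ?_⟩
  · rw [hcomm]
    ext p <;> simp [shear, vertical]; ring
  · rw [hcomm]
    ext p <;> simp [horizontal, vertical]
  · refine hcomm ▸ Nat.dvd_antisymm (orderOf_dvd_of_pow_eq_one ?_) ?_
    · rw [hpow]; ext p <;> simp [vertical]
    · rw [← ZMod.natCast_eq_zero_iff]
      have h0 := hpow (orderOf (vertical 1))
      rw [pow_orderOf_eq_one] at h0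
      simpa [vertical] using (congrArg (fun σ ↦ (σ (0, 0)).2) h0).symm

lemma exists_finite_quotient_orderOf_surfaceRelator (g n : ℕ) [NeZero g] [NeZero n] :
    ∃ (P : Type) (_ : Group P) (_ : Finite P) (f : FreeGroup (Fin g × Fin 2) →* P),
      (∀ w, Commute (f w) (f (surfaceRelator g))) ∧ orderOf (f (surfaceRelator g)) = n := by
  obtain ⟨m, rfl⟩ := Nat.exists_eq_succ_of_ne_zero (NeZero.ne g)
  obtain ⟨P, _, hP, a, b, ha, hb, hn⟩ := exists_finite_central_commutator n
  let f : FreeGroup (Fin (m + 1) × Fin 2) →* P :=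
    FreeGroup.lift fun p ↦ if p.1 = 0 then ![a, b] p.2 else 1
  have hf : f (surfaceRelator (m + 1)) = ⁅a, b⁆ := by
    simp [surfaceRelator, List.ofFn_succ, map_list_prod, List.map_ofFn, Function.comp_def, f,
      commutatorElement_def]
  refine ⟨P, _, hP, f, fun w ↦ ?_, hf ▸ hn⟩
  rw [hf]
  induction w using FreeGroup.induction_on with
  | C1 => simp
  | of p =>
    obtain ⟨i, j⟩ := p
    by_cases hi : i = 0 <;> fin_cases j <;> simp [f, hi, ha, hb]
  | inv_of p hp => rw [map_inv]; exact hp.inv_left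
  | mul u v hu hv => rw [map_mul]; exact hu.mul_left hv

variable {E Q : Type*} [Group E] [Group Q]

lemma exists_monoidHom_comp_eq_of_freeGroup {τ : E →* Q} (hτ : Function.Surjective τ) {S : Type*}
    (f : FreeGroup S →* Q) : ∃ l : FreeGroup S →* E, ∀ w, τ (l w) = f w := by
  choose s hs using hτ
  let l : FreeGroup S →* E := FreeGroup.lift fun i ↦ s (f (FreeGroup.of i))
  exact ⟨l, DFunLike.congr_fun (FreeGroup.ext_hom (τ.comp l) f fun i ↦ by simp [l, hs])⟩

lemma exists_finiteIndex_disjoint_ker {F : Type*} [Group F] {τ : E →* Q} [Finite τ.ker]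
    (hcenter : τ.ker ≤ Subgroup.center E) {l : F →* E} (hl : Function.Surjective (τ ∘ l))
    {K : Subgroup F} [K.FiniteIndex] (hK : ∀ w ∈ K, τ (l w) = 1 → l w = 1) :
    ∃ L : Subgroup E, L.FiniteIndex ∧ Disjoint L τ.ker := by
  let Φ : F × τ.ker →* E := l.noncommCoprod τ.ker.subtype fun w k ↦
    (Subgroup.mem_center_iff.mp (hcenter k.2) (l w))
  have hΦ : Function.Surjective Φ := by
    intro e
    obtain ⟨w, hw⟩ := hl (τ e)
    have hker : (l w)⁻¹ * e ∈ τ.ker := by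
      rw [MonoidHom.mem_ker, map_mul, map_inv, ← hw, Function.comp_apply, inv_mul_cancel]
    exact ⟨(w, ⟨_, hker⟩), mul_inv_cancel_left (l w) e⟩
  refine ⟨(K.prod ⊥).map Φ, ⟨?_⟩, Subgroup.disjoint_def.mpr ?_⟩
  · refine ne_zero_of_dvd_ne_zero ?_ (Subgroup.index_map_dvd (K.prod ⊥) hΦ)
    rw [Subgroup.index_prod]
    exact mul_ne_zero Subgroup.FiniteIndex.index_ne_zero Subgroup.FiniteIndex.index_ne_zero
  · rintro _ ⟨⟨w, k⟩, ⟨hw, hk⟩, rfl⟩ hx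
    obtain rfl : k = 1 := hk
    have hΦw : Φ (w, 1) = l w := mul_one (l w)
    rw [hΦw] at hx ⊢
    exact hK w hw hx

lemma exists_finiteIndex_disjoint_ker_of_isFreeGroup [IsFreeGroup Q] {τ : E →* Q} [Finite τ.ker]
    (hτ : Function.Surjective τ) (hcenter : τ.ker ≤ Subgroup.center E) :
    ∃ L : Subgroup E, L.FiniteIndex ∧ Disjoint L τ.ker := by
  obtain ⟨l, hl⟩ := exists_monoidHom_comp_eq_of_freeGroup hτ (IsFreeGroup.mulEquiv Q).toMonoidHom
  refine exists_finiteIndex_disjoint_ker (K := ⊤) hcenter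
    (funext hl ▸ (IsFreeGroup.mulEquiv Q).surjective) fun w _ hw ↦ ?_
  rw [(map_eq_one_iff _ (IsFreeGroup.mulEquiv Q).injective).mp ((hl w).symm.trans hw), map_one]

/- The surface relator lifts to a central element of finite order `n`; on the kernel of a finite
quotient in which the relator has central image of order `n`, this obstruction vanishes. -/
lemma exists_finiteIndex_disjoint_ker_of_isSurfaceGroup (hQ : IsSurfaceGroup Q) {τ : E →* Q}
    [Finite τ.ker] (hτ : Function.Surjective τ) (hcenter : τ.ker ≤ Subgroup.center E) :
    ∃ L : Subgroup E, L.FiniteIndex ∧ Disjoint L τ.ker := by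
  obtain ⟨g, hg, ⟨e⟩⟩ := hQ
  let p : FreeGroup (Fin g × Fin 2) →* Q := e.symm.toMonoidHom.comp (PresentedGroup.mk _)
  have hp : Function.Surjective p := e.symm.surjective.comp (PresentedGroup.mk_surjective _)
  obtain ⟨l, hl⟩ := exists_monoidHom_comp_eq_of_freeGroup hτ p
  have hτl (w) : τ (l w) = 1 ↔ w ∈ Subgroup.normalClosure {surfaceRelator g} := by
    rw [hl, ← QuotientGroup.eq_one_iff]
    exact map_eq_one_iff _ e.symm.injective
  have hker : l (surfaceRelator g) ∈ τ.ker :=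
    (hτl _).mpr (Subgroup.subset_normalClosure (Set.mem_singleton _))
  have : NeZero g := ⟨by lia⟩
  have : NeZero (orderOf (l (surfaceRelator g))) :=
    ⟨(Subgroup.orderOf_mk _ hker ▸ orderOf_pos (⟨_, hker⟩ : τ.ker)).ne'⟩
  obtain ⟨P, _, _, f, hf, horder⟩ :=
    exists_finite_quotient_orderOf_surfaceRelator g (orderOf (l (surfaceRelator g)))
  refine exists_finiteIndex_disjoint_ker (K := f.ker) hcenter
    (funext hl ▸ hp) fun w hw hτw ↦ ?_
  obtain ⟨k, hk⟩ := map_mem_zpowers_of_mem_normalClosure (l.prod f)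
    (fun u ↦ Prod.ext (Subgroup.mem_center_iff.mp (hcenter hker) (l u)) (hf u)) ((hτl w).mp hτw)
  obtain ⟨hlk, hfk⟩ : l (surfaceRelator g) ^ k = l w ∧ f (surfaceRelator g) ^ k = f w :=
    Prod.ext_iff.mp hk
  rw [← hlk, ← orderOf_dvd_iff_zpow_eq_one, ← horder, orderOf_dvd_iff_zpow_eq_one, hfk]
  exact hw

end CentralExtension

section FiniteExtension

instance finiteIndex_comap {G G' : Type*} [Group G] [Group G'] (f : G →* G') (N : Subgroup G')
    [N.FiniteIndex] : (N.comap f).FiniteIndex := by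
  have : N.IsFiniteRelIndex f.range := Subgroup.isFiniteRelIndex_of_finiteIndex
  exact ⟨N.index_comap f ▸ Subgroup.relIndex_ne_zero⟩

instance finiteIndex_centralizer_of_finite {G : Type*} [Group G] (H : Subgroup G) [H.Normal]
    [Finite H] : (Subgroup.centralizer (H : Set G)).FiniteIndex := by
  have : Finite (MulAut H) := .of_injective (fun e ↦ (e : H → H)) DFunLike.coe_injective
  refine Subgroup.finiteIndex_of_le (H := (MulAut.conjNormal (H := H)).ker) fun g hg ↦
    Subgroup.mem_centralizer_iff.mpr fun x hx ↦ ?_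
  have hconj := congrArg (fun e : MulAut H ↦ (e ⟨x, hx⟩ : G)) (MonoidHom.mem_ker.mp hg)
  exact (mul_inv_eq_iff_eq_mul.mp hconj).symm

lemma isFreeGroup_or_isSurfaceGroup_of_torsionFree {G : Type} {Γ' : Type*} [Group G] [Group Γ']
    {ψ : Γ' →* PSL(2, ℝ)} (hinj : Function.Injective ψ) (hdisc : DiscreteTopology ψ.range)
    {N : Subgroup Γ'} (hN : ∀ g ∈ N, IsOfFinOrder g → g = 1) {f : G →* Γ'}
    (hf : Function.Injective f) (hfN : ∀ g, f g ∈ N) : IsFreeGroup G ∨ IsSurfaceGroup G := by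
  have hrange : (ψ.comp f).range ≤ ψ.range := ψ.range_comp f ▸ Subgroup.map_le_range ψ f.range
  have hdisc' : DiscreteTopology (ψ.comp f).range :=
    DiscreteTopology.of_subset (s := (ψ.range : Set PSL(2, ℝ))) hdisc hrange
  have hinj' : Function.Injective (ψ.comp f) := hinj.comp hf
  refine (Voronoi.isFuchsian_comp_projSymSquare hinj' hdisc'
    fun g hg ↦ hf ?_).isFreeGroup_or_isSurfaceGroup
  rw [hN _ (hfN g) (f.isOfFinOrder hg), map_one]

lemma exists_finiteIndex_le_comap_disjoint_ker {Γ : Type} {Γ' : Type*} [Group Γ] [Group Γ']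
    {ψ : Γ' →* PSL(2, ℝ)} (hinj : Function.Injective ψ) (hdisc : DiscreteTopology ψ.range)
    {N : Subgroup Γ'} [N.FiniteIndex] (hN : ∀ g ∈ N, IsOfFinOrder g → g = 1) {π : Γ →* Γ'}
    (hker : Finite π.ker) : ∃ H : Subgroup Γ, H.FiniteIndex ∧ H ≤ N.comap π ∧ Disjoint H π.ker := by
  let H := N.comap π ⊓ Subgroup.centralizer π.ker
  have hH : H.FiniteIndex := inferInstance
  let σ : H →* Γ' := π.comp H.subtype
  let τ := QuotientGroup.mk' σ.ker
  have hτ (x : H) : x ∈ τ.ker ↔ (x : Γ) ∈ π.ker := by rw [QuotientGroup.ker_mk']; rfl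
  have hfin : Finite τ.ker := Finite.of_injective
    (fun x ↦ (⟨x, (hτ x).mp x.2⟩ : π.ker)) fun _ _ h ↦
      Subtype.ext (Subtype.ext (Subtype.mk.inj h))
  have hcenter : τ.ker ≤ Subgroup.center H := fun x hx ↦ Subgroup.mem_center_iff.mpr fun g ↦
    Subtype.ext (Subgroup.mem_centralizer_iff.mp g.2.2 x ((hτ x).mp hx)).symm
  have hquot : IsFreeGroup (H ⧸ σ.ker) ∨ IsSurfaceGroup (H ⧸ σ.ker) :=
    isFreeGroup_or_isSurfaceGroup_of_torsionFree hinj hdisc hN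
      (QuotientGroup.kerLift_injective σ) fun q ↦ by
        induction q using QuotientGroup.induction_on with | H g => exact g.2.1
  obtain ⟨L, hL, hdisj⟩ : ∃ L : Subgroup H, L.FiniteIndex ∧ Disjoint L τ.ker :=
    hquot.elim
      (fun _ ↦ exists_finiteIndex_disjoint_ker_of_isFreeGroup (QuotientGroup.mk'_surjective _)
        hcenter)
      (fun h ↦ exists_finiteIndex_disjoint_ker_of_isSurfaceGroup h
        (QuotientGroup.mk'_surjective _) hcenter)
  refine ⟨L.map H.subtype, ⟨?_⟩, ?_, Subgroup.disjoint_def.mpr ?_⟩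
  · rw [Subgroup.index_map_subtype]
    exact mul_ne_zero hL.index_ne_zero hH.index_ne_zero
  · exact (Subgroup.map_subtype_le L).trans inf_le_left
  · rintro _ ⟨x, hx, rfl⟩ hker
    exact congrArg H.subtype (Subgroup.disjoint_def.mp hdisj hx ((hτ x).mpr hker))

theorem finite_extension_of_discrete_PSL2_subgroup_virtually_free_or_surface_general
    {Γ : Type} {Γ' : Type*} [Group Γ] [Group Γ'] (hfg : Group.FG Γ')
    (ψ : Γ' →* PSL(2, ℝ)) (hinj : Function.Injective ψ) (hdisc : DiscreteTopology ψ.range)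
    (π : Γ →* Γ') (hker : Finite π.ker) :
    ∃ H : Subgroup Γ, H.FiniteIndex ∧ (IsFreeGroupOn H ∨ IsSurfaceGroup H) := by
  obtain ⟨N, _, hN⟩ := exists_finiteIndex_torsionFree_of_injective_PSL2 hinj
  obtain ⟨H, hH, hHN, hdisj⟩ := exists_finiteIndex_le_comap_disjoint_ker hinj hdisc hN hker
  have hπH : Function.Injective (π.comp H.subtype) := by
    refine (injective_iff_map_eq_one _).mpr fun g hg ↦ Subtype.ext ?_
    exact Subgroup.disjoint_def.mp hdisj g.2 hg
  refine ⟨H, hH, (isFreeGroup_or_isSurfaceGroup_of_torsionFree hinj hdisc hN hπH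
    fun g ↦ hHN g.2).imp_left fun h ↦ ⟨_, ⟨h.toFreeGroup⟩⟩⟩

end FiniteExtension

/-- **Theorem (finite extensions of finitely generated discrete subgroups of `PSL(2,ℝ)`).**
If `Γ'` is a finitely generated group embedding in `PSL(2,ℝ)` with discrete image and
`1 → F → Γ → Γ' → 1` is exact with `F` finite, then `Γ` has a finite-index subgroup which is
a free group or a surface group. -/
theorem finite_extension_of_discrete_PSL2_subgroup_virtually_free_or_surface
    {Γ Γ' : Type} [Group Γ] [Group Γ']
    (hfg : Group.FG Γ')
    (ψ : Γ' →* PSL(2, ℝ)) (hinj : Function.Injective ψ)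
    (hdisc : DiscreteTopology ψ.range)
    (π : Γ →* Γ') (hsurj : Function.Surjective π) (hker : Finite π.ker) :
    ∃ H : Subgroup Γ, H.FiniteIndex ∧ (IsFreeGroupOn H ∨ IsSurfaceGroup H) :=
  finite_extension_of_discrete_PSL2_subgroup_virtually_free_or_surface_general hfg ψ hinj
    hdisc π hker
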